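/- Let (T, d, μ) be a compact Ahlfors q-regular metric measure space that supports a weak 1-Poincaré inequality, and suppose T is homeomorphic to the solid torus S¹ × 𝔻. Let 1 < p < ∞ and let p* = p/(p−1). If cap_p T is nonzero, then 1/C ≤ (cap_p T)^{1/p} · (mod_{p*} T)^{1/p*} ≤ C, where C is a constant depending only on the data of T (the Ahlfors regularity and Poincaré inequality constants). Moreover, cap_p T = 0 if and only if mod_{p*} T = ∞. -/

import Mathlib

open MeasureTheory Metric Set Filter Topology
open scoped ENNReal NNReal unitInterval

noncomputable section

namespace Duality

/-! ### Rectifiable curves, line integrals and upper gradients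

A rectifiable path is encoded by its arclength-type parametrization: a `1`-Lipschitz
map defined on a compact interval `[a, b]`.  The line integral `∫_γ ρ ds` of a
nonnegative Borel function is then the Lebesgue integral of `ρ ∘ γ` over `[a, b]`. -/

structure UPath (X : Type*) [PseudoMetricSpace X] where
  a : ℝ
  b : ℝ
  hab : a ≤ b
  toFun : ℝ → X
  lip : LipschitzOnWith 1 toFun (Set.Icc a b)

namespace UPath

variable {X : Type*} [PseudoMetricSpace X]

/-- starting point of the path -/
def start (γ : UPath X) : X := γ.toFun γ.a

/-- end point of the path -/
def finish (γ : UPath X) : X := γ.toFun γ.b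

/-- The line integral `∫_γ ρ ds`. -/
def integral (γ : UPath X) (ρ : X → ℝ≥0∞) : ℝ≥0∞ :=
  ∫⁻ t in Set.Icc γ.a γ.b, ρ (γ.toFun t)

/-- The image (trace) `|γ|` of the path. -/
def trace (γ : UPath X) : Set X := γ.toFun '' Set.Icc γ.a γ.b

/-- The length of the path. -/
def length (γ : UPath X) : ℝ≥0∞ := eVariationOn γ.toFun (Set.Icc γ.a γ.b)

/-- The path stays inside the set `W`. -/
def InSet (γ : UPath X) (W : Set X) : Prop := ∀ t ∈ Set.Icc γ.a γ.b, γ.toFun t ∈ W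

/-- The reparametrization of a rectifiable path as a `Path` (continuous map from `[0,1]`). -/
def toPath (γ : UPath X) : Path γ.start γ.finish where
  toFun := fun t => γ.toFun (γ.a + (t : ℝ) * (γ.b - γ.a))
  continuous_toFun := by
    have hmem : ∀ t : unitInterval, γ.a + (t : ℝ) * (γ.b - γ.a) ∈ Set.Icc γ.a γ.b := by
      intro t
      obtain ⟨ht0, ht1⟩ := t.2
      constructor
      · nlinarith [γ.hab]
      · nlinarith [γ.hab]
    exact γ.lip.continuousOn.comp_continuous (by continuity) hmem
  source' := by simp [start]
  target' := by simp [finish]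

end UPath

/-- `ρ` is an upper gradient of `u`. -/
def IsUpperGradient {X : Type*} [PseudoMetricSpace X] {Y : Type*} [PseudoEMetricSpace Y]
    (u : X → Y) (ρ : X → ℝ≥0∞) : Prop :=
  ∀ γ : UPath X, edist (u γ.start) (u γ.finish) ≤ γ.integral ρ

/-- The `p`-modulus of a family of (rectifiable) paths. -/
def pathMod {X : Type*} [PseudoMetricSpace X] [MeasurableSpace X]
    (μ : Measure X) (p : ℝ) (Γ : Set (UPath X)) : ℝ≥0∞ :=
  ⨅ (ρ : X → ℝ≥0∞) (_ : Measurable ρ ∧ ∀ γ ∈ Γ, 1 ≤ γ.integral ρ),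
    ∫⁻ x, ρ x ^ p ∂μ

/-- `ρ` is a `p`-weak upper gradient of `u`: the upper gradient inequality may fail
only on a path family of zero `p`-modulus. -/
def IsWeakUpperGradient {X : Type*} [PseudoMetricSpace X] [MeasurableSpace X]
    {Y : Type*} [PseudoEMetricSpace Y] (μ : Measure X) (p : ℝ)
    (u : X → Y) (ρ : X → ℝ≥0∞) : Prop :=
  pathMod μ p {γ : UPath X | ¬ edist (u γ.start) (u γ.finish) ≤ γ.integral ρ} = 0

/-- `ρ` is a `p`-weak upper gradient of `u` in the subset `U`. -/
def IsWeakUpperGradientOn {X : Type*} [PseudoMetricSpace X] [MeasurableSpace X]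
    {Y : Type*} [PseudoEMetricSpace Y] (μ : Measure X) (p : ℝ) (U : Set X)
    (u : X → Y) (ρ : X → ℝ≥0∞) : Prop :=
  pathMod (μ.restrict U) p
    {γ : UPath X | γ.InSet U ∧ ¬ edist (u γ.start) (u γ.finish) ≤ γ.integral ρ} = 0

/-- `ρ` is the minimal `p`-weak upper gradient of `u`: it is a `p`-integrable `p`-weak
upper gradient which is `μ`-a.e. dominated by every other one. -/
def IsMinimalWeakUpperGradient {X : Type*} [PseudoMetricSpace X] [MeasurableSpace X]
    {Y : Type*} [PseudoEMetricSpace Y] (μ : Measure X) (p : ℝ)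
    (u : X → Y) (ρ : X → ℝ≥0∞) : Prop :=
  Measurable ρ ∧ IsWeakUpperGradient μ p u ρ ∧ (∫⁻ x, ρ x ^ p ∂μ) < ⊤ ∧
    ∀ ρ' : X → ℝ≥0∞, Measurable ρ' → IsWeakUpperGradient μ p u ρ' →
      (∫⁻ x, ρ' x ^ p ∂μ) < ⊤ → ∀ᵐ x ∂μ, ρ x ≤ ρ' x

/-! ### Doubling measures, Poincaré inequalities, Ahlfors regularity -/

/-- `μ` is a doubling (Borel) measure with doubling constant `Cμ`:
`0 < μ(2B) ≤ Cμ · μ(B) < ∞` for every ball `B` of radius `r < diam T`. -/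
def IsDoubling {X : Type*} [MetricSpace X] [MeasurableSpace X]
    (μ : Measure X) (Cμ : ℝ≥0∞) : Prop :=
  ∀ (x : X) (r : ℝ), 0 < r → r < Metric.diam (Set.univ : Set X) →
    0 < μ (ball x (2 * r)) ∧ μ (ball x (2 * r)) ≤ Cμ * μ (ball x r) ∧
      Cμ * μ (ball x r) < ⊤

/-- `(X, d, μ)` supports a weak `1`-Poincaré inequality with constants `CP`, `lP`:
`⨍_B |u - u_B| dμ ≤ CP · diam B · ⨍_{lP·B} ρ dμ` for every locally integrable `u`
and every upper gradient `ρ` of `u`, and balls have positive finite measure. -/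
def SupportsPoincare {X : Type*} [MetricSpace X] [MeasurableSpace X]
    (μ : Measure X) (CP lP : ℝ) : Prop :=
  (∀ (x : X) (r : ℝ), 0 < r → 0 < μ (ball x r) ∧ μ (ball x r) < ⊤) ∧
  ∀ (u : X → ℝ) (ρ : X → ℝ≥0∞), LocallyIntegrable u μ → Measurable ρ →
    IsUpperGradient u ρ → ∀ (x : X) (r : ℝ), 0 < r →
      (∫⁻ y in ball x r, ENNReal.ofReal |u y - ⨍ z in ball x r, u z ∂μ| ∂μ) /
          μ (ball x r) ≤
        ENNReal.ofReal (CP * Metric.diam (ball x r)) *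
          ((∫⁻ y in ball x (lP * r), ρ y ∂μ) / μ (ball x (lP * r)))

/-- `μ` is Ahlfors `q`-regular with constants `0 < aA ≤ AA`. -/
def IsAhlforsRegular {X : Type*} [MetricSpace X] [MeasurableSpace X]
    (μ : Measure X) (q aA AA : ℝ) : Prop :=
  0 < aA ∧ aA ≤ AA ∧
    ∀ (x : X) (r : ℝ), 0 < r → r < Metric.diam (Set.univ : Set X) →
      ENNReal.ofReal (aA * r ^ q) ≤ μ (ball x r) ∧
        μ (ball x r) ≤ ENNReal.ofReal (AA * r ^ q)

/-! ### The circle `ℝ/ℤ`, loops and degree -/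

lemma intCast_coe_eq_zero (k : ℤ) : ((k : ℝ) : UnitAddCircle) = 0 :=
  (AddCircle.coe_eq_zero_iff _).mpr ⟨k, by simp⟩

/-- The standard loop of degree `k` in `ℝ/ℤ` based at `y`: `t ↦ y + [k t]`. -/
def stdLoop (k : ℤ) (y : UnitAddCircle) : Path y y where
  toFun := fun t => y + (((k : ℝ) * (t : ℝ) : ℝ) : UnitAddCircle)
  continuous_toFun := by
    refine continuous_const.add ?_
    exact (AddCircle.continuous_mk' 1).comp (by continuity)
  source' := by simp
  target' := by
    have h1 : ((1 : unitInterval) : ℝ) = 1 := rfl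
    have h : (((k : ℝ) * ((1 : unitInterval) : ℝ) : ℝ) : UnitAddCircle) = 0 := by
      rw [h1, mul_one]; exact intCast_coe_eq_zero k
    simp [h]

/-- Concatenation of `n` copies of a loop. -/
def loopPow {X : Type*} [TopologicalSpace X] {x : X} (γ : Path x x) : ℕ → Path x x
  | 0 => Path.refl x
  | n + 1 => (loopPow γ n).trans γ

/-- A loop `γ` based at `x` has degree 1 (relative to the chosen generator `α₀` based
at `x₀`) if it is loop-homotopic to a conjugate `η * α₀ * η⁻¹` of `α₀`. -/
def IsDegreeOneLoop {T : Type*} [TopologicalSpace T] (x₀ : T) (α₀ : Path x₀ x₀)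
    {x : T} (γ : Path x x) : Prop :=
  ∃ η : Path x x₀, Path.Homotopic γ (η.trans (α₀.trans η.symm))

/-- A map `f : T → ℝ/ℤ` has degree `k`: it pushes every degree-1 loop based at `x`
to a loop which is loop-homotopic to `[f x] + k·β`, `β (t) = [t]`. -/
def HasDegree {T : Type*} [TopologicalSpace T] (x₀ : T) (α₀ : Path x₀ x₀)
    (f : T → UnitAddCircle) (k : ℤ) : Prop :=
  ∃ hf : Continuous f, ∀ (x : T) (γ : Path x x), IsDegreeOneLoop x₀ α₀ γ →
    Path.Homotopic (γ.map hf) (stdLoop k (f x))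

/-- The class of `α₀` generates `π₁(T, x₀) ≅ ℤ`. -/
def IsGenerator {T : Type*} [TopologicalSpace T] (x₀ : T) (α₀ : Path x₀ x₀) : Prop :=
  Function.Bijective fun k : ℤ =>
    (FundamentalGroup.fromPath (X := TopCat.of T) ⟦α₀⟧ : FundamentalGroup (TopCat.of T) x₀) ^ k

/-- `T` is semilocally simply connected. -/
def SemilocallySimplyConnected (T : Type*) [TopologicalSpace T] : Prop :=
  ∀ x : T, ∃ U ∈ 𝓝 x, ∀ γ : Path x x, (∀ t, γ t ∈ U) → Path.Homotopic γ (Path.refl x)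

/-- `f` is a Lipschitz map of degree 1. -/
def DegOneLip {T : Type*} [MetricSpace T] (x₀ : T) (α₀ : Path x₀ x₀)
    (f : T → UnitAddCircle) : Prop :=
  (∃ L : ℝ≥0, LipschitzWith L f) ∧ HasDegree x₀ α₀ f 1

/-! ### Capacity and surface modulus -/

/-- The degree 1 `p`-capacity of `T`, defined through minimal `p`-weak upper gradients:
the infimum of `∫ ρ^p dμ` over `p`-weak upper gradients `ρ` of Lipschitz degree-1 maps. -/
def cap {T : Type*} [MetricSpace T] [MeasurableSpace T] (μ : Measure T) (p : ℝ)
    (x₀ : T) (α₀ : Path x₀ x₀) : ℝ≥0∞ :=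
  ⨅ (f : T → UnitAddCircle) (_ : DegOneLip x₀ α₀ f) (ρ : T → ℝ≥0∞)
    (_ : Measurable ρ ∧ IsWeakUpperGradient μ p f ρ),
      ∫⁻ x, ρ x ^ p ∂μ

/-- The pointwise Lipschitz constant `Lip f (x)`. -/
def pLip {T : Type*} [MetricSpace T] (f : T → UnitAddCircle) (x : T) : ℝ≥0∞ :=
  Filter.limsup
    (fun r : ℝ => ⨆ y ∈ ball x r, edist (f x) (f y) / ENNReal.ofReal r) (𝓝[>] (0 : ℝ))

/-- The degree 1 `p`-capacity of `T`, defined through pointwise Lipschitz constants. -/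
def capLip {T : Type*} [MetricSpace T] [MeasurableSpace T] (μ : Measure T) (p : ℝ)
    (x₀ : T) (α₀ : Path x₀ x₀) : ℝ≥0∞ :=
  ⨅ (f : T → UnitAddCircle) (_ : DegOneLip x₀ α₀ f), ∫⁻ x, pLip f x ^ p ∂μ

/-- The codimension 1 spherical Hausdorff measure, as a set function:
`H(A) = sup_{δ>0} inf { ∑ μ(B_i)/r_i }`, the infimum being over countable covers of `A`
by balls `B_i` of radii `r_i ≤ δ`. -/
def codimH {T : Type*} [MetricSpace T] [MeasurableSpace T] (μ : Measure T)
    (A : Set T) : ℝ≥0∞ :=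
  ⨆ (δ : ℝ) (_ : 0 < δ),
    ⨅ (c : ℕ → T) (r : ℕ → ℝ) (_ : ∀ i, r i ≤ δ)
      (_ : A ⊆ ⋃ i, ball (c i) (r i)),
        ∑' i, μ (ball (c i) (r i)) / ENNReal.ofReal (r i)

/-- The integral `∫_S g dH` of `g ≥ 0` over `S` against the codimension 1 Hausdorff
measure, via the layer-cake (Choquet) formula. -/
def choquetIntegral {T : Type*} [MetricSpace T] [MeasurableSpace T] (μ : Measure T)
    (S : Set T) (g : T → ℝ≥0∞) : ℝ≥0∞ :=
  ∫⁻ t in Set.Ioi (0 : ℝ), codimH μ {x | x ∈ S ∧ ENNReal.ofReal t < g x}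

/-- The family `Γ*` of all level sets `φ⁻¹[0]` of finite codimension 1 Hausdorff measure
of continuous degree-1 maps `φ : T → ℝ/ℤ`. -/
def Surfaces {T : Type*} [MetricSpace T] [MeasurableSpace T] (μ : Measure T)
    (x₀ : T) (α₀ : Path x₀ x₀) : Set (Set T) :=
  {S | ∃ φ : T → UnitAddCircle, HasDegree x₀ α₀ φ 1 ∧ S = φ ⁻¹' {0} ∧ codimH μ S < ⊤}

/-- The surface `q`-modulus of a family of surfaces, the surfaces being equipped with the
codimension 1 Hausdorff measure. -/
def surfModOf {T : Type*} [MetricSpace T] [MeasurableSpace T] (μ : Measure T) (q : ℝ)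
    (𝒮 : Set (Set T)) : ℝ≥0∞ :=
  ⨅ (ρ : T → ℝ≥0∞) (_ : Measurable ρ ∧ ∀ S ∈ 𝒮, 1 ≤ choquetIntegral μ S ρ),
    ∫⁻ x, ρ x ^ q ∂μ

/-- The surface modulus `mod_q T`. -/
def surfMod {T : Type*} [MetricSpace T] [MeasurableSpace T] (μ : Measure T) (q : ℝ)
    (x₀ : T) (α₀ : Path x₀ x₀) : ℝ≥0∞ :=
  surfModOf μ q (Surfaces μ x₀ α₀)

/-- The family `Γ*` with the `(q-1)`-dimensional Hausdorff measure instead. -/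
def SurfacesH {T : Type*} [MetricSpace T] [MeasurableSpace T] [BorelSpace T] (q : ℝ)
    (x₀ : T) (α₀ : Path x₀ x₀) : Set (Set T) :=
  {S | ∃ φ : T → UnitAddCircle, HasDegree x₀ α₀ φ 1 ∧ S = φ ⁻¹' {0} ∧ μH[q - 1] S < ⊤}

/-- The surface modulus `mod_q T` defined through the `(q-1)`-dimensional Hausdorff
measures `H^{q-1} ⌞ S`, `S ∈ Γ*`. -/
def surfModH {T : Type*} [MetricSpace T] [MeasurableSpace T] [BorelSpace T]
    (μ : Measure T) (q pstar : ℝ) (x₀ : T) (α₀ : Path x₀ x₀) : ℝ≥0∞ :=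
  ⨅ (ρ : T → ℝ≥0∞)
    (_ : Measurable ρ ∧ ∀ S ∈ SurfacesH (T := T) q x₀ α₀, 1 ≤ ∫⁻ x in S, ρ x ∂μH[q - 1]),
      ∫⁻ x, ρ x ^ pstar ∂μ

/-- The standing assumptions 2.1. -/
def Standing {T : Type*} [MetricSpace T] [MeasurableSpace T] (μ : Measure T)
    (Cμ : ℝ≥0∞) (CP lP : ℝ) (x₀ : T) (α₀ : Path x₀ x₀) : Prop :=
  IsDoubling μ Cμ ∧ SupportsPoincare μ CP lP ∧ SemilocallySimplyConnected T ∧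
    IsGenerator x₀ α₀ ∧ ∃ f : T → UnitAddCircle, DegOneLip x₀ α₀ f

/-! ### The universal cover -/

/-- `π` is a local isometry. -/
def IsLocalIsometry {X Y : Type*} [MetricSpace X] [MetricSpace Y] (π : X → Y) : Prop :=
  ∀ x : X, ∃ ε : ℝ, 0 < ε ∧
    ∀ y ∈ ball x ε, ∀ z ∈ ball x ε, dist (π y) (π z) = dist y z

/-- `(T̃, π)` is the universal cover of `T`, with `T̃` carrying the length metric pulled
back by `π` (so that `π` is a local isometry). -/
def CoverSetup {T Tt : Type*} [MetricSpace T] [MetricSpace Tt] (π : Tt → T) : Prop :=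
  IsCoveringMap π ∧ Function.Surjective π ∧ IsLocalIsometry π ∧ SimplyConnectedSpace Tt

/-- `τ` is the deck transformation of the cover `π` determined by
`τ (γ̃ 0) = γ̃ 1` for every lift `γ̃` of every degree-1 loop `γ`. -/
def IsDeck {T Tt : Type*} [MetricSpace T] [MetricSpace Tt] (π : Tt → T)
    (x₀ : T) (α₀ : Path x₀ x₀) (τ : Tt → Tt) : Prop :=
  Continuous τ ∧ (∀ x, π (τ x) = π x) ∧
    ∀ (x : T) (γ : Path x x), IsDegreeOneLoop x₀ α₀ γ →
      ∀ γt : C(unitInterval, Tt), (∀ t, π (γt t) = γ t) → τ (γt 0) = γt 1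

/-- `μ̃` is the natural lift of `μ` to the cover:
`μ̃ (A) = ∫ #(π⁻¹(x) ∩ A) dμ (x)`. -/
def IsLiftedMeasure {T Tt : Type*} [MetricSpace T] [MeasurableSpace T]
    [MetricSpace Tt] [MeasurableSpace Tt] (π : Tt → T) (μ : Measure T)
    (μt : Measure Tt) : Prop :=
  ∀ A : Set Tt, MeasurableSet A → μt A = ∫⁻ x, ((π ⁻¹' {x} ∩ A).encard : ℝ≥0∞) ∂μ

/-! ### Newtonian spaces -/

/-- The seminorm of `N^{1,p}(U)`. -/
def NSeminorm {X : Type*} [PseudoMetricSpace X] [MeasurableSpace X] (μ : Measure X)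
    (p : ℝ) (U : Set X) (f : X → ℝ) : ℝ≥0∞ :=
  (∫⁻ x in U, ENNReal.ofReal |f x| ^ p ∂μ) ^ (1 / p) +
    ⨅ (ρ : X → ℝ≥0∞) (_ : Measurable ρ ∧ IsWeakUpperGradientOn μ p U f ρ),
      (∫⁻ x in U, ρ x ^ p ∂μ) ^ (1 / p)

/-- `f ∈ N^{1,p}_loc`. -/
def MemNloc {X : Type*} [PseudoMetricSpace X] [MeasurableSpace X] (μ : Measure X)
    (p : ℝ) (f : X → ℝ) : Prop :=
  ∀ U : Set X, IsOpen U → IsCompact (closure U) →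
    (∫⁻ x in U, ENNReal.ofReal |f x| ^ p ∂μ) < ⊤ ∧
      ∃ ρ : X → ℝ≥0∞, Measurable ρ ∧ IsWeakUpperGradientOn μ p U f ρ ∧
        (∫⁻ x in U, ρ x ^ p ∂μ) < ⊤

/-- The collection `F`: nonnegative Borel functions `ρ` on `T` such that `ρ ∘ π` is a
`p`-weak upper gradient of some `f ∈ N^{1,p}_loc (T̃)` with `f ∘ τ - f = 1` a.e. -/
def MemF {T Tt : Type*} [MetricSpace T] [MeasurableSpace T] [MetricSpace Tt]
    [MeasurableSpace Tt] (π : Tt → T) (τ : Tt → Tt) (μt : Measure Tt) (p : ℝ)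
    (ρ : T → ℝ≥0∞) : Prop :=
  Measurable ρ ∧ ∃ f : Tt → ℝ, MemNloc μt p f ∧ (∀ᵐ x ∂μt, f (τ x) - f x = 1) ∧
    IsWeakUpperGradient μt p f (ρ ∘ π)

/-- The capacity `cap_p^F T`. -/
def capF {T Tt : Type*} [MetricSpace T] [MeasurableSpace T] [MetricSpace Tt]
    [MeasurableSpace Tt] (μ : Measure T) (π : Tt → T) (τ : Tt → Tt) (μt : Measure Tt)
    (p : ℝ) : ℝ≥0∞ :=
  ⨅ (ρ : T → ℝ≥0∞) (_ : MemF π τ μt p ρ), ∫⁻ x, ρ x ^ p ∂μ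

/-! ### Miscellaneous operators -/

/-- The restricted Hardy–Littlewood maximal operator `M_R`. -/
def restrMax {T : Type*} [MetricSpace T] [MeasurableSpace T] (μ : Measure T)
    (R : ℝ≥0∞) (g : T → ℝ≥0∞) (x : T) : ℝ≥0∞ :=
  ⨆ (s : ℝ) (_ : 0 < s ∧ ENNReal.ofReal s ≤ R),
    (∫⁻ y in ball x s, g y ∂μ) / μ (ball x s)

/-- The upper Lebesgue integral. -/
def upperLintegral {Y : Type*} [MeasurableSpace Y] (ν : Measure Y)
    (F : Y → ℝ≥0∞) : ℝ≥0∞ :=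
  ⨅ (G : Y → ℝ≥0∞) (_ : Measurable G ∧ ∀ y, F y ≤ G y), ∫⁻ y, G y ∂ν

/-! ### The sets `Ω` and the functions `ψ̃`, `ζ`, `ψ` of Section 4.3 -/

/-- The set of points reachable from `A` by a rectifiable path inside `W`. -/
def reach {T : Type*} [MetricSpace T] (A W : Set T) : Set T :=
  {x | ∃ γ : UPath T, γ.start ∈ A ∧ γ.finish = x ∧ γ.InSet W}

/-- `inf_γ ∫_γ ρ ds` over rectifiable paths connecting `A` to `x` inside `W`. -/
def pathDist {T : Type*} [MetricSpace T] (ρ : T → ℝ≥0∞) (A W : Set T) (x : T) : ℝ≥0∞ :=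
  ⨅ (γ : UPath T) (_ : γ.start ∈ A ∧ γ.finish = x ∧ γ.InSet W), γ.integral ρ

open scoped Classical in
/-- The function `ψ̃`. -/
def psiTilde {T : Type*} [MetricSpace T] (ρ : T → ℝ≥0∞) (A W : Set T) (x : T) : ℝ :=
  if x ∈ reach A W then (pathDist ρ A W x).toReal else 0

/-- The function `min {1, ψ̃}`. -/
def zeta {T : Type*} [MetricSpace T] (ρ : T → ℝ≥0∞) (A W : Set T) (x : T) : ℝ :=
  min 1 (psiTilde ρ A W x)

/-- The competing admissible map `ψ = [min {1, ψ̃}] : T → ℝ/ℤ`. -/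
def psiMap {T : Type*} [MetricSpace T] (ρ : T → ℝ≥0∞) (A W : Set T) (x : T) :
    UnitAddCircle :=
  ((zeta ρ A W x : ℝ) : UnitAddCircle)

end Duality

/-!
Only the homotopy type of `T` matters: the degree of a circle-valued map is its winding along the
generator `α₀`, and two maps of degree 1 differ by a real-valued function.

*The product is bounded below.* Let `φ` be a Lipschitz map of degree 1. Eilenberg's inequality
bounds the upper integral over `θ ∈ ℝ/ℤ` of `∫ ρ dℋ^{q-1}` over the level set `φ⁻¹{θ}` by a multiple
of `∫ ρ Lip φ dμ`. The level sets of finite `ℋ^{q-1}`-measure are admissible surfaces, because a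
rotation of `φ` again has degree 1; so if `ρ` is admissible for the surface modulus, then
`∫ ρ Lip φ dμ` is bounded below, and Hölder's inequality applies.

*The product is bounded above.* Since real-valued differences can be scaled, the functions `Lip φ`
are convex up to domination, and uniform convexity of `Lᵖ` gives an extremal function `u` in the
closure of their majorants. Its first variation is `cap ≤ ∫ u^{p-1} Lip ψ dμ` for every competitor
`ψ`. Given a surface `S = φ⁻¹{0}`, cut `φ` open along `S` and average the resulting jump at scale
`ε`; this gives a competitor whose gradient at `x` is at most a multiple of
`ε^{-q} ℋ^{q-1}(S ∩ B(x, C ε))`, by the relative isoperimetric inequality, which follows from the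
`1`-Poincaré inequality applied to cutoff functions adapted to coverings of `S`. By Fubini's
theorem, `cap ≤ C ∫_S G dℋ^{q-1}` where `G` dominates the averages of `u^{p-1}` over balls of a
sequence of radii tending to `0`. Hence `C G / cap` is admissible, and its `L^{p*}` norm is
controlled by that of `u^{p-1}`.
-/

open scoped ContinuousMap

namespace Duality

/-! ### Winding of circle-valued maps -/

lemma isCoveringMap_coe_unitAddCircle : IsCoveringMap ((↑) : ℝ → UnitAddCircle) :=
  AddCircle.isCoveringMap_coe 1

lemma eq_of_coe_unitAddCircle_eq_zero {A : Type*} [TopologicalSpace A] [PreconnectedSpace A]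
    {f : A → ℝ} (hf : Continuous f) (h : ∀ x, (f x : UnitAddCircle) = 0) (x y : A) :
    f x = f y :=
  congrFun (isCoveringMap_coe_unitAddCircle.eq_of_comp_eq (g₂ := fun _ => f y) hf
    continuous_const (by funext a; simp only [Function.comp_apply, h]) y rfl) x

lemma exists_lift (γ : C(I, UnitAddCircle)) :
    ∃ Γ : C(I, ℝ), ∀ t, (Γ t : UnitAddCircle) = γ t := by
  obtain ⟨e, he⟩ := QuotientAddGroup.mk_surjective (γ 0)
  obtain ⟨Γ, h, -⟩ := isCoveringMap_coe_unitAddCircle.exists_path_lifts γ e he.symm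
  exact ⟨Γ, congrFun h⟩

/-- The displacement `Γ 1 - Γ 0` of a path in `ℝ/ℤ`, where `Γ` is any lift of the path to `ℝ`. -/
def displacement (γ : C(I, UnitAddCircle)) : ℝ :=
  (exists_lift γ).choose 1 - (exists_lift γ).choose 0

lemma displacement_eq {γ : C(I, UnitAddCircle)} {Γ : I → ℝ} (hΓ : Continuous Γ)
    (h : ∀ t, (Γ t : UnitAddCircle) = γ t) : displacement γ = Γ 1 - Γ 0 := by
  have hs := (exists_lift γ).choose_spec
  have hconst := eq_of_coe_unitAddCircle_eq_zero (f := fun t => (exists_lift γ).choose t - Γ t)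
    ((map_continuous _).sub hΓ) (fun t => by rw [AddCircle.coe_sub, h, sub_eq_zero]; exact hs t) 1 0
  simp only [displacement]
  linarith

lemma displacement_trans {x y z : UnitAddCircle} (γ : Path x y) (γ' : Path y z) :
    displacement (γ.trans γ' : Path x z).toContinuousMap =
      displacement γ.toContinuousMap + displacement γ'.toContinuousMap := by
  obtain ⟨Γ, h⟩ := exists_lift γ.toContinuousMap
  obtain ⟨Γ', h'⟩ := exists_lift γ'.toContinuousMap
  have hjoin : (Γ 1 : UnitAddCircle) = Γ' 0 := by
    rw [h, h']
    exact γ.target.trans γ'.source.symm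
  let P : Path (Γ 0) (Γ 1) := ⟨Γ, rfl, rfl⟩
  let P' : Path (Γ 1) (Γ' 1 + (Γ 1 - Γ' 0)) :=
    ⟨⟨fun t => Γ' t + (Γ 1 - Γ' 0), by fun_prop⟩, by simp, rfl⟩
  have hP' (s : I) : (P' s : UnitAddCircle) = γ' s := by
    change ((Γ' s + (Γ 1 - Γ' 0) : ℝ) : UnitAddCircle) = γ'.toContinuousMap s
    rw [AddCircle.coe_add, AddCircle.coe_sub, hjoin, sub_self, add_zero, h']
  have hPP' (t : I) : ((P.trans P') t : UnitAddCircle) = (γ.trans γ').toContinuousMap t := by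
    change _ = (γ.trans γ') t
    rw [Path.trans_apply, Path.trans_apply]
    split_ifs
    exacts [h _, hP' _]
  rw [displacement_eq (map_continuous Γ) h, displacement_eq (map_continuous Γ') h',
    displacement_eq (map_continuous _) hPP', (P.trans P').target, (P.trans P').source]
  ring

lemma displacement_symm {x y : UnitAddCircle} (γ : Path x y) :
    displacement γ.symm.toContinuousMap = -displacement γ.toContinuousMap := by
  obtain ⟨Γ, h⟩ := exists_lift γ.toContinuousMap
  rw [displacement_eq (map_continuous Γ) h,
    displacement_eq (Γ := fun t => Γ (unitInterval.symm t)) (by fun_prop) (fun t => h _)]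
  simp only [unitInterval.symm_one, unitInterval.symm_zero, neg_sub]

lemma displacement_eq_of_homotopic {x y : UnitAddCircle} {γ γ' : Path x y}
    (H : γ.Homotopic γ') :
    displacement γ.toContinuousMap = displacement γ'.toContinuousMap := by
  have cov := isCoveringMap_coe_unitAddCircle
  obtain ⟨e, he⟩ := QuotientAddGroup.mk_surjective x
  have hγ : γ.toContinuousMap 0 = (e : UnitAddCircle) := γ.source.trans he.symm
  have hγ' : γ'.toContinuousMap 0 = (e : UnitAddCircle) := γ'.source.trans he.symm
  rw [displacement_eq (map_continuous _) (congrFun (cov.liftPath_lifts _ e hγ)),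
    displacement_eq (map_continuous _) (congrFun (cov.liftPath_lifts _ e hγ')),
    cov.liftPath_apply_one_eq_of_homotopicRel (e := e) H hγ hγ', cov.liftPath_zero,
    cov.liftPath_zero]

lemma displacement_stdLoop (k : ℤ) (y : UnitAddCircle) :
    displacement (stdLoop k y).toContinuousMap = k := by
  obtain ⟨e, rfl⟩ := QuotientAddGroup.mk_surjective y
  rw [displacement_eq (Γ := fun t : I => e + (k : ℝ) * (t : ℝ)) (by fun_prop)
    (fun t => AddCircle.coe_add _ _ _)]
  simp only [Icc.coe_one, Icc.coe_zero, mul_one, mul_zero, add_zero, add_sub_cancel_left]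

lemma exists_displacement_eq_intCast {y : UnitAddCircle} (γ : Path y y) :
    ∃ k : ℤ, displacement γ.toContinuousMap = k := by
  obtain ⟨Γ, hΓ⟩ := exists_lift γ.toContinuousMap
  have hcoe : ((Γ 1 - Γ 0 : ℝ) : UnitAddCircle) = 0 := by
    rw [AddCircle.coe_sub, hΓ, hΓ]
    exact sub_eq_zero.2 (γ.target.trans γ.source.symm)
  obtain ⟨k, hk⟩ := (AddCircle.coe_eq_zero_iff _).1 hcoe
  exact ⟨k, by rw [displacement_eq (map_continuous Γ) hΓ, ← hk, zsmul_one]⟩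

/- The straight-line homotopy between a lift `Γ` of `γ` and the lift `t ↦ Γ 0 + k t` of the
standard loop fixes both endpoints, because the two lifts have the same displacement. -/
lemma homotopic_stdLoop {k : ℤ} {y : UnitAddCircle} {γ : Path y y}
    (h : displacement γ.toContinuousMap = k) : γ.Homotopic (stdLoop k y) := by
  obtain ⟨Γ, hΓ⟩ := exists_lift γ.toContinuousMap
  rw [displacement_eq (map_continuous Γ) hΓ] at h
  have h0 : (Γ 0 : UnitAddCircle) = y := (hΓ 0).trans γ.source
  refine ⟨{ toFun := fun st => (((1 - (st.1 : ℝ)) * Γ st.2 +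
              (st.1 : ℝ) * (Γ 0 + k * (st.2 : ℝ)) : ℝ) : UnitAddCircle)
            continuous_toFun := (AddCircle.continuous_mk' 1).comp (by fun_prop)
            map_zero_left := fun t => by simpa using hΓ t
            map_one_left := fun t => by simp [stdLoop, h0]
            prop' := ?_ }⟩
  rintro s t (rfl | rfl)
  · have hline : (1 - (s : ℝ)) * Γ 0 + s * (Γ 0 + k * ((0 : I) : ℝ)) = Γ 0 := by
      rw [Icc.coe_zero]; ring
    simp only [ContinuousMap.coe_mk, hline]
    exact hΓ 0
  · have hline : (1 - (s : ℝ)) * Γ 1 + s * (Γ 0 + k * ((1 : I) : ℝ)) = Γ 1 := by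
      rw [Icc.coe_one, ← h]; ring
    simp only [ContinuousMap.coe_mk, hline]
    exact hΓ 1

/-- The winding of `f : T → ℝ/ℤ` along a path `γ` of `T`: the displacement of `f ∘ γ`. -/
def winding {T : Type*} [TopologicalSpace T] (f : C(T, UnitAddCircle)) {x y : T}
    (γ : Path x y) : ℝ :=
  displacement (f.comp γ.toContinuousMap)

section Winding

variable {T : Type*} [TopologicalSpace T] (f g : C(T, UnitAddCircle)) {x y z : T}

lemma winding_eq_displacement_map (γ : Path x y) :
    winding f γ = displacement (γ.map f.continuous).toContinuousMap := rfl

lemma winding_trans (γ : Path x y) (γ' : Path y z) :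
    winding f (γ.trans γ') = winding f γ + winding f γ' := by
  rw [winding_eq_displacement_map, Path.map_trans, displacement_trans]
  rfl

lemma winding_symm (γ : Path x y) : winding f γ.symm = -winding f γ :=
  displacement_symm (γ.map f.continuous)

lemma winding_eq_of_homotopic {γ γ' : Path x y} (h : γ.Homotopic γ') :
    winding f γ = winding f γ' :=
  displacement_eq_of_homotopic (h.map f)

lemma winding_add_coe (h : C(T, ℝ)) (γ : Path x y) {f' : C(T, UnitAddCircle)}
    (hf' : ∀ x, f' x = f x + (h x : UnitAddCircle)) :
    winding f' γ = winding f γ + (h y - h x) := by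
  obtain ⟨Γ, hΓ⟩ := exists_lift (f.comp γ.toContinuousMap)
  rw [winding, winding, displacement_eq (map_continuous Γ) hΓ,
    displacement_eq (Γ := fun t => Γ t + h (γ t)) (by fun_prop)
      (fun t => by rw [AddCircle.coe_add, hΓ]; exact (hf' _).symm), γ.source, γ.target]
  ring

lemma winding_sub (γ : Path x y) : winding (f - g) γ = winding f γ - winding g γ := by
  obtain ⟨Γ, hΓ⟩ := exists_lift (f.comp γ.toContinuousMap)
  obtain ⟨Γ', hΓ'⟩ := exists_lift (g.comp γ.toContinuousMap)
  rw [winding, winding, winding, displacement_eq (map_continuous Γ) hΓ,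
    displacement_eq (map_continuous Γ') hΓ', displacement_eq (Γ := fun t => Γ t - Γ' t)
      (by fun_prop) (fun t => by rw [AddCircle.coe_sub, hΓ, hΓ']; rfl)]
  ring

/-- The winding of `f` along loops, as a homomorphism on the fundamental group. -/
def windingHom (x : T) : FundamentalGroup (TopCat.of T) x →* Multiplicative ℝ :=
  MonoidHom.mk' (fun a => Multiplicative.ofAdd
      (Quotient.lift (fun γ : Path (X := T) x x => winding f γ)
        (fun _ _ h => winding_eq_of_homotopic f h) (FundamentalGroup.toPath a)))
    (by
      intro a b
      induction a using Quotient.inductionOn with | _ a =>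
      induction b using Quotient.inductionOn with | _ b =>
      change Multiplicative.ofAdd (winding f (Path.trans b a)) =
        Multiplicative.ofAdd (winding f a) * Multiplicative.ofAdd (winding f b)
      rw [winding_trans, ofAdd_add, mul_comm])

lemma windingHom_fromPath (x : T) (γ : Path (X := T) x x) :
    windingHom f x (FundamentalGroup.fromPath (X := TopCat.of T) ⟦γ⟧) =
      Multiplicative.ofAdd (winding f γ) :=
  rfl

lemma IsGenerator.exists_winding_eq_mul [PathConnectedSpace T] {x₀ : T} {α₀ : Path x₀ x₀}
    (hα : IsGenerator x₀ α₀) (γ : Path x x) :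
    ∃ n : ℤ, ∀ f : C(T, UnitAddCircle), winding f γ = n * winding f α₀ := by
  let η : Path x₀ x := PathConnectedSpace.somePath x₀ x
  obtain ⟨n, hn⟩ := hα.2
    (FundamentalGroup.fromPath (X := TopCat.of T) ⟦η.trans (γ.trans η.symm)⟧)
  refine ⟨n, fun f => ?_⟩
  have hf := congrArg (windingHom f x₀) hn
  dsimp only at hf
  rw [map_zpow, windingHom_fromPath, windingHom_fromPath, ← ofAdd_zsmul] at hf
  have hconj := Multiplicative.ofAdd.injective hf
  rw [winding_trans, winding_trans, winding_symm, zsmul_eq_mul] at hconj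
  linarith

lemma isDegreeOneLoop_self {x₀ : T} (α₀ : Path x₀ x₀) : IsDegreeOneLoop x₀ α₀ α₀ := by
  have hrefl : (α₀.trans (Path.refl x₀).symm).Homotopic α₀ := by
    rw [Path.refl_symm]
    exact ⟨Path.Homotopy.transRefl α₀⟩
  exact ⟨Path.refl x₀, (Path.Homotopic.trans ⟨Path.Homotopy.reflTrans _⟩ hrefl).symm⟩

lemma hasDegree_iff_winding_eq {x₀ : T} {α₀ : Path x₀ x₀} {k : ℤ} :
    HasDegree x₀ α₀ f k ↔ winding f α₀ = k := by
  constructor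
  · rintro ⟨hf, h⟩
    rw [winding_eq_displacement_map,
      displacement_eq_of_homotopic (h x₀ α₀ (isDegreeOneLoop_self α₀)), displacement_stdLoop]
  · intro h
    refine ⟨f.continuous, fun x γ ⟨η, hη⟩ => homotopic_stdLoop ?_⟩
    rw [← winding_eq_displacement_map, winding_eq_of_homotopic f hη, winding_trans,
      winding_trans, winding_symm, h]
    ring

end Winding

lemma HasDegree.add_coe {T : Type*} [TopologicalSpace T] {x₀ : T} {α₀ : Path x₀ x₀} {k : ℤ}
    {f g : T → UnitAddCircle} (hf : HasDegree x₀ α₀ f k) {h : T → ℝ} (hh : Continuous h)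
    (hg : ∀ x, g x = f x + (h x : UnitAddCircle)) : HasDegree x₀ α₀ g k := by
  have hgc : Continuous g := by
    rw [funext hg]
    exact hf.1.add ((AddCircle.continuous_mk' 1).comp hh)
  refine (hasDegree_iff_winding_eq ⟨g, hgc⟩).2 ?_
  rw [winding_add_coe ⟨f, hf.1⟩ ⟨h, hh⟩ α₀ hg, (hasDegree_iff_winding_eq ⟨f, hf.1⟩).1 hf, sub_self,
    add_zero]

/-! ### Spaces homotopy equivalent to the circle -/

lemma exists_real_diff_of_homotopic {T : Type*} [TopologicalSpace T]
    {f g : C(T, UnitAddCircle)} (H : f.Homotopic g) :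
    ∃ h : C(T, ℝ), ∀ x, g x = f x + (h x : UnitAddCircle) := by
  obtain ⟨F⟩ := H
  let D : C(I × T, UnitAddCircle) := ⟨fun p => F p - f p.2, by fun_prop⟩
  have hD0 : ∀ x, D (0, x) = ((0 : C(T, ℝ)) x : UnitAddCircle) := fun x => by simp [D]
  let L := isCoveringMap_coe_unitAddCircle.liftHomotopy D 0 hD0
  refine ⟨⟨fun x => L (1, x), by fun_prop⟩, fun x => ?_⟩
  have hL : (L (1, x) : UnitAddCircle) = D (1, x) :=
    congrFun (isCoveringMap_coe_unitAddCircle.liftHomotopy_lifts D 0 hD0) (1, x)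
  simp [hL, D]

lemma exists_real_lift_of_winding_stdLoop_eq_zero (g : C(UnitAddCircle, UnitAddCircle))
    (hg : winding g (stdLoop 1 0) = 0) :
    ∃ G : C(UnitAddCircle, ℝ), ∀ θ, g θ = (G θ : UnitAddCircle) := by
  obtain ⟨Γ, hΓ⟩ := exists_lift (g.comp (stdLoop 1 0).toContinuousMap)
  rw [winding, displacement_eq (map_continuous Γ) hΓ, sub_eq_zero] at hg
  let G : UnitAddCircle → ℝ := AddCircle.liftIco 1 0 (fun t => Γ (projIcc 0 1 zero_le_one t))
  have hG : Continuous G := by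
    apply AddCircle.liftIco_zero_continuous
    · simpa using hg.symm
    · exact ((map_continuous Γ).comp continuous_projIcc).continuousOn
  refine ⟨⟨G, hG⟩, fun θ => ?_⟩
  obtain ⟨t, ht, rfl⟩ := AddCircle.eq_coe_Ico θ
  simp only [G, ContinuousMap.coe_mk]
  rw [AddCircle.liftIco_zero_coe_apply ht, hΓ, projIcc_of_mem zero_le_one ⟨ht.1, ht.2.le⟩]
  simp [stdLoop]

section HomotopyCircle

variable {T : Type*} [TopologicalSpace T]

lemma exists_real_lift_of_winding_eq_zero [PathConnectedSpace T] (Φ : T ≃ₕ UnitAddCircle) {x₀ : T}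
    {α₀ : Path x₀ x₀} (hα : IsGenerator x₀ α₀) (f : C(T, UnitAddCircle))
    (hf : winding f α₀ = 0) : ∃ h : C(T, ℝ), ∀ x, f x = (h x : UnitAddCircle) := by
  obtain ⟨n, hn⟩ := hα.exists_winding_eq_mul ((stdLoop 1 0).map Φ.invFun.continuous)
  have hcore : winding (f.comp Φ.invFun) (stdLoop 1 0) = 0 :=
    (hn f).trans (by rw [hf, mul_zero])
  obtain ⟨G, hG⟩ := exists_real_lift_of_winding_stdLoop_eq_zero _ hcore
  obtain ⟨h, hh⟩ := exists_real_diff_of_homotopic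
    ((ContinuousMap.Homotopic.refl f).comp Φ.left_inv)
  refine ⟨G.comp Φ.toFun + h, fun x => ?_⟩
  calc f x = f (Φ.invFun (Φ.toFun x)) + (h x : UnitAddCircle) := hh x
    _ = ((G.comp Φ.toFun + h) x : UnitAddCircle) := by
      rw [ContinuousMap.add_apply, AddCircle.coe_add, ContinuousMap.comp_apply, ← hG]
      rfl

lemma exists_hasDegree_one [PathConnectedSpace T] (Φ : T ≃ₕ UnitAddCircle) {x₀ : T}
    {α₀ : Path x₀ x₀} (hα : IsGenerator x₀ α₀) : ∃ f, HasDegree x₀ α₀ f 1 := by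
  obtain ⟨n, hn⟩ := hα.exists_winding_eq_mul ((stdLoop 1 0).map Φ.invFun.continuous)
  obtain ⟨k, hk⟩ := exists_displacement_eq_intCast (α₀.map Φ.toFun.continuous)
  have hα₀ : winding Φ.toFun α₀ = k := hk
  have hid : winding (ContinuousMap.id _) (stdLoop 1 0) = 1 := by
    exact (displacement_stdLoop 1 0).trans Int.cast_one
  have hcore : winding Φ.toFun ((stdLoop 1 0).map Φ.invFun.continuous) = 1 := by
    obtain ⟨h, hh⟩ := exists_real_diff_of_homotopic Φ.right_inv
    rw [winding_add_coe _ h (stdLoop 1 0) hh, sub_self, add_zero] at hid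
    exact hid
  have hnk : n * k = 1 := by
    rw [hn, hα₀] at hcore
    exact_mod_cast hcore
  rcases Int.eq_one_or_neg_one_of_mul_eq_one' hnk with ⟨-, rfl⟩ | ⟨-, rfl⟩
  · exact ⟨Φ.toFun, (hasDegree_iff_winding_eq _).2 hα₀⟩
  · refine ⟨(0 - Φ.toFun : C(T, UnitAddCircle)), (hasDegree_iff_winding_eq _).2 ?_⟩
    have hzero : winding (0 : C(T, UnitAddCircle)) α₀ = 0 := by
      rw [winding, displacement_eq (Γ := fun _ => 0) continuous_const (fun _ => rfl), sub_self]
    rw [winding_sub, hα₀, hzero]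
    simp

lemma exists_real_diff_of_hasDegree [PathConnectedSpace T] (Φ : T ≃ₕ UnitAddCircle) {x₀ : T}
    {α₀ : Path x₀ x₀} (hα : IsGenerator x₀ α₀) {k : ℤ} {f g : T → UnitAddCircle}
    (hf : HasDegree x₀ α₀ f k) (hg : HasDegree x₀ α₀ g k) :
    ∃ h : T → ℝ, Continuous h ∧ ∀ x, g x = f x + (h x : UnitAddCircle) := by
  have hwind : winding ((⟨g, hg.1⟩ : C(T, UnitAddCircle)) - ⟨f, hf.1⟩) α₀ = 0 := by
    rw [winding_sub, (hasDegree_iff_winding_eq ⟨f, hf.1⟩).1 hf,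
      (hasDegree_iff_winding_eq ⟨g, hg.1⟩).1 hg, sub_self]
  obtain ⟨h, hh⟩ := exists_real_lift_of_winding_eq_zero Φ hα _ hwind
  refine ⟨h, h.continuous, fun x => ?_⟩
  rw [← hh, ContinuousMap.sub_apply, ContinuousMap.coe_mk, ContinuousMap.coe_mk,
    add_sub_cancel]

lemma pathConnectedSpace_of_homotopyEquiv {T' : Type*} [TopologicalSpace T']
    [PathConnectedSpace T'] (Φ : T ≃ₕ T') : PathConnectedSpace T := by
  obtain ⟨H⟩ := Φ.left_inv
  have hjoin (x : T) : Joined (Φ.invFun (Φ.toFun x)) x := ⟨H.evalAt x⟩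
  exact ⟨Nonempty.map Φ.invFun inferInstance, fun x y => (hjoin x).symm.trans
    (((PathConnectedSpace.joined (Φ.toFun x) (Φ.toFun y)).map Φ.invFun.continuous).trans
      (hjoin y))⟩

lemma nontrivial_of_hasDegree_one {x₀ : T} {α₀ : Path x₀ x₀} {f : T → UnitAddCircle}
    (hf : HasDegree x₀ α₀ f 1) : Nontrivial T := by
  by_contra hT
  rw [not_nontrivial_iff_subsingleton] at hT
  have hwind := (hasDegree_iff_winding_eq ⟨f, hf.1⟩).1 hf
  obtain ⟨e, he⟩ := QuotientAddGroup.mk_surjective (f x₀)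
  rw [winding, displacement_eq (Γ := fun _ => e) continuous_const
    (fun t => he.trans (congrArg f (Subsingleton.elim _ _)))] at hwind
  norm_num at hwind

end HomotopyCircle

lemma le_of_forall_pos_le_add_mul {a b c : ℝ≥0∞} (hc : c ≠ ⊤)
    (h : ∀ ε : ℝ≥0, 0 < ε → a ≤ b + ε * c) : a ≤ b := by
  have hcoe : Tendsto (fun ε : ℝ≥0 => (ε : ℝ≥0∞)) (𝓝[>] 0) (𝓝 ((0 : ℝ≥0) : ℝ≥0∞)) :=
    (ENNReal.continuous_coe.tendsto _).mono_left nhdsWithin_le_nhds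
  have hlim := tendsto_const_nhds (x := b) |>.add (ENNReal.Tendsto.mul_const hcoe (Or.inr hc))
  rw [ENNReal.coe_zero, zero_mul, add_zero] at hlim
  exact ge_of_tendsto hlim (mem_of_superset self_mem_nhdsWithin h)

/-! ### The pointwise Lipschitz constant -/

lemma exists_abs_eq_norm (θ : UnitAddCircle) : ∃ a : ℝ, (a : UnitAddCircle) = θ ∧ |a| = ‖θ‖ := by
  obtain ⟨e, rfl⟩ := QuotientAddGroup.mk_surjective θ
  refine ⟨e - round e, ?_, UnitAddCircle.norm_eq.symm⟩
  rw [AddCircle.coe_sub, intCast_coe_eq_zero, sub_zero]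

lemma eq_zero_of_coe_unitAddCircle_eq_zero {a : ℝ} (h : (a : UnitAddCircle) = 0) (ha : |a| < 1) :
    a = 0 := by
  obtain ⟨k, rfl⟩ := (AddCircle.coe_eq_zero_iff _).1 h
  rw [zsmul_one] at ha ⊢
  rw [Int.abs_lt_one_iff.1 (mod_cast ha : |k| < 1), Int.cast_zero]

lemma dist_unitAddCircle_le_half (θ θ' : UnitAddCircle) : dist θ θ' ≤ 1 / 2 := by
  rw [dist_eq_norm]
  simpa using AddCircle.norm_le_half_period (1 : ℝ) one_ne_zero (x := θ - θ')

/- All the quantities are small, so the real representatives of `θ - θ'` and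
`(θ + s) - (θ' + s')` of smallest absolute value differ by exactly `s - s'`. -/
lemma dist_add_coe_mul_le {θ θ' : UnitAddCircle} {s s' t : ℝ} (ht : t ∈ Icc (0 : ℝ) 1)
    (h₀ : dist θ θ' < 1 / 4) (h₁ : dist (θ + s) (θ' + s') < 1 / 4) (hs : dist s s' < 1 / 4) :
    dist (θ + (t * s : ℝ)) (θ' + (t * s' : ℝ)) ≤
      (1 - t) * dist θ θ' + t * dist (θ + s) (θ' + s') := by
  obtain ⟨a, ha, ha'⟩ := exists_abs_eq_norm (θ - θ')
  obtain ⟨b, hb, hb'⟩ := exists_abs_eq_norm (θ + s - (θ' + s'))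
  rw [← dist_eq_norm] at ha' hb'
  rw [Real.dist_eq] at hs
  have hsub : (s - s') - (b - a) = 0 := by
    refine eq_zero_of_coe_unitAddCircle_eq_zero ?_ ?_
    · rw [AddCircle.coe_sub, AddCircle.coe_sub, AddCircle.coe_sub, ha, hb]
      abel
    · calc |s - s' - (b - a)| ≤ |s - s'| + (|b| + |a|) :=
            (abs_sub _ _).trans (by gcongr; exact abs_sub _ _)
        _ < 1 := by linarith
  have hcomb : θ + (t * s : ℝ) - (θ' + (t * s' : ℝ)) =
      (((1 - t) * a + t * b : ℝ) : UnitAddCircle) := by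
    have : (1 - t) * a + t * b = a + (t * s - t * s') := by linear_combination -t * hsub
    rw [this, AddCircle.coe_add, AddCircle.coe_sub, ha]
    abel
  calc dist (θ + (t * s : ℝ)) (θ' + (t * s' : ℝ)) ≤ |(1 - t) * a + t * b| := by
        rw [dist_eq_norm, hcomb]
        exact QuotientAddGroup.norm_mk_le_norm
    _ ≤ |(1 - t) * a| + |t * b| := abs_add_le _ _
    _ = (1 - t) * dist θ θ' + t * dist (θ + s) (θ' + s') := by
      rw [abs_mul, abs_mul, abs_of_nonneg ht.1, abs_of_nonneg (sub_nonneg.2 ht.2), ha', hb']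

lemma exists_lipschitzWith_of_forall_dist_lt {T : Type*} [PseudoMetricSpace T]
    {f : T → UnitAddCircle} {K : ℝ≥0} {δ : ℝ} (hδ : 0 < δ)
    (h : ∀ x y, dist x y < δ → dist (f x) (f y) ≤ K * dist x y) :
    ∃ L : ℝ≥0, LipschitzWith L f := by
  refine ⟨max K (Real.toNNReal (1 / δ)), LipschitzWith.of_dist_le_mul fun x y => ?_⟩
  rw [NNReal.coe_max, Real.coe_toNNReal _ (by positivity)]
  rcases lt_or_ge (dist x y) δ with hd | hd
  · exact (h x y hd).trans (mul_le_mul_of_nonneg_right (le_max_left _ _) dist_nonneg)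
  · calc dist (f x) (f y) ≤ 1 := (dist_unitAddCircle_le_half _ _).trans (by norm_num)
      _ = 1 / δ * δ := by field_simp
      _ ≤ 1 / δ * dist x y := by gcongr
      _ ≤ _ := mul_le_mul_of_nonneg_right (le_max_right _ _) dist_nonneg

section PLip

variable {T : Type*} [MetricSpace T] {f : T → UnitAddCircle}

lemma pLip_le_of_forall_dist_lt {x : T} {K : ℝ≥0∞} {δ : ℝ} (hδ : 0 < δ)
    (h : ∀ y, dist y x < δ → edist (f x) (f y) ≤ K * edist x y) : pLip f x ≤ K := by
  refine limsup_le_of_le (by isBoundedDefault) ?_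
  filter_upwards [Ioo_mem_nhdsGT hδ] with r hr
  refine iSup₂_le fun y hy => ENNReal.div_le_of_le_mul ((h y (hy.trans hr.2)).trans ?_)
  gcongr
  rw [edist_dist, dist_comm]
  exact ENNReal.ofReal_le_ofReal (mem_ball.1 hy).le

lemma exists_edist_le_of_pLip_lt {x : T} {K : ℝ≥0} (h : pLip f x < K) :
    ∃ δ > 0, ∀ y, dist y x < δ → edist (f x) (f y) ≤ K * edist x y := by
  obtain ⟨δ, hδ, hs⟩ := mem_nhdsGT_iff_exists_Ioo_subset.1 (eventually_lt_of_limsup_lt h)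
  refine ⟨δ, hδ, fun y hy => ?_⟩
  have hr : ∀ r ∈ Ioo (dist y x) δ, edist (f x) (f y) ≤ K * ENNReal.ofReal r := by
    intro r hr
    have hr0 : 0 < r := dist_nonneg.trans_lt hr.1
    have hsup : (⨆ y ∈ ball x r, edist (f x) (f y) / ENNReal.ofReal r) < K := hs ⟨hr0, hr.2⟩
    have hy : edist (f x) (f y) / ENNReal.ofReal r ≤ K :=
      (le_iSup₂ (f := fun y (_ : y ∈ ball x r) => edist (f x) (f y) / ENNReal.ofReal r) y
        (mem_ball.2 hr.1)).trans hsup.le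
    exact (ENNReal.div_le_iff_le_mul (Or.inl (by simpa using hr0)) (Or.inl (by simp))).1 hy
  have hlim : Tendsto (fun r : ℝ => (K : ℝ≥0∞) * ENNReal.ofReal r) (𝓝[>] (dist y x))
      (𝓝 (K * ENNReal.ofReal (dist y x))) :=
    ENNReal.Tendsto.const_mul
      ((ENNReal.continuous_ofReal.tendsto _).mono_left nhdsWithin_le_nhds) (Or.inr (by simp))
  rw [edist_dist x y, dist_comm x y]
  exact ge_of_tendsto hlim (mem_of_superset (Ioo_mem_nhdsGT hy) hr)

/-- The set of the points at which `f` is Lipschitz with constant `K` at scale `δ`. These closed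
sets exhaust the sublevel sets of `pLip f`. -/
def lipSet (f : T → UnitAddCircle) (K : ℝ≥0) (δ : ℝ) : Set T :=
  {x | ∀ y, dist y x < δ → edist (f x) (f y) ≤ K * edist x y}

lemma isClosed_lipSet (hf : Continuous f) (K : ℝ≥0) (δ : ℝ) : IsClosed (lipSet f K δ) := by
  have hinter : lipSet f K δ =
      ⋂ y, ({x | δ ≤ dist y x} ∪ {x | edist (f x) (f y) ≤ K * edist x y}) := by
    ext x
    simp only [lipSet, mem_ofPred_eq, mem_iInter, mem_union, imp_iff_not_or, not_lt]
  rw [hinter]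
  refine isClosed_iInter fun y => (isClosed_le (by fun_prop) (by fun_prop)).union
    (isClosed_le (by fun_prop) ?_)
  exact (ENNReal.continuous_const_mul (by simp)).comp (by fun_prop)

lemma lipSet_anti {K : ℝ≥0} {δ δ' : ℝ} (h : δ' ≤ δ) : lipSet f K δ ⊆ lipSet f K δ' :=
  fun _ hx y hy => hx y (hy.trans_le h)

lemma setOf_pLip_lt (c : ℝ≥0∞) : {x | pLip f x < c} =
    ⋃ (q : ℚ) (_ : ((Real.toNNReal q : ℝ≥0) : ℝ≥0∞) < c) (n : ℕ),
      lipSet f (Real.toNNReal q) (1 / ((n : ℝ) + 1)) := by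
  ext x
  simp only [mem_ofPred_eq, mem_iUnion, exists_prop]
  constructor
  · intro h
    obtain ⟨q, -, hq, hqc⟩ := ENNReal.lt_iff_exists_rat_btwn.1 h
    obtain ⟨δ, hδ, hy⟩ := exists_edist_le_of_pLip_lt hq
    obtain ⟨n, hn⟩ := exists_nat_one_div_lt hδ
    exact ⟨q, hqc, n, fun y hy' => hy y (hy'.trans hn)⟩
  · rintro ⟨q, hqc, n, h⟩
    exact (pLip_le_of_forall_dist_lt (by positivity) h).trans_lt hqc

lemma measurable_pLip [MeasurableSpace T] [BorelSpace T] (hf : Continuous f) :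
    Measurable (pLip f) := by
  refine measurable_of_Iio fun c => ?_
  change MeasurableSet {x | pLip f x < c}
  rw [setOf_pLip_lt]
  exact MeasurableSet.iUnion fun q => MeasurableSet.iUnion fun _ => MeasurableSet.iUnion fun n =>
    (isClosed_lipSet hf _ _).measurableSet

lemma pLip_le_of_lipschitzWith {L : ℝ≥0} (hf : LipschitzWith L f) (x : T) : pLip f x ≤ L :=
  pLip_le_of_forall_dist_lt one_pos fun y _ => hf x y

lemma pLip_ne_top_of_lipschitzWith {L : ℝ≥0} (hf : LipschitzWith L f) (x : T) : pLip f x ≠ ⊤ :=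
  ne_top_of_le_ne_top ENNReal.coe_ne_top (pLip_le_of_lipschitzWith hf x)

lemma pLip_le_add_of_edist_le {f g k : T → UnitAddCircle} {x : T} {a b : ℝ≥0∞} (ha : a ≠ ⊤)
    (hb : b ≠ ⊤) (hfx : pLip f x ≠ ⊤) (hgx : pLip g x ≠ ⊤) {δ : ℝ} (hδ : 0 < δ)
    (h : ∀ y, dist y x < δ → edist (k x) (k y) ≤ a * edist (f x) (f y) + b * edist (g x) (g y)) :
    pLip k x ≤ a * pLip f x + b * pLip g x := by
  have happrox : ∀ ε : ℝ≥0, 0 < ε →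
      pLip k x ≤ a * (pLip f x + ε) + b * (pLip g x + ε) := by
    intro ε hε
    lift pLip f x to ℝ≥0 using hfx with F hF
    lift pLip g x to ℝ≥0 using hgx with G hG
    obtain ⟨δ₁, hδ₁, h₁⟩ := exists_edist_le_of_pLip_lt (f := f) (x := x) (K := F + ε)
      (by rw [← hF]; exact_mod_cast lt_add_of_pos_right F hε)
    obtain ⟨δ₂, hδ₂, h₂⟩ := exists_edist_le_of_pLip_lt (f := g) (x := x) (K := G + ε)
      (by rw [← hG]; exact_mod_cast lt_add_of_pos_right G hε)
    refine pLip_le_of_forall_dist_lt (δ := min δ (min δ₁ δ₂)) (by positivity) fun y hy => ?_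
    simp only [lt_min_iff] at hy
    calc _ ≤ a * edist (f x) (f y) + b * edist (g x) (g y) := h y hy.1
      _ ≤ a * ((F + ε : ℝ≥0) * edist x y) + b * ((G + ε : ℝ≥0) * edist x y) := by
        gcongr
        exacts [h₁ y hy.2.1, h₂ y hy.2.2]
      _ = _ := by push_cast; ring
  refine le_of_forall_pos_le_add_mul (c := a + b) (by finiteness) fun ε hε => ?_
  exact (happrox ε hε).trans_eq (by ring)

lemma exists_dist_convexCombination_le [CompactSpace T] {g : T → UnitAddCircle} {h : T → ℝ}
    (hf : Continuous f) (hg : Continuous g) (hh : Continuous h)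
    (hfg : ∀ x, g x = f x + (h x : UnitAddCircle)) {t : ℝ} (ht : t ∈ Icc (0 : ℝ) 1) :
    ∃ δ > 0, ∀ x y, dist x y < δ → dist (f x + (t * h x : ℝ)) (f y + (t * h y : ℝ)) ≤
      (1 - t) * dist (f x) (f y) + t * dist (g x) (g y) := by
  have hunif {Y : Type} [PseudoMetricSpace Y] {u : T → Y} (hu : Continuous u) :=
    Metric.uniformContinuous_iff.1 (CompactSpace.uniformContinuous_of_continuous hu) (1 / 4)
      (by norm_num)
  obtain ⟨δ₁, hδ₁, h₁⟩ := hunif hf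
  obtain ⟨δ₂, hδ₂, h₂⟩ := hunif hg
  obtain ⟨δ₃, hδ₃, h₃⟩ := hunif hh
  refine ⟨min δ₁ (min δ₂ δ₃), by positivity, fun x y hxy => ?_⟩
  simp only [lt_min_iff] at hxy
  have hgxy := h₂ hxy.2.1
  simp only [hfg] at hgxy ⊢
  exact dist_add_coe_mul_le ht (h₁ hxy.1) hgxy (h₃ hxy.2.2)

lemma DegOneLip.exists_convexCombination [CompactSpace T] [PathConnectedSpace T]
    (Φ : T ≃ₕ UnitAddCircle) {x₀ : T} {α₀ : Path x₀ x₀} (hα : IsGenerator x₀ α₀)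
    {f g : T → UnitAddCircle} (hf : DegOneLip x₀ α₀ f) (hg : DegOneLip x₀ α₀ g) {a b : ℝ≥0}
    (hab : a + b = 1) : ∃ k, DegOneLip x₀ α₀ k ∧ ∀ x, pLip k x ≤ a * pLip f x + b * pLip g x := by
  have hab' : 1 - (b : ℝ) = a := sub_eq_of_eq_add (mod_cast hab.symm)
  have hb : (b : ℝ) ∈ Icc (0 : ℝ) 1 := ⟨b.coe_nonneg, by linarith [a.coe_nonneg]⟩
  obtain ⟨h, hh, hfg⟩ := exists_real_diff_of_hasDegree Φ hα hf.2 hg.2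
  obtain ⟨⟨⟨Lf, hLf⟩, hfd⟩, ⟨Lg, hLg⟩, -⟩ := And.intro hf hg
  obtain ⟨δ, hδ, hdist⟩ := exists_dist_convexCombination_le hLf.continuous hLg.continuous hh hfg hb
  have hlip (x y : T) (hxy : dist x y < δ) :
      dist (f x + (b * h x : ℝ)) (f y + (b * h y : ℝ)) ≤ (Lf + Lg : ℝ≥0) * dist x y := by
    have hfxy := hLf.dist_le_mul x y
    have hgxy := hLg.dist_le_mul x y
    push_cast
    nlinarith [hdist x y hxy, hb.1, hb.2, dist_nonneg (x := f x) (y := f y),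
      dist_nonneg (x := g x) (y := g y)]
  refine ⟨fun x => f x + (b * h x : ℝ), ⟨exists_lipschitzWith_of_forall_dist_lt hδ hlip,
    hfd.add_coe (h := fun x => b * h x) (by fun_prop) fun x => rfl⟩,
    fun x => pLip_le_add_of_edist_le ENNReal.coe_ne_top ENNReal.coe_ne_top
      (pLip_ne_top_of_lipschitzWith hLf x) (pLip_ne_top_of_lipschitzWith hLg x) hδ fun y hy => ?_⟩
  have h := ENNReal.ofReal_le_ofReal (hdist x y (by rwa [dist_comm]))
  rwa [hab', ENNReal.ofReal_add (by positivity) (by positivity), ENNReal.ofReal_mul a.coe_nonneg,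
    ENNReal.ofReal_mul b.coe_nonneg, ENNReal.ofReal_coe_nnreal, ENNReal.ofReal_coe_nnreal,
    ← edist_dist, ← edist_dist, ← edist_dist] at h

end PLip

/-! ### Ahlfors regular spaces -/

section Ahlfors

variable {T : Type*} [MetricSpace T] [MeasurableSpace T] {μ : Measure T} {q aA AA CP lP : ℝ}

lemma SupportsPoincare.isFiniteMeasure [CompactSpace T] (hP : SupportsPoincare μ CP lP) :
    IsFiniteMeasure μ := by
  rcases isEmpty_or_nonempty T with h | ⟨⟨x⟩⟩
  · exact ⟨by simp [Set.eq_empty_of_isEmpty (univ : Set T)]⟩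
  · refine ⟨(measure_mono fun y _ => mem_ball.2 ?_).trans_lt
      (hP.1 x (Metric.diam (univ : Set T) + 1) (by positivity)).2⟩
    linarith [Metric.dist_le_diam_of_mem isCompact_univ.isBounded (mem_univ y) (mem_univ x)]

lemma dist_le_diam_univ {T : Type*} [MetricSpace T] [CompactSpace T] (x y : T) :
    dist x y ≤ Metric.diam (univ : Set T) :=
  Metric.dist_le_diam_of_mem isCompact_univ.isBounded (mem_univ x) (mem_univ y)

lemma diam_univ_pos {T : Type*} [MetricSpace T] [CompactSpace T] [Nontrivial T] :
    0 < Metric.diam (univ : Set T) := by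
  obtain ⟨x, y, h⟩ := exists_pair_ne T
  exact (dist_pos.2 h).trans_le (dist_le_diam_univ x y)

lemma IsAhlforsRegular.measure_closedBall_le (hA : IsAhlforsRegular μ q aA AA) (x : T) {r : ℝ}
    (hr : 0 < r) (hr2 : 2 * r < Metric.diam (univ : Set T)) :
    μ (closedBall x r) ≤ ENNReal.ofReal (AA * (2 * r) ^ q) :=
  (measure_mono (closedBall_subset_ball (by linarith))).trans
    (hA.2.2 x (2 * r) (by positivity) hr2).2

lemma IsAhlforsRegular.le_measure_closedBall (hA : IsAhlforsRegular μ q aA AA) (x : T) {r : ℝ}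
    (hr : 0 < r) (hr2 : r < Metric.diam (univ : Set T)) :
    ENNReal.ofReal (aA * r ^ q) ≤ μ (closedBall x r) :=
  (hA.2.2 x r hr hr2).1.trans (measure_mono ball_subset_closedBall)

lemma IsAhlforsRegular.measure_closedBall_ne_zero (hA : IsAhlforsRegular μ q aA AA) (x : T)
    {r : ℝ} (hr : 0 < r) (hrd : r < Metric.diam (univ : Set T)) : μ (closedBall x r) ≠ 0 :=
  ((ENNReal.ofReal_pos.2 (mul_pos hA.1 (Real.rpow_pos_of_pos hr q))).trans_le
    (hA.le_measure_closedBall x hr hrd)).ne'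

lemma lintegral_measure_dist_lt {T : Type*} [MeasurableSpace T] (μ : Measure T) [SFinite μ]
    {u : T → ℝ} (hu : Measurable u) (r : ℝ) :
    ∫⁻ s, μ {z | dist s (u z) < r} = ENNReal.ofReal (2 * r) * μ univ := by
  have hmeas : MeasurableSet {p : ℝ × T | dist p.1 (u p.2) < r} :=
    measurableSet_lt (by fun_prop) measurable_const
  calc ∫⁻ s, μ {z | dist s (u z) < r}
      = (volume.prod μ) {p : ℝ × T | dist p.1 (u p.2) < r} := (Measure.prod_apply hmeas).symm
    _ = ∫⁻ z, volume (ball (u z) r) ∂μ := Measure.prod_apply_symm hmeas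
    _ = ENNReal.ofReal (2 * r) * μ univ := by simp only [Real.volume_ball, lintegral_const]

/- For `u = dist x`, each fibre of `u` over `[0, dist x y]` is nonempty by connectedness, so the
`r`-neighbourhood of the fibre has measure at least `a r ^ q`. -/
lemma IsAhlforsRegular.ofReal_dist_mul_rpow_le [OpensMeasurableSpace T] [PreconnectedSpace T]
    [SFinite μ] (hA : IsAhlforsRegular μ q aA AA) (x y : T) {r : ℝ} (hr : 0 < r)
    (hrd : r < Metric.diam (univ : Set T)) :
    ENNReal.ofReal (dist x y * (aA * r ^ q)) ≤ ENNReal.ofReal (2 * r) * μ univ := by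
  have hfibre : ∀ s ∈ Icc 0 (dist x y),
      ENNReal.ofReal (aA * r ^ q) ≤ μ {z | dist s (dist x z) < r} := by
    intro s hs
    obtain ⟨w, -, rfl⟩ : s ∈ (fun z => dist x z) '' univ :=
      isPreconnected_univ.intermediate_value (mem_univ x) (mem_univ y) (f := fun z => dist x z)
        (by fun_prop) (by rwa [dist_self])
    refine (hA.2.2 w r hr hrd).1.trans (measure_mono fun z hz => ?_)
    refine lt_of_le_of_lt ?_ (mem_ball'.1 hz)
    simp only [Real.dist_eq, dist_comm x]
    exact abs_dist_sub_le _ _ _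
  calc ENNReal.ofReal (dist x y * (aA * r ^ q))
      = ∫⁻ _ in Icc 0 (dist x y), ENNReal.ofReal (aA * r ^ q) := by
        rw [setLIntegral_const, Real.volume_Icc, sub_zero, mul_comm,
          ENNReal.ofReal_mul (mul_nonneg hA.1.le (Real.rpow_nonneg hr.le q))]
    _ ≤ ∫⁻ s in Icc 0 (dist x y), μ {z | dist s (dist x z) < r} :=
        setLIntegral_mono' measurableSet_Icc hfibre
    _ ≤ ∫⁻ s, μ {z | dist s (dist x z) < r} := setLIntegral_le_lintegral _ _
    _ = ENNReal.ofReal (2 * r) * μ univ :=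
        lintegral_measure_dist_lt μ (continuous_const.dist continuous_id).measurable r

lemma IsAhlforsRegular.one_le [OpensMeasurableSpace T] [CompactSpace T] [PreconnectedSpace T]
    [Nontrivial T] [IsFiniteMeasure μ] (hA : IsAhlforsRegular μ q aA AA) : 1 ≤ q := by
  by_contra! hq
  obtain ⟨x, y, hxy⟩ := exists_pair_ne T
  have hd : 0 < dist x y := dist_pos.2 hxy
  have hbound : ∀ r ∈ Ioo 0 (dist x y), r ^ (q - 1) * (dist x y * aA) ≤ 2 * (μ univ).toReal := by
    intro r hr
    have h := ENNReal.toReal_mono (by finiteness)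
      (hA.ofReal_dist_mul_rpow_le (μ := μ) x y hr.1 (hr.2.trans_le (dist_le_diam_univ x y)))
    rw [ENNReal.toReal_mul, ENNReal.toReal_ofReal
      (mul_nonneg hd.le (mul_nonneg hA.1.le (Real.rpow_nonneg hr.1.le q))),
      ENNReal.toReal_ofReal (by linarith [hr.1])] at h
    rw [Real.rpow_sub_one hr.1.ne', div_mul_eq_mul_div, div_le_iff₀ hr.1]
    linarith
  have hlim : Tendsto (fun r : ℝ => r ^ (q - 1) * (dist x y * aA)) (𝓝[>] 0) atTop :=
    (tendsto_rpow_neg_nhdsGT_zero (by linarith)).atTop_mul_const (mul_pos hd hA.1)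
  obtain ⟨r, hlt, hr⟩ := ((hlim.eventually_gt_atTop _).and (Ioo_mem_nhdsGT hd)).exists
  exact (hbound r hr).not_gt hlt

end Ahlfors

/-! ### The upper integral -/

section UpperIntegral

variable {Y : Type*} [MeasurableSpace Y] {ν : Measure Y} {F F' : Y → ℝ≥0∞}

lemma upperLintegral_le {G : Y → ℝ≥0∞} (hG : Measurable G) (hFG : ∀ y, F y ≤ G y) :
    upperLintegral ν F ≤ ∫⁻ y, G y ∂ν :=
  iInf₂_le G ⟨hG, hFG⟩

variable (ν F) in
lemma exists_measurable_ge_lintegral_eq_upperLintegral :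
    ∃ G, Measurable G ∧ (∀ y, F y ≤ G y) ∧ ∫⁻ y, G y ∂ν = upperLintegral ν F := by
  obtain ⟨u, -, hu, hmem⟩ := exists_seq_tendsto_sInf
    (S := (fun G : Y → ℝ≥0∞ => ∫⁻ y, G y ∂ν) '' {G | Measurable G ∧ ∀ y, F y ≤ G y})
    (Set.Nonempty.image _ ⟨fun _ => ⊤, measurable_const, fun _ => le_top⟩) (OrderBot.bddBelow _)
  rw [sInf_image] at hu
  choose G hG hGu using hmem
  have hmeas : Measurable fun y => ⨅ n, G n y := Measurable.iInf fun n => (hG n).1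
  have hle : ∀ y, F y ≤ ⨅ n, G n y := fun y => le_iInf fun n => (hG n).2 y
  refine ⟨fun y => ⨅ n, G n y, hmeas, hle, le_antisymm (ge_of_tendsto' hu fun n => ?_)
    (upperLintegral_le hmeas hle)⟩
  rw [← hGu n]
  exact lintegral_mono fun y => iInf_le _ n

lemma upperLintegral_mono (h : ∀ y, F y ≤ F' y) : upperLintegral ν F ≤ upperLintegral ν F' := by
  obtain ⟨G, hG, hFG, hGi⟩ := exists_measurable_ge_lintegral_eq_upperLintegral ν F'
  exact hGi ▸ upperLintegral_le hG fun y => (h y).trans (hFG y)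

lemma upperLintegral_const_mul_le (c : ℝ≥0∞) :
    upperLintegral ν (fun y => c * F y) ≤ c * upperLintegral ν F := by
  obtain ⟨G, hG, hFG, hGi⟩ := exists_measurable_ge_lintegral_eq_upperLintegral ν F
  rw [← hGi, ← lintegral_const_mul c hG]
  exact upperLintegral_le (hG.const_mul c) fun y => mul_le_mul_right (hFG y) c

lemma upperLintegral_add_le :
    upperLintegral ν (fun y => F y + F' y) ≤ upperLintegral ν F + upperLintegral ν F' := by
  obtain ⟨G, hG, hFG, hGi⟩ := exists_measurable_ge_lintegral_eq_upperLintegral ν F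
  obtain ⟨G', hG', hFG', hGi'⟩ := exists_measurable_ge_lintegral_eq_upperLintegral ν F'
  rw [← hGi, ← hGi', ← lintegral_add_left hG]
  exact upperLintegral_le (hG.add hG') fun y => add_le_add (hFG y) (hFG' y)

lemma upperLintegral_tsum_le {ι : Type*} [Countable ι] (F : ι → Y → ℝ≥0∞) :
    upperLintegral ν (fun y => ∑' i, F i y) ≤ ∑' i, upperLintegral ν (F i) := by
  choose G hG hFG hGi using fun i => exists_measurable_ge_lintegral_eq_upperLintegral ν (F i)
  simp only [← hGi]
  rw [← lintegral_tsum fun i => (hG i).aemeasurable]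
  exact upperLintegral_le (Measurable.tsum hG) fun y =>
    ENNReal.tsum_le_tsum fun i => hFG i y

lemma upperLintegral_liminf_le (F : ℕ → Y → ℝ≥0∞) :
    upperLintegral ν (fun y => liminf (fun n => F n y) atTop) ≤
      liminf (fun n => upperLintegral ν (F n)) atTop := by
  choose G hG hFG hGi using fun n => exists_measurable_ge_lintegral_eq_upperLintegral ν (F n)
  simp only [← hGi]
  exact (upperLintegral_le (Measurable.liminf hG) fun y =>
    liminf_le_liminf (Eventually.of_forall fun n => hFG n y)).trans (lintegral_liminf_le hG)

lemma upperLintegral_iSup_le {F : ℕ → Y → ℝ≥0∞} (hF : ∀ y, Monotone fun n => F n y) {B : ℝ≥0∞}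
    (hB : ∀ n, upperLintegral ν (F n) ≤ B) : upperLintegral ν (fun y => ⨆ n, F n y) ≤ B := by
  simp only [← (tendsto_atTop_iSup (hF _)).liminf_eq]
  exact (upperLintegral_liminf_le F).trans
    ((liminf_le_liminf (Eventually.of_forall hB)).trans (liminf_const B).le)

end UpperIntegral

/-! ### An Eilenberg inequality for circle-valued maps -/

lemma ediam_closedBall_le_ofReal {T : Type*} [PseudoMetricSpace T] (x : T) (r : ℝ) :
    ediam (closedBall x r) ≤ ENNReal.ofReal (2 * r) := by
  refine ediam_le fun y hy z hz => ?_
  rw [edist_dist]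
  refine ENNReal.ofReal_le_ofReal ?_
  linarith [dist_triangle_right y z x, mem_closedBall.1 hy, mem_closedBall.1 hz]

section Eilenberg

variable {T : Type*} [MetricSpace T] {φ : T → UnitAddCircle}

lemma dist_le_of_mem_lipSet {K : ℝ≥0} {δ : ℝ} {x y : T} (hx : x ∈ lipSet φ K δ)
    (hxy : dist y x < δ) : dist (φ x) (φ y) ≤ K * dist x y := by
  have h := hx y hxy
  rw [edist_nndist, edist_nndist] at h
  exact_mod_cast h

variable [MeasurableSpace T] {μ : Measure T} {q aA AA : ℝ}

lemma IsAhlforsRegular.ofReal_mul_volume_closedBall_le (hA : IsAhlforsRegular μ q aA AA) (K : ℝ≥0)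
    (θ : UnitAddCircle) (b : T) {r : ℝ} (hr : 0 < r) (hrd : r < Metric.diam (univ : Set T)) :
    ENNReal.ofReal ((10 * r) ^ (q - 1)) * volume (closedBall θ (5 * K * r)) ≤
      ENNReal.ofReal (10 ^ q / aA) * (K * μ (closedBall b r)) := by
  have ha := hA.1
  have hpow : (10 * r) ^ (q - 1) * (2 * (5 * K * r)) = 10 ^ q / aA * (K * (aA * r ^ q)) := by
    rw [show 2 * (5 * (K : ℝ) * r) = K * (10 * r) by ring, mul_left_comm,
      ← Real.rpow_add_one (by positivity), sub_add_cancel, Real.mul_rpow (by norm_num) hr.le]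
    field_simp
  calc ENNReal.ofReal ((10 * r) ^ (q - 1)) * volume (closedBall θ (5 * K * r))
      ≤ ENNReal.ofReal ((10 * r) ^ (q - 1)) * ENNReal.ofReal (2 * (5 * K * r)) := by
        rw [AddCircle.volume_closedBall]
        gcongr
        exact min_le_right _ _
    _ = ENNReal.ofReal (10 ^ q / aA) * (K * ENNReal.ofReal (aA * r ^ q)) := by
        rw [← ENNReal.ofReal_coe_nnreal, ← ENNReal.ofReal_mul (by positivity),
          ← ENNReal.ofReal_mul (by positivity), ← ENNReal.ofReal_mul (by positivity), hpow]
    _ ≤ _ := by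
        gcongr
        exact hA.le_measure_closedBall b hr hrd

variable [BorelSpace T]

lemma hausdorffMeasure_le_liminf_tsum_closedBall {s : ℝ} (hs : 0 ≤ s) {A : Set T}
    {ι : ℕ → Type*} [∀ n, Countable (ι n)] {c : ∀ n, ι n → T} {r : ∀ n, ι n → ℝ} {ε : ℕ → ℝ}
    (hε : Tendsto ε atTop (𝓝 0)) (hr : ∀ n i, r n i ∈ Icc 0 (ε n))
    (hA : ∀ n, A ⊆ ⋃ i, closedBall (c n i) (r n i)) :
    μH[s] A ≤ liminf (fun n => ∑' i, ENNReal.ofReal ((2 * r n i) ^ s)) atTop := by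
  have hε' : Tendsto (fun n => ENNReal.ofReal (2 * ε n)) atTop (𝓝 0) := by
    simpa using ENNReal.tendsto_ofReal (hε.const_mul 2)
  refine (Measure.hausdorffMeasure_le_liminf_tsum s A _ hε' (fun n i => closedBall (c n i) (r n i))
    (Eventually.of_forall fun n i => (ediam_closedBall_le_ofReal _ _).trans
      (ENNReal.ofReal_le_ofReal (by linarith [(hr n i).2]))) (Eventually.of_forall hA)).trans ?_
  refine liminf_le_liminf (Eventually.of_forall fun n => ENNReal.tsum_le_tsum fun i => ?_)
  rw [← ENNReal.ofReal_rpow_of_nonneg (by linarith [(hr n i).1]) hs]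
  exact ENNReal.rpow_le_rpow (ediam_closedBall_le_ofReal _ _) hs

lemma exists_vitali_cover [TopologicalSpace.SeparableSpace T] (μ : Measure T) [μ.OuterRegular]
    (E : Set T) {ε : ℝ≥0∞} (hε : ε ≠ 0) {R : ℝ} (hR : 0 < R) :
    ∃ (u : Set T) (r : T → ℝ), u.Countable ∧ u ⊆ E ∧ (∀ b ∈ u, r b ∈ Ioc 0 R) ∧
      (∀ a ∈ E, ∃ b ∈ u, a ∈ closedBall b (5 * r b)) ∧
      ∑' b : u, μ (closedBall (b : T) (r b)) ≤ μ E + ε := by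
  obtain ⟨U, hEU, hU, hμU⟩ := E.exists_isOpen_le_add μ hε
  have hball : ∀ x : T, ∃ r : ℝ, x ∈ E → r ∈ Ioc 0 R ∧ closedBall x r ⊆ U := by
    intro x
    by_cases hx : x ∈ E
    · obtain ⟨ε, hε, hεU⟩ := Metric.nhds_basis_closedBall.mem_iff.1 (hU.mem_nhds (hEU hx))
      exact ⟨min R ε, fun _ => ⟨⟨by positivity, min_le_left _ _⟩,
        (closedBall_subset_closedBall (min_le_right _ _)).trans hεU⟩⟩
    · exact ⟨0, fun h => absurd h hx⟩
  choose r hr using hball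
  obtain ⟨u, huE, hdisj, hcov⟩ := Vitali.exists_disjoint_subfamily_covering_enlargement_closedBall
    E id r R (fun a ha => (hr a ha).1.2) 5 (by norm_num)
  have hcount : u.Countable := hdisj.countable_of_nonempty_interior fun b hb =>
    ⟨b, ball_subset_interior_closedBall (mem_ball_self (hr b (huE hb)).1.1)⟩
  refine ⟨u, r, hcount, huE, fun b hb => (hr b (huE hb)).1, fun a ha => ?_, ?_⟩
  · obtain ⟨b, hb, hab⟩ := hcov a ha
    exact ⟨b, hb, hab (mem_closedBall_self (hr a ha).1.1.le)⟩
  · refine (measure_biUnion hcount hdisj fun b _ => measurableSet_closedBall).symm.trans_le ?_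
    exact (measure_mono (iUnion₂_subset fun b hb => (hr b (huE hb)).2)).trans hμU

lemma hausdorffMeasure_fiber_le_liminf {K : ℝ≥0} {δ s : ℝ} (hs : 0 ≤ s) {E : Set T}
    {u : ℕ → Set T} (hcount : ∀ n, (u n).Countable) (hu : ∀ n, u n ⊆ lipSet φ K δ)
    {r : ℕ → T → ℝ} {ε : ℕ → ℝ} (hε : Tendsto ε atTop (𝓝 0))
    (hr : ∀ n, ∀ b ∈ u n, r n b ∈ Icc 0 (ε n) ∧ 5 * r n b < δ)
    (hcov : ∀ n, ∀ a ∈ E, ∃ b ∈ u n, a ∈ closedBall b (5 * r n b)) (t : UnitAddCircle) :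
    μH[s] (E ∩ φ ⁻¹' {t}) ≤ liminf (fun n => ∑' b : u n,
      (closedBall (φ b) (5 * K * r n b)).indicator
        (fun _ => ENNReal.ofReal ((10 * r n b) ^ s)) t) atTop := by
  have hu_countable : ∀ n, Countable (u n) := fun n => (hcount n).to_subtype
  let F (n) (b : u n) : Set UnitAddCircle := closedBall (φ b) (5 * K * r n b)
  have hcover (n) : E ∩ φ ⁻¹' {t} ⊆
      ⋃ b : {b : u n | t ∈ F n b}, closedBall (b : T) (5 * r n b) := by
    rintro x ⟨hxE, rfl⟩
    obtain ⟨b, hb, hxb⟩ := hcov n x hxE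
    have hdist : dist (φ b) (φ x) ≤ K * dist b x :=
      dist_le_of_mem_lipSet (hu n hb) ((mem_closedBall.1 hxb).trans_lt (hr n b hb).2)
    refine mem_iUnion.2 ⟨⟨⟨b, hb⟩, ?_⟩, hxb⟩
    calc dist (φ x) (φ b) ≤ K * dist x b := by rwa [dist_comm, dist_comm x]
      _ ≤ K * (5 * r n b) := by gcongr; exact hxb
      _ = 5 * K * r n b := by ring
  refine (hausdorffMeasure_le_liminf_tsum_closedBall hs (ε := fun n => 5 * ε n)
    (by simpa using hε.const_mul 5) (fun n b => ?_) hcover).trans_eq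
    (congrArg (liminf · atTop) (funext fun n => ?_))
  · obtain ⟨⟨h0, h1⟩, -⟩ := hr n _ b.1.2
    constructor <;> linarith
  · rw [tsum_subtype {b : u n | t ∈ F n b} fun b => ENNReal.ofReal ((2 * (5 * r n b)) ^ s)]
    refine tsum_congr fun b => ?_
    simp only [indicator, mem_ofPred_eq, ← mul_assoc, show (2 : ℝ) * 5 = 10 by norm_num, F]

/- Cover `E` by balls `B (b, 5 r)` with the balls `B (b, r)` disjoint. A fibre `φ⁻¹ t` meets only
those with `t` within `5 K r` of `φ b`, so the sum of `(10 r) ^ (q - 1)` over the balls it meets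
integrates to a multiple of `K ∑ r ^ q`. -/
lemma IsAhlforsRegular.upperLintegral_fiber_le_of_subset_lipSet
    [TopologicalSpace.SeparableSpace T] [μ.OuterRegular] (hA : IsAhlforsRegular μ q aA AA)
    (hq : 1 ≤ q) (hD : 0 < Metric.diam (univ : Set T)) {K : ℝ≥0} {δ : ℝ} (hδ : 0 < δ) {E : Set T}
    (hE : E ⊆ lipSet φ K δ) :
    upperLintegral volume (fun t => μH[q - 1] (E ∩ φ ⁻¹' {t})) ≤
      ENNReal.ofReal (10 ^ q / aA) * (K * μ E) := by
  set D := Metric.diam (univ : Set T)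
  let ε : ℕ → ℝ := fun n => 1 / ((n : ℝ) + 1)
  have hε0 (n) : 0 < ε n := by positivity
  have hε : Tendsto ε atTop (𝓝 0) := tendsto_one_div_add_atTop_nhds_zero_nat
  choose u r hcount huE hr hcov hsum using fun n => exists_vitali_cover μ E
    (ENNReal.ofReal_pos.2 (hε0 n)).ne' (R := min (ε n) (min (δ / 10) (D / 2)))
    (by have := hε0 n; positivity)
  simp only [mem_Ioc, le_min_iff] at hr
  have hu_countable : ∀ n, Countable (u n) := fun n => (hcount n).to_subtype
  let w (n) (b : u n) : UnitAddCircle → ℝ≥0∞ := (closedBall (φ b) (5 * K * r n b)).indicator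
    fun _ => ENNReal.ofReal ((10 * r n b) ^ (q - 1))
  have hw (n) (b : u n) : Measurable (w n b) :=
    measurable_const.indicator measurableSet_closedBall
  have hbound (n) : upperLintegral volume (fun t => ∑' b, w n b t) ≤
      ENNReal.ofReal (10 ^ q / aA) * (K * (μ E + ENNReal.ofReal (ε n))) := by
    refine (upperLintegral_le (Measurable.tsum (hw n)) fun t => le_rfl).trans ?_
    rw [lintegral_tsum fun b => (hw n b).aemeasurable]
    simp only [lintegral_indicator_const measurableSet_closedBall, w]
    refine (ENNReal.tsum_le_tsum fun b : u n => hA.ofReal_mul_volume_closedBall_le K _ (b : T)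
      (hr n b b.2).1 (by linarith [(hr n b b.2).2.2.2])).trans ?_
    rw [ENNReal.tsum_mul_left, ENNReal.tsum_mul_left]
    gcongr
    exact hsum n
  have hlim : Tendsto (fun n => ENNReal.ofReal (10 ^ q / aA) * (K * (μ E + ENNReal.ofReal (ε n))))
      atTop (𝓝 (ENNReal.ofReal (10 ^ q / aA) * (K * μ E))) := by
    refine ENNReal.Tendsto.const_mul (ENNReal.Tendsto.const_mul ?_ (by simp)) (by simp)
    simpa using tendsto_const_nhds.add (ENNReal.tendsto_ofReal hε)
  calc upperLintegral volume (fun t => μH[q - 1] (E ∩ φ ⁻¹' {t}))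
      ≤ upperLintegral volume (fun t => liminf (fun n => ∑' b, w n b t) atTop) :=
        upperLintegral_mono fun t => hausdorffMeasure_fiber_le_liminf (sub_nonneg.2 hq) hcount
          (fun n => (huE n).trans hE) hε (fun n b hb => ⟨⟨(hr n b hb).1.le, (hr n b hb).2.1⟩,
            by linarith [(hr n b hb).2.2.1]⟩) hcov t
    _ ≤ liminf (fun n => upperLintegral volume (fun t => ∑' b, w n b t)) atTop :=
        upperLintegral_liminf_le _
    _ ≤ _ := (liminf_le_liminf (Eventually.of_forall hbound)).trans_eq hlim.liminf_eq

lemma IsAhlforsRegular.upperLintegral_fiber_le_of_pLip_lt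
    [TopologicalSpace.SeparableSpace T] [μ.OuterRegular] (hA : IsAhlforsRegular μ q aA AA)
    (hq : 1 ≤ q) (hD : 0 < Metric.diam (univ : Set T)) {K : ℝ≥0} {E : Set T}
    (hE : ∀ x ∈ E, pLip φ x < K) :
    upperLintegral volume (fun t => μH[q - 1] (E ∩ φ ⁻¹' {t})) ≤
      ENNReal.ofReal (10 ^ q / aA) * (K * μ E) := by
  let A : ℕ → Set T := fun n => E ∩ lipSet φ K (1 / ((n : ℝ) + 1))
  have hA_mono : Monotone A := fun n m h =>
    inter_subset_inter_right _ (lipSet_anti (Nat.one_div_le_one_div h))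
  have hA_iUnion : ⋃ n, A n = E := by
    refine (iUnion_subset fun n => inter_subset_left).antisymm fun x hx => ?_
    obtain ⟨δ, hδ, hxδ⟩ := exists_edist_le_of_pLip_lt (hE x hx)
    obtain ⟨n, hn⟩ := exists_nat_one_div_lt hδ
    exact mem_iUnion.2 ⟨n, hx, fun y hy => hxδ y (hy.trans hn)⟩
  have hfiber (t) : μH[q - 1] (E ∩ φ ⁻¹' {t}) = ⨆ n, μH[q - 1] (A n ∩ φ ⁻¹' {t}) := by
    rw [← Monotone.measure_iUnion fun n m h => inter_subset_inter_left _ (hA_mono h),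
      ← iUnion_inter, hA_iUnion]
  rw [funext hfiber]
  refine upperLintegral_iSup_le (F := fun n t => μH[q - 1] (A n ∩ φ ⁻¹' {t}))
    (fun t n m h => measure_mono (inter_subset_inter_left _ (hA_mono h))) fun n => ?_
  refine (hA.upperLintegral_fiber_le_of_subset_lipSet hq hD (by positivity)
    inter_subset_right).trans ?_
  gcongr
  exact inter_subset_left

/- On the set where `pLip φ` lies in `[jη, (j + 1)η)` the constant `(j + 1)η` exceeds `pLip φ` by at
most `η`. -/
lemma IsAhlforsRegular.upperLintegral_fiber_le_setLIntegral_add [CompactSpace T]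
    [IsFiniteMeasure μ] (hA : IsAhlforsRegular μ q aA AA) (hq : 1 ≤ q)
    (hD : 0 < Metric.diam (univ : Set T)) {L : ℝ≥0} (hφ : LipschitzWith L φ) {η : ℝ≥0}
    (hη : 0 < η) {E : Set T} (hE : MeasurableSet E) :
    upperLintegral volume (fun t => μH[q - 1] (E ∩ φ ⁻¹' {t})) ≤
      ENNReal.ofReal (10 ^ q / aA) * ∫⁻ x in E, (pLip φ x + η) ∂μ := by
  have hm := measurable_pLip hφ.continuous
  let N : T → ℕ := fun x => ⌊(pLip φ x).toNNReal / η⌋₊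
  have hN : Measurable N := Nat.measurable_floor.comp (hm.ennreal_toNNReal.div_const η)
  let F : ℕ → Set T := fun j => E ∩ N ⁻¹' {j}
  have hF (j) : MeasurableSet (F j) := hE.inter (hN (measurableSet_singleton j))
  have hF_disj : Pairwise (Function.onFun Disjoint F) := fun i j hij =>
    (pairwise_disjoint_fiber N hij).mono inter_subset_right inter_subset_right
  have hF_iUnion : ⋃ j, F j = E := by
    rw [← inter_iUnion, ← preimage_iUnion, iUnion_of_singleton, preimage_univ, inter_univ]
  have hlt (j) (x) (hx : x ∈ F j) : pLip φ x < ((j + 1) * η : ℝ≥0) ∧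
      ((j + 1) * η : ℝ≥0) ≤ pLip φ x + η := by
    obtain ⟨l, hl⟩ : ∃ l : ℝ≥0, (l : ℝ≥0∞) = pLip φ x :=
      ⟨_, ENNReal.coe_toNNReal (pLip_ne_top_of_lipschitzWith hφ x)⟩
    obtain rfl : ⌊l / η⌋₊ = j := by simpa [N, ← hl] using hx.2
    rw [← hl, ← ENNReal.coe_add, ENNReal.coe_lt_coe, ENNReal.coe_le_coe, ← div_lt_iff₀ hη,
      add_one_mul, add_le_add_iff_right, ← le_div_iff₀ hη]
    exact ⟨Nat.lt_floor_add_one _, Nat.floor_le zero_le⟩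
  have hfiber (t) : μH[q - 1] (E ∩ φ ⁻¹' {t}) = ∑' j, μH[q - 1] (F j ∩ φ ⁻¹' {t}) := by
    rw [← measure_iUnion, ← iUnion_inter, hF_iUnion]
    · exact fun i j hij => (hF_disj hij).mono inter_subset_left inter_subset_left
    · exact fun j => (hF j).inter (hφ.continuous.measurable (measurableSet_singleton t))
  rw [funext hfiber]
  refine (upperLintegral_tsum_le _).trans ?_
  rw [← hF_iUnion, lintegral_iUnion hF hF_disj, ← ENNReal.tsum_mul_left]
  refine ENNReal.tsum_le_tsum fun j => (hA.upperLintegral_fiber_le_of_pLip_lt hq hD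
    fun x hx => (hlt j x hx).1).trans ?_
  gcongr
  rw [← setLIntegral_const]
  exact setLIntegral_mono' (hF j) fun x hx => (hlt j x hx).2

lemma IsAhlforsRegular.upperLintegral_fiber_le [CompactSpace T] [IsFiniteMeasure μ]
    (hA : IsAhlforsRegular μ q aA AA) (hq : 1 ≤ q) (hD : 0 < Metric.diam (univ : Set T))
    {L : ℝ≥0} (hφ : LipschitzWith L φ) {E : Set T} (hE : MeasurableSet E) :
    upperLintegral volume (fun t => μH[q - 1] (E ∩ φ ⁻¹' {t})) ≤
      ENNReal.ofReal (10 ^ q / aA) * ∫⁻ x in E, pLip φ x ∂μ := by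
  refine le_of_forall_pos_le_add_mul (c := ENNReal.ofReal (10 ^ q / aA) * μ E)
    (by finiteness) fun η hη => ?_
  refine (hA.upperLintegral_fiber_le_setLIntegral_add hq hD hφ hη hE).trans_eq ?_
  rw [lintegral_add_left (measurable_pLip hφ.continuous), setLIntegral_const, mul_add,
    mul_left_comm]

theorem IsAhlforsRegular.upperLintegral_setLIntegral_fiber_le [CompactSpace T]
    [IsFiniteMeasure μ] (hA : IsAhlforsRegular μ q aA AA) (hq : 1 ≤ q)
    (hD : 0 < Metric.diam (univ : Set T)) {L : ℝ≥0} (hφ : LipschitzWith L φ) {ρ : T → ℝ≥0∞}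
    (hρ : Measurable ρ) :
    upperLintegral volume (fun t => ∫⁻ x in φ ⁻¹' {t}, ρ x ∂μH[q - 1]) ≤
      ENNReal.ofReal (10 ^ q / aA) * ∫⁻ x, ρ x * pLip φ x ∂μ := by
  have hm := measurable_pLip hφ.continuous
  refine Measurable.ennreal_induction (motive := fun ρ =>
    upperLintegral volume (fun t => ∫⁻ x in φ ⁻¹' {t}, ρ x ∂μH[q - 1]) ≤
      ENNReal.ofReal (10 ^ q / aA) * ∫⁻ x, ρ x * pLip φ x ∂μ) ?_ ?_ ?_ hρ
  · intro c E hE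
    simp only [← indicator_mul_left]
    simp only [lintegral_indicator hE, setLIntegral_const, lintegral_const_mul c hm,
      Measure.restrict_apply hE]
    refine (upperLintegral_const_mul_le c).trans ?_
    rw [mul_left_comm]
    gcongr
    exact hA.upperLintegral_fiber_le hq hD hφ hE
  · intro f g _ hf _ hfB hgB
    simp only [Pi.add_apply, add_mul]
    simp only [lintegral_add_left hf]
    rw [lintegral_add_left (f := fun x => f x * pLip φ x) (hf.mul hm), mul_add]
    exact upperLintegral_add_le.trans (add_le_add hfB hgB)
  · intro f hf hmono hfB
    rw [funext fun t => lintegral_iSup (μ := μH[q - 1].restrict (φ ⁻¹' {t})) hf hmono]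
    refine upperLintegral_iSup_le (F := fun n t => ∫⁻ x in φ ⁻¹' {t}, f n x ∂μH[q - 1])
      (fun t n m h => lintegral_mono (hmono h)) fun n => (hfB n).trans ?_
    gcongr with x
    exact le_iSup (fun n => f n x) n

end Eilenberg

section LowerBound

variable {T : Type*} [MetricSpace T] [CompactSpace T] [Nontrivial T] [MeasurableSpace T]
  [BorelSpace T] {φ : T → UnitAddCircle} {μ : Measure T} [IsFiniteMeasure μ] {q aA AA : ℝ}
  {x₀ : T} {α₀ : Path x₀ x₀}

lemma DegOneLip.ae_preimage_mem_surfacesH (hA : IsAhlforsRegular μ q aA AA) (hq : 1 ≤ q)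
    (hφ : DegOneLip x₀ α₀ φ) : ∀ᵐ t, φ ⁻¹' {t} ∈ SurfacesH q x₀ α₀ := by
  obtain ⟨⟨L, hL⟩, hdeg⟩ := hφ
  obtain ⟨G, hG, hle, hint⟩ := exists_measurable_ge_lintegral_eq_upperLintegral
    volume fun t => μH[q - 1] (univ ∩ φ ⁻¹' {t})
  have hfin : ∫⁻ t, G t ≠ ⊤ := by
    refine ne_top_of_le_ne_top ?_ (hint.trans_le
      (hA.upperLintegral_fiber_le hq diam_univ_pos hL MeasurableSet.univ))
    refine ENNReal.mul_ne_top ENNReal.ofReal_ne_top (ne_top_of_le_ne_top ?_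
      (lintegral_mono fun x => pLip_le_of_lipschitzWith hL x))
    rw [lintegral_const]
    finiteness
  filter_upwards [ae_lt_top hG hfin] with t ht
  obtain ⟨a, ha⟩ := QuotientAddGroup.mk_surjective (-t)
  refine ⟨fun x => φ x + (a : UnitAddCircle), hdeg.add_coe continuous_const fun x => rfl, ?_, ?_⟩
  · ext x
    simp [show (a : UnitAddCircle) = -t from ha, ← sub_eq_add_neg, sub_eq_zero]
  · simpa using (hle t).trans_lt ht

lemma DegOneLip.one_le_lintegral_mul_pLip (hA : IsAhlforsRegular μ q aA AA) (hq : 1 ≤ q)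
    (hφ : DegOneLip x₀ α₀ φ) {ρ : T → ℝ≥0∞} (hρ : Measurable ρ)
    (hadm : ∀ S ∈ SurfacesH q x₀ α₀, 1 ≤ ∫⁻ x in S, ρ x ∂μH[q - 1]) :
    1 ≤ ENNReal.ofReal (10 ^ q / aA) * ∫⁻ x, ρ x * pLip φ x ∂μ := by
  obtain ⟨L, hL⟩ := hφ.1
  obtain ⟨G, -, hle, hint⟩ := exists_measurable_ge_lintegral_eq_upperLintegral
    volume fun t => ∫⁻ x in φ ⁻¹' {t}, ρ x ∂μH[q - 1]
  calc (1 : ℝ≥0∞) = ∫⁻ _ : UnitAddCircle, 1 := by simp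
    _ ≤ ∫⁻ t, G t := by
      refine lintegral_mono_ae ?_
      filter_upwards [hφ.ae_preimage_mem_surfacesH hA hq] with t ht using (hadm _ ht).trans (hle t)
    _ ≤ _ := hint.trans_le (hA.upperLintegral_setLIntegral_fiber_le hq diam_univ_pos hL hρ)

lemma DegOneLip.one_le_mul_Lp_mul_Lq (hA : IsAhlforsRegular μ q aA AA) (hq : 1 ≤ q)
    {p p' : ℝ} (hp : p.HolderConjugate p') (hφ : DegOneLip x₀ α₀ φ) {ρ : T → ℝ≥0∞}
    (hρ : Measurable ρ) (hadm : ∀ S ∈ SurfacesH q x₀ α₀, 1 ≤ ∫⁻ x in S, ρ x ∂μH[q - 1]) :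
    1 ≤ ENNReal.ofReal (10 ^ q / aA) *
      ((∫⁻ x, pLip φ x ^ p ∂μ) ^ (1 / p) * (∫⁻ x, ρ x ^ p' ∂μ) ^ (1 / p')) := by
  obtain ⟨L, hL⟩ := hφ.1
  refine (hφ.one_le_lintegral_mul_pLip hA hq hρ hadm).trans ?_
  gcongr
  simpa [mul_comm] using ENNReal.lintegral_mul_le_Lp_mul_Lq μ hp
    (measurable_pLip hL.continuous).aemeasurable hρ.aemeasurable

end LowerBound

/-! ### Uniform convexity of `Lᵖ` and minimization over convex sets -/

lemma abs_half_add_rpow_lt {p : ℝ} (hp : 1 < p) {a b : ℝ} (hab : a ≠ b) :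
    |(a + b) / 2| ^ p < (|a| ^ p + |b| ^ p) / 2 := by
  have hp0 : 0 < p := by positivity
  by_cases h : |a| = |b|
  · obtain rfl : a = -b := (abs_eq_abs.1 h).resolve_left hab
    have hb : b ≠ 0 := fun hb => hab (by simp [hb])
    rw [neg_add_cancel, zero_div, abs_zero, Real.zero_rpow hp0.ne', abs_neg]
    have := Real.rpow_pos_of_pos (abs_pos.2 hb) p
    positivity
  · calc |(a + b) / 2| ^ p ≤ (1 / 2 * |a| + 1 / 2 * |b|) ^ p := by
          gcongr
          rw [abs_div, abs_two]
          linarith [abs_add_le a b]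
      _ < 1 / 2 * |a| ^ p + 1 / 2 * |b| ^ p :=
          (strictConvexOn_rpow hp).2 (abs_nonneg a) (abs_nonneg b) h one_half_pos one_half_pos
            (add_halves 1)
      _ = (|a| ^ p + |b| ^ p) / 2 := by ring

lemma abs_half_add_rpow_le {p : ℝ} (hp : 1 < p) (a b : ℝ) :
    |(a + b) / 2| ^ p ≤ (|a| ^ p + |b| ^ p) / 2 := by
  obtain rfl | hab := eq_or_ne a b
  · rw [add_self_div_two, add_self_div_two]
  · exact (abs_half_add_rpow_lt hp hab).le

lemma abs_le_one_of_rpow_add_rpow_eq_one {p : ℝ} (hp : 0 < p) {a b : ℝ}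
    (h : |a| ^ p + |b| ^ p = 1) : |a| ≤ 1 := by
  by_contra! ha
  have := Real.one_lt_rpow ha hp
  have : 0 ≤ |b| ^ p := by positivity
  linarith

lemma exists_le_convexity_defect {p : ℝ} (hp : 1 < p) {ε : ℝ} (hε : 0 < ε) :
    ∃ c > 0, ∀ a b : ℝ, |a| ^ p + |b| ^ p = 1 → ε ≤ |a - b| ^ p →
      c ≤ (|a| ^ p + |b| ^ p) / 2 - |(a + b) / 2| ^ p := by
  have hp0 : 0 < p := by positivity
  have hcont : Continuous fun s : ℝ => |s| ^ p :=
    (Real.continuous_rpow_const hp0.le).comp continuous_abs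
  have hfst : Continuous fun z : ℝ × ℝ => |z.1| ^ p := hcont.comp continuous_fst
  have hsnd : Continuous fun z : ℝ × ℝ => |z.2| ^ p := hcont.comp continuous_snd
  have hsub : Continuous fun z : ℝ × ℝ => |z.1 - z.2| ^ p := hcont.comp (by fun_prop)
  have hmid : Continuous fun z : ℝ × ℝ => |(z.1 + z.2) / 2| ^ p := hcont.comp (by fun_prop)
  let K : Set (ℝ × ℝ) := {z | |z.1| ^ p + |z.2| ^ p = 1} ∩ {z | ε ≤ |z.1 - z.2| ^ p}
  have hKclosed : IsClosed K := (isClosed_eq (hfst.add hsnd) continuous_const).inter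
    (isClosed_le continuous_const hsub)
  have hKbdd : K ⊆ Icc (-1) 1 ×ˢ Icc (-1) 1 := by
    rintro ⟨a, b⟩ ⟨hab : |a| ^ p + |b| ^ p = 1, -⟩
    exact ⟨abs_le.1 (abs_le_one_of_rpow_add_rpow_eq_one hp0 hab),
      abs_le.1 (abs_le_one_of_rpow_add_rpow_eq_one hp0 (add_comm (|b| ^ p) _ ▸ hab))⟩
  have hK : IsCompact K := (isCompact_Icc.prod isCompact_Icc).of_isClosed_subset hKclosed hKbdd
  obtain ⟨c, hc, hcK⟩ := hK.exists_forall_le' (a := 0)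
    (((hfst.add hsnd).div_const 2).sub hmid).continuousOn fun z hz => by
      refine sub_pos.2 (abs_half_add_rpow_lt hp fun h => ?_)
      have hzε : ε ≤ |z.1 - z.2| ^ p := hz.2
      rw [h, sub_self, abs_zero, Real.zero_rpow hp0.ne'] at hzε
      exact hε.not_ge hzε
  exact ⟨c, hc, fun a b hab hε => hcK (a, b) ⟨hab, hε⟩⟩

lemma exists_abs_sub_rpow_le_of_add_eq_one {p : ℝ} (hp : 1 < p) {ε : ℝ} (hε : 0 < ε) :
    ∃ C > 0, ∀ a b : ℝ, |a| ^ p + |b| ^ p = 1 → |a - b| ^ p ≤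
      ε * (|a| ^ p + |b| ^ p) + C * ((|a| ^ p + |b| ^ p) / 2 - |(a + b) / 2| ^ p) := by
  have hp0 : 0 < p := by positivity
  obtain ⟨c, hc, hdefect⟩ := exists_le_convexity_defect hp hε
  refine ⟨2 ^ p / c, by positivity, fun a b hab => ?_⟩
  have hdefect0 := mul_nonneg (show 0 ≤ 2 ^ p / c by positivity)
    (sub_nonneg.2 (abs_half_add_rpow_le hp a b))
  obtain h | h := le_or_gt ε (|a - b| ^ p)
  · have hle : |a - b| ≤ 2 := by
      linarith [abs_sub a b, abs_le_one_of_rpow_add_rpow_eq_one hp0 hab,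
        abs_le_one_of_rpow_add_rpow_eq_one hp0 (add_comm (|b| ^ p) _ ▸ hab)]
    calc |a - b| ^ p ≤ 2 ^ p / c * c := by
          rw [div_mul_cancel₀ _ hc.ne']
          gcongr
      _ ≤ 2 ^ p / c * ((|a| ^ p + |b| ^ p) / 2 - |(a + b) / 2| ^ p) := by
          gcongr
          exact hdefect a b hab h
      _ ≤ _ := le_add_of_nonneg_left (by positivity)
  · rw [hab, mul_one] at *
    linarith

lemma exists_abs_sub_rpow_le {p : ℝ} (hp : 1 < p) {ε : ℝ} (hε : 0 < ε) :
    ∃ C > 0, ∀ a b : ℝ, |a - b| ^ p ≤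
      ε * (|a| ^ p + |b| ^ p) + C * ((|a| ^ p + |b| ^ p) / 2 - |(a + b) / 2| ^ p) := by
  have hp0 : 0 < p := by positivity
  obtain ⟨C, hC, hnormalized⟩ := exists_abs_sub_rpow_le_of_add_eq_one hp hε
  refine ⟨C, hC, fun a b => ?_⟩
  set s := |a| ^ p + |b| ^ p with hs
  have hs0 : 0 ≤ s := by positivity
  obtain hs0 | hs0 := hs0.eq_or_lt
  · have hab := (add_eq_zero_iff_of_nonneg (by positivity) (by positivity)).1 hs0.symm
    rw [Real.rpow_eq_zero (abs_nonneg a) hp0.ne', Real.rpow_eq_zero (abs_nonneg b) hp0.ne',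
      abs_eq_zero, abs_eq_zero] at hab
    simp [← hs0, hab, Real.zero_rpow hp0.ne']
  · have hscale (c : ℝ) : |c / s ^ p⁻¹| ^ p = |c| ^ p / s := by
      rw [abs_div, abs_of_pos (Real.rpow_pos_of_pos hs0 _),
        Real.div_rpow (abs_nonneg c) (Real.rpow_nonneg hs0.le _), Real.rpow_inv_rpow hs0.le hp0.ne']
    have h := hnormalized (a / s ^ p⁻¹) (b / s ^ p⁻¹) (by
      rw [hscale, hscale, ← add_div, div_self hs0.ne'])
    rw [← sub_div, ← add_div, div_right_comm, hscale, hscale, hscale, hscale, ← add_div, ← hs,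
      div_le_iff₀ hs0] at h
    refine h.trans_eq ?_
    field_simp

section Lp

variable {α : Type*} {mα : MeasurableSpace α} {μ : Measure α} {p : ℝ≥0∞}

lemma norm_rpow_eq_integral_abs_rpow (hp : p ≠ 0) (hp' : p ≠ ⊤) (f : Lp ℝ p μ) :
    ‖f‖ ^ p.toReal = ∫ x, |f x| ^ p.toReal ∂μ := by
  have h0 := ENNReal.toReal_pos hp hp'
  rw [Lp.norm_def, (Lp.memLp f).eLpNorm_eq_integral_rpow_norm hp hp',
    ENNReal.toReal_ofReal (by positivity), Real.rpow_inv_rpow (by positivity) h0.ne']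
  simp only [Real.norm_eq_abs]

lemma enorm_rpow_eq_lintegral_enorm_rpow (hp : p ≠ 0) (hp' : p ≠ ⊤) (f : Lp ℝ p μ) :
    ‖f‖ₑ ^ p.toReal = ∫⁻ x, ‖f x‖ₑ ^ p.toReal ∂μ := by
  rw [Lp.enorm_def, eLpNorm_eq_lintegral_rpow_enorm_toReal hp hp', ← ENNReal.rpow_mul,
    one_div_mul_cancel (ENNReal.toReal_pos hp hp').ne', ENNReal.rpow_one]

lemma exists_norm_sub_rpow_le [Fact (1 ≤ p)] (hp : 1 < p) (hp' : p ≠ ⊤) {ε : ℝ} (hε : 0 < ε) :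
    ∃ C > 0, ∀ f g : Lp ℝ p μ, ‖f - g‖ ^ p.toReal ≤
      ε * (‖f‖ ^ p.toReal + ‖g‖ ^ p.toReal) +
        C * ((‖f‖ ^ p.toReal + ‖g‖ ^ p.toReal) / 2 - (‖f + g‖ / 2) ^ p.toReal) := by
  have hp0 : p ≠ 0 := (zero_lt_one.trans hp).ne'
  have hr : 1 < p.toReal := by simpa using ENNReal.toReal_strict_mono hp' hp
  obtain ⟨C, hC, h⟩ := exists_abs_sub_rpow_le hr hε
  refine ⟨C, hC, fun f g => ?_⟩
  have hint (k : Lp ℝ p μ) : Integrable (fun x => |k x| ^ p.toReal) μ :=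
    (Lp.memLp k).integrable_norm_rpow hp0 hp'
  have hf := hint f
  have hg := hint g
  have hfg := (hint (f + g)).div_const (2 ^ p.toReal)
  rw [Real.div_rpow (norm_nonneg _) zero_le_two]
  simp only [norm_rpow_eq_integral_abs_rpow hp0 hp']
  calc ∫ x, |(f - g) x| ^ p.toReal ∂μ
      ≤ ∫ x, (ε * (|f x| ^ p.toReal + |g x| ^ p.toReal) +
          C * ((|f x| ^ p.toReal + |g x| ^ p.toReal) / 2 -
            |(f + g) x| ^ p.toReal / 2 ^ p.toReal)) ∂μ := by
        refine integral_mono_ae (hint _) (by fun_prop) ?_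
        filter_upwards [Lp.coeFn_sub f g, Lp.coeFn_add f g] with x hsub hadd
        rw [hsub, hadd, Pi.sub_apply, Pi.add_apply, ← Real.div_rpow (abs_nonneg _) zero_le_two]
        simpa only [abs_div, abs_two] using h (f x) (g x)
    _ = _ := by
        rw [integral_add (by fun_prop) (by fun_prop), integral_const_mul, integral_const_mul,
          integral_sub (by fun_prop) hfg, integral_div, integral_div, integral_add hf hg]

theorem uniformConvexSpace_Lp [Fact (1 ≤ p)] (hp : 1 < p) (hp' : p ≠ ⊤) :
    UniformConvexSpace (Lp ℝ p μ) where
  uniform_convex ε hε := by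
    set r := p.toReal
    have hr1 : 1 < r := by simpa using ENNReal.toReal_strict_mono hp' hp
    have hr0 : 0 < r := by positivity
    obtain ⟨C, hC, h⟩ := exists_norm_sub_rpow_le (μ := μ) hp hp' (ε := ε ^ r / 4) (by positivity)
    set b := max 0 (1 - ε ^ r / (2 * C))
    have hb1 : b < 1 := max_lt one_pos (sub_lt_self 1 (by positivity))
    refine ⟨2 - 2 * b ^ r⁻¹, ?_, fun f hf g hg hfg => ?_⟩
    · linarith [Real.rpow_lt_one (le_max_left 0 _) hb1 (inv_pos.2 hr0)]
    · have hmid : (‖f + g‖ / 2) ^ r ≤ b := by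
        have hfgr : ε ^ r ≤ ‖f - g‖ ^ r := by gcongr
        have hCmid := hfgr.trans (h f g)
        rw [hf, hg, Real.one_rpow] at hCmid
        refine le_max_of_le_right ?_
        rw [le_sub_comm, div_le_iff₀ (by positivity)]
        linarith
      have := (Real.le_rpow_inv_iff_of_pos (by positivity) (le_max_left 0 _) hr0).2 hmid
      linarith

end Lp

section MinimalNorm

variable {E : Type*} [NormedAddCommGroup E] [NormedSpace ℝ E] [UniformConvexSpace E]

lemma exists_forall_norm_sub_lt {m ε : ℝ} (hm : 0 ≤ m) (hε : 0 < ε) :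
    ∃ η > 0, ∀ x y : E, ‖x‖ ≤ m + η → ‖y‖ ≤ m + η → 2 * m ≤ ‖x + y‖ → ‖x - y‖ < ε := by
  obtain ⟨δ, hδ, h⟩ := exists_forall_closed_ball_dist_add_le_two_mul_sub E (half_pos hε) m
  obtain ⟨η, hη, hηlt⟩ := exists_between (lt_min (half_pos hδ) (show 0 < ε / 4 by positivity))
  rw [lt_min_iff] at hηlt
  refine ⟨η, hη, fun x y hx hy hxy => ?_⟩
  have hproj (z : E) (hz : ‖z‖ ≤ m + η) : ∃ z', ‖z'‖ ≤ m ∧ ‖z - z'‖ ≤ η := by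
    have hpos : 0 < m + η := by positivity
    have hsub : z - (m / (m + η)) • z = (η / (m + η)) • z := by
      rw [← sub_eq_iff_eq_add'.2 (add_div m η (m + η)), div_self hpos.ne', sub_smul, one_smul]
    refine ⟨(m / (m + η)) • z, ?_, ?_⟩
    · rw [norm_smul_of_nonneg (by positivity), div_mul_eq_mul_div, div_le_iff₀ hpos]
      gcongr
    · rw [hsub, norm_smul_of_nonneg (by positivity), div_mul_eq_mul_div, div_le_iff₀ hpos]
      gcongr
  obtain ⟨x', hx', hxx'⟩ := hproj x hx
  obtain ⟨y', hy', hyy'⟩ := hproj y hy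
  by_contra! hlt
  have hsub : ε / 2 ≤ ‖x' - y'‖ := by
    have : x - y = (x - x') - (y - y') + (x' - y') := by abel
    have := this ▸ (norm_add_le ((x - x') - (y - y')) (x' - y'))
    linarith [norm_sub_le (x - x') (y - y')]
  have hadd : ‖x + y‖ ≤ ‖x' + y'‖ + 2 * η := by
    have : x + y = (x - x') + (y - y') + (x' + y') := by abel
    have := this ▸ (norm_add_le ((x - x') + (y - y')) (x' + y'))
    linarith [norm_add_le (x - x') (y - y')]
  linarith [h hx' hy' hsub]

theorem exists_norm_le_of_isClosed_convex [CompleteSpace E] {K : Set E} (hne : K.Nonempty)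
    (hclosed : IsClosed K) (hconv : Convex ℝ K) : ∃ v ∈ K, ∀ w ∈ K, ‖v‖ ≤ ‖w‖ := by
  set m := sInf (norm '' K)
  have hm0 : 0 ≤ m := Real.sInf_nonneg (by rintro _ ⟨w, -, rfl⟩; exact norm_nonneg w)
  have hm (w : E) (hw : w ∈ K) : m ≤ ‖w‖ :=
    csInf_le ⟨0, by rintro _ ⟨w, -, rfl⟩; exact norm_nonneg w⟩ (mem_image_of_mem norm hw)
  have hmid (x y : E) (hx : x ∈ K) (hy : y ∈ K) : 2 * m ≤ ‖x + y‖ := by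
    have := hm _ (hconv.midpoint_mem hx hy)
    rw [midpoint_eq_smul_add, norm_smul_of_nonneg (by norm_num)] at this
    norm_num at this
    linarith
  have hlt (n : ℕ) : ∃ v ∈ K, ‖v‖ < m + 1 / ((n : ℝ) + 1) := by
    simpa only [exists_mem_image] using
      Real.lt_sInf_add_pos (hne.image norm) (Nat.one_div_pos_of_nat (n := n))
  choose v hvK hvm using hlt
  have hcauchy : CauchySeq v := by
    refine Metric.cauchySeq_iff.2 fun ε hε => ?_
    obtain ⟨η, hη, h⟩ := exists_forall_norm_sub_lt (E := E) hm0 hε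
    obtain ⟨N, hN⟩ := exists_nat_one_div_lt hη
    have hle (n : ℕ) (hn : N ≤ n) : ‖v n‖ ≤ m + η := by
      linarith [hvm n, Nat.one_div_le_one_div (α := ℝ) hn]
    refine ⟨N, fun i hi j hj => ?_⟩
    rw [dist_eq_norm]
    exact h _ _ (hle i hi) (hle j hj) (hmid _ _ (hvK i) (hvK j))
  obtain ⟨w, hw⟩ := cauchySeq_tendsto_of_complete hcauchy
  have hnorm : Tendsto (fun n : ℕ => m + 1 / ((n : ℝ) + 1)) atTop (𝓝 m) := by
    simpa using tendsto_const_nhds.add (tendsto_one_div_add_atTop_nhds_zero_nat (𝕜 := ℝ))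
  refine ⟨w, hclosed.mem_of_tendsto hw (Eventually.of_forall hvK), fun u hu => ?_⟩
  exact (le_of_tendsto_of_tendsto' hw.norm hnorm fun n => (hvm n).le).trans (hm u hu)

end MinimalNorm

section Variational

variable {α : Type*} {mα : MeasurableSpace α} {μ : Measure α} {p p' : ℝ}

lemma rpow_sub_one_mul_self (hp : 1 < p) (x : ℝ≥0∞) : x ^ (p - 1) * x = x ^ p := by
  conv_lhs => enter [2]; rw [← ENNReal.rpow_one x]
  rw [← ENNReal.rpow_add_of_nonneg _ _ (sub_nonneg.2 hp.le) zero_le_one, sub_add_cancel]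

lemma lintegral_rpow_le_lintegral_rpow_sub_one_mul (hp : p.HolderConjugate p') {u f v : α → ℝ≥0∞}
    (hu : Measurable u) (hf : Measurable f) (hv : ∫⁻ x, v x ^ p ∂μ ≠ ⊤)
    {a b : ℝ≥0} (hab : a + b = 1) (hb : b ≠ 0) (hvuf : ∀ x, v x = a * u x + b * f x)
    (h : ∫⁻ x, u x ^ p ∂μ ≤ ∫⁻ x, v x ^ p ∂μ) :
    ∫⁻ x, v x ^ p ∂μ ≤ ∫⁻ x, v x ^ (p - 1) * f x ∂μ := by
  have hvm : Measurable v := by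
    rw [funext hvuf]
    fun_prop
  set A := ∫⁻ x, v x ^ p ∂μ
  have hHolder : ∫⁻ x, v x ^ (p - 1) * u x ∂μ ≤ A := by
    calc ∫⁻ x, v x ^ (p - 1) * u x ∂μ
        ≤ (∫⁻ x, (v x ^ (p - 1)) ^ p' ∂μ) ^ (1 / p') * (∫⁻ x, u x ^ p ∂μ) ^ (1 / p) :=
          ENNReal.lintegral_mul_le_Lp_mul_Lq μ hp.symm (hvm.pow_const _).aemeasurable
            hu.aemeasurable
      _ ≤ A ^ (1 / p') * A ^ (1 / p) := by
          have := hp.pos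
          have := hp.symm.pos
          simp only [← ENNReal.rpow_mul, hp.sub_one_mul_conj]
          gcongr
      _ = A := by
          rw [← ENNReal.rpow_add_of_nonneg _ _ hp.symm.one_div_nonneg hp.one_div_nonneg,
            hp.symm.one_div_add_one_div,
            one_div_one, ENNReal.rpow_one]
  have hsplit : A = a * ∫⁻ x, v x ^ (p - 1) * u x ∂μ + b * ∫⁻ x, v x ^ (p - 1) * f x ∂μ := by
    rw [← lintegral_const_mul _ (by fun_prop), ← lintegral_const_mul _ (by fun_prop),
      ← lintegral_add_left (by fun_prop)]
    refine lintegral_congr fun x => ?_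
    rw [mul_left_comm, mul_left_comm (b : ℝ≥0∞), ← mul_add, ← hvuf, rpow_sub_one_mul_self hp.lt]
  have hle : a * A + b * A ≤ a * A + b * ∫⁻ x, v x ^ (p - 1) * f x ∂μ := by
    rw [← add_mul, ← ENNReal.coe_add, hab, ENNReal.coe_one, one_mul]
    nth_rewrite 1 [hsplit]
    gcongr
  rwa [ENNReal.add_le_add_iff_left (by finiteness), ENNReal.mul_le_mul_iff_right (by simpa using hb)
    ENNReal.coe_ne_top] at hle

theorem lintegral_rpow_le_of_forall_convexCombination (hp : p.HolderConjugate p')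
    {u f : α → ℝ≥0} (hu : Measurable u) (hf : Measurable f)
    (hup : ∫⁻ x, (u x : ℝ≥0∞) ^ p ∂μ ≠ ⊤) (hfp : ∫⁻ x, (f x : ℝ≥0∞) ^ p ∂μ ≠ ⊤)
    (h : ∀ a b : ℝ≥0, a + b = 1 →
      ∫⁻ x, (u x : ℝ≥0∞) ^ p ∂μ ≤ ∫⁻ x, (a * u x + b * f x : ℝ≥0∞) ^ p ∂μ) :
    ∫⁻ x, (u x : ℝ≥0∞) ^ p ∂μ ≤ ∫⁻ x, (u x : ℝ≥0∞) ^ (p - 1) * f x ∂μ := by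
  have hsum : ∫⁻ x, (u x + f x : ℝ≥0∞) ^ p ∂μ < ⊤ :=
    ENNReal.lintegral_rpow_add_lt_top_of_lintegral_rpow_lt_top (by fun_prop) hup.lt_top hfp.lt_top
      hp.lt.le
  have hle (b : ℝ≥0) (hb : b ≤ 1) (x : α) :
      ((1 - b : ℝ≥0) * u x + b * f x : ℝ≥0∞) ≤ u x + f x := by
    gcongr
    · exact mul_le_of_le_one_left' (by simp)
    · exact mul_le_of_le_one_left' (by simpa)
  have hlim : Tendsto
      (fun b : ℝ≥0 => ∫⁻ x, ((1 - b : ℝ≥0) * u x + b * f x : ℝ≥0∞) ^ (p - 1) * f x ∂μ)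
      (𝓝[>] 0) (𝓝 (∫⁻ x, (u x : ℝ≥0∞) ^ (p - 1) * f x ∂μ)) := by
    refine tendsto_lintegral_filter_of_dominated_convergence
      (fun x => (u x + f x : ℝ≥0∞) ^ p) (Eventually.of_forall fun b => by fun_prop) ?_ hsum.ne
      (ae_of_all _ fun x => ?_)
    · filter_upwards [Ioc_mem_nhdsGT one_pos] with b hb
      refine ae_of_all _ fun x => ?_
      rw [← rpow_sub_one_mul_self hp.lt]
      exact mul_le_mul' (ENNReal.rpow_le_rpow (hle b hb.2 x) hp.sub_one_pos.le) le_add_self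
    · have hcont : Continuous fun b : ℝ≥0 => (((1 - b) * u x + b * f x : ℝ≥0) : ℝ≥0∞) := by
        fun_prop
      have h0 := (hcont.tendsto 0).mono_left (nhdsWithin_le_nhds (s := Ioi 0))
      simp only [tsub_zero, one_mul, zero_mul, add_zero, ENNReal.coe_add, ENNReal.coe_mul] at h0
      exact ENNReal.Tendsto.mul_const (h0.ennrpow_const _) (Or.inr ENNReal.coe_ne_top)
  refine ge_of_tendsto hlim ?_
  filter_upwards [Ioc_mem_nhdsGT one_pos] with b hb
  have hb1 := h (1 - b) b (tsub_add_cancel_of_le hb.2)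
  refine hb1.trans (lintegral_rpow_le_lintegral_rpow_sub_one_mul hp (u := fun x => u x)
    (f := fun x => f x) (by fun_prop) (by fun_prop) ?_ (tsub_add_cancel_of_le hb.2) hb.1.ne'
    (fun x => rfl) hb1)
  exact ((lintegral_mono fun x => ENNReal.rpow_le_rpow (hle b hb.2 x) hp.nonneg).trans_lt hsum).ne

end Variational

section Extremal

variable {α : Type*} {mα : MeasurableSpace α} {μ : Measure α} {p p' : ℝ}

/-- The elements of `Lᵖ` that dominate, almost everywhere, some function of the family `F`. -/
def lpMajorants (μ : Measure α) (p : ℝ) (F : Set (α → ℝ≥0)) : Set (Lp ℝ (ENNReal.ofReal p) μ) :=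
  {k | ∃ f ∈ F, ∀ᵐ x ∂μ, (f x : ℝ) ≤ k x}

lemma convex_lpMajorants [Fact (1 ≤ ENNReal.ofReal p)] {F : Set (α → ℝ≥0)}
    (hF : ∀ f ∈ F, ∀ g ∈ F, ∀ a b : ℝ≥0, a + b = 1 → ∃ k ∈ F, ∀ x, k x ≤ a * f x + b * g x) :
    Convex ℝ (lpMajorants μ p F) := by
  rintro k₁ ⟨f, hf, hfk⟩ k₂ ⟨g, hg, hgk⟩ a b ha hb hab
  lift a to ℝ≥0 using ha
  lift b to ℝ≥0 using hb
  obtain ⟨k, hk, hle⟩ := hF f hf g hg a b (by exact_mod_cast hab)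
  refine ⟨k, hk, ?_⟩
  filter_upwards [hfk, hgk, Lp.coeFn_add ((a : ℝ) • k₁) ((b : ℝ) • k₂),
    Lp.coeFn_smul (a : ℝ) k₁, Lp.coeFn_smul (b : ℝ) k₂] with x h₁ h₂ hadd hsmul₁ hsmul₂
  rw [hadd, Pi.add_apply, hsmul₁, hsmul₂, Pi.smul_apply, Pi.smul_apply, smul_eq_mul, smul_eq_mul]
  calc (k x : ℝ) ≤ a * f x + b * g x := mod_cast hle x
    _ ≤ a * k₁ x + b * k₂ x := by gcongr

lemma lintegral_enorm_rpow_eq_enorm_rpow (hp : 0 < p) (k : Lp ℝ (ENNReal.ofReal p) μ) :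
    ∫⁻ x, ‖k x‖ₑ ^ p ∂μ = ‖k‖ₑ ^ p := by
  simpa only [ENNReal.toReal_ofReal hp.le] using
    (enorm_rpow_eq_lintegral_enorm_rpow (by simpa using hp) ENNReal.ofReal_ne_top k).symm

lemma iInf_lintegral_rpow_le_of_mem_closure (hp : 0 < p) [Fact (1 ≤ ENNReal.ofReal p)]
    {F : Set (α → ℝ≥0)} {k : Lp ℝ (ENNReal.ofReal p) μ} (hk : k ∈ closure (lpMajorants μ p F)) :
    ⨅ f ∈ F, ∫⁻ x, (f x : ℝ≥0∞) ^ p ∂μ ≤ ∫⁻ x, ‖k x‖ₑ ^ p ∂μ := by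
  rw [lintegral_enorm_rpow_eq_enorm_rpow hp]
  have hclosed : IsClosed {k : Lp ℝ (ENNReal.ofReal p) μ |
      ⨅ f ∈ F, ∫⁻ x, (f x : ℝ≥0∞) ^ p ∂μ ≤ ‖k‖ₑ ^ p} :=
    isClosed_le continuous_const (ENNReal.continuous_rpow_const.comp continuous_enorm)
  refine closure_minimal ?_ hclosed hk
  rintro k ⟨f, hf, hfk⟩
  rw [mem_ofPred_eq, ← lintegral_enorm_rpow_eq_enorm_rpow hp]
  refine (iInf₂_le f hf).trans (lintegral_mono_ae ?_)
  filter_upwards [hfk] with x hx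
  exact ENNReal.rpow_le_rpow
    (ENNReal.coe_le_coe.2 (NNReal.coe_le_coe.1 (hx.trans (le_abs_self (k x))))) hp.le

lemma exists_minimizer_lintegral_rpow (hp : 1 < p) {K : Set (Lp ℝ (ENNReal.ofReal p) μ)}
    [Fact (1 ≤ ENNReal.ofReal p)] (hne : K.Nonempty) (hclosed : IsClosed K) (hconv : Convex ℝ K) :
    ∃ w ∈ K, ∀ k ∈ K, ∫⁻ x, ‖w x‖ₑ ^ p ∂μ ≤ ∫⁻ x, ‖k x‖ₑ ^ p ∂μ := by
  have := uniformConvexSpace_Lp (μ := μ) (p := ENNReal.ofReal p) (by simpa using hp)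
    ENNReal.ofReal_ne_top
  have hp0 : 0 < p := by positivity
  obtain ⟨w, hwK, hw⟩ := exists_norm_le_of_isClosed_convex hne hclosed hconv
  refine ⟨w, hwK, fun k hk => ?_⟩
  rw [lintegral_enorm_rpow_eq_enorm_rpow hp0, lintegral_enorm_rpow_eq_enorm_rpow hp0]
  exact ENNReal.rpow_le_rpow (enorm_le_iff_norm_le.2 (hw k hk)) hp0.le

lemma memLp_coe_of_lintegral_rpow_ne_top (hp : 0 < p) {f : α → ℝ≥0} (hf : Measurable f)
    (hfp : ∫⁻ x, (f x : ℝ≥0∞) ^ p ∂μ ≠ ⊤) :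
    MemLp (fun x => (f x : ℝ)) (ENNReal.ofReal p) μ := by
  refine ⟨by fun_prop, ?_⟩
  rw [eLpNorm_lt_top_iff_lintegral_rpow_enorm_lt_top (by simpa using hp) ENNReal.ofReal_ne_top,
    ENNReal.toReal_ofReal hp.le]
  simpa using hfp.lt_top

theorem exists_extremal_function (hp : p.HolderConjugate p') {F : Set (α → ℝ≥0)} (hne : F.Nonempty)
    (hmeas : ∀ f ∈ F, Measurable f) (hfin : ∀ f ∈ F, ∫⁻ x, (f x : ℝ≥0∞) ^ p ∂μ ≠ ⊤)
    (hF : ∀ f ∈ F, ∀ g ∈ F, ∀ a b : ℝ≥0, a + b = 1 → ∃ k ∈ F, ∀ x, k x ≤ a * f x + b * g x) :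
    ∃ u : α → ℝ≥0, Measurable u ∧
      ∫⁻ x, (u x : ℝ≥0∞) ^ p ∂μ = ⨅ f ∈ F, ∫⁻ x, (f x : ℝ≥0∞) ^ p ∂μ ∧
      ∀ f ∈ F, ∫⁻ x, (u x : ℝ≥0∞) ^ p ∂μ ≤ ∫⁻ x, (u x : ℝ≥0∞) ^ (p - 1) * f x ∂μ := by
  have : Fact (1 ≤ ENNReal.ofReal p) := ⟨by simpa using hp.lt.le⟩
  have hLp (f : α → ℝ≥0) (hf : f ∈ F) : ∃ k ∈ lpMajorants μ p F, ∀ᵐ x ∂μ, k x = f x :=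
    have hf' := memLp_coe_of_lintegral_rpow_ne_top hp.pos (hmeas f hf) (hfin f hf)
    ⟨hf'.toLp, ⟨f, hf, hf'.coeFn_toLp.mono fun x hx => hx.ge⟩, hf'.coeFn_toLp⟩
  have hconv := (convex_lpMajorants (μ := μ) (p := p) hF).closure
  obtain ⟨w, hw, hwmin⟩ := exists_minimizer_lintegral_rpow hp.lt
    (hne.elim fun f hf => (hLp f hf).imp fun k hk => subset_closure hk.1) isClosed_closure hconv
  have hwle (f : α → ℝ≥0) (hf : f ∈ F) (a b : ℝ≥0) (hab : a + b = 1) :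
      ∫⁻ x, ‖w x‖ₑ ^ p ∂μ ≤ ∫⁻ x, (a * ‖w x‖₊ + b * f x : ℝ≥0∞) ^ p ∂μ := by
    obtain ⟨k, hk, hkf⟩ := hLp f hf
    refine (hwmin _ (hconv hw (subset_closure hk) a.coe_nonneg b.coe_nonneg
      (by exact_mod_cast hab))).trans (lintegral_mono_ae ?_)
    filter_upwards [hkf, Lp.coeFn_add ((a : ℝ) • w) ((b : ℝ) • k),
      Lp.coeFn_smul (a : ℝ) w, Lp.coeFn_smul (b : ℝ) k] with x hx hadd hsmul₁ hsmul₂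
    rw [hadd, Pi.add_apply, hsmul₁, hsmul₂, Pi.smul_apply, Pi.smul_apply, hx]
    refine ENNReal.rpow_le_rpow ((enorm_add_le _ _).trans_eq ?_) hp.nonneg
    simp [enorm_eq_nnnorm]
  have hwF (f : α → ℝ≥0) (hf : f ∈ F) :
      ∫⁻ x, ‖w x‖ₑ ^ p ∂μ ≤ ∫⁻ x, (f x : ℝ≥0∞) ^ p ∂μ := by
    simpa using hwle f hf 0 1 (zero_add 1)
  have hwm : Measurable fun x => ‖w x‖₊ := (Lp.stronglyMeasurable w).measurable.nnnorm
  refine ⟨fun x => ‖w x‖₊, hwm, ?_, fun f hf => ?_⟩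
  · exact (le_iInf₂ hwF).antisymm (iInf_lintegral_rpow_le_of_mem_closure hp.pos hw)
  · exact lintegral_rpow_le_of_forall_convexCombination hp hwm (hmeas f hf)
      (ne_top_of_le_ne_top (hfin f hf) (hwF f hf)) (hfin f hf) (hwle f hf)

end Extremal

/-! ### The relative isoperimetric inequality -/

section Cover

variable {T : Type*} [MetricSpace T] {d δ : ℝ} {η : ℝ≥0∞}

lemma exists_cover_tsum_lt [MeasurableSpace T] [BorelSpace T] {Q : Set T} (hQ : μH[d] Q ≠ ⊤)
    (hδ : 0 < δ) (hη : η ≠ 0) :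
    ∃ t : ℕ → Set T, Q ⊆ ⋃ n, t n ∧ (∀ n, ediam (t n) ≤ ENNReal.ofReal δ) ∧
      ∑' n, ⨆ _ : (t n).Nonempty, ediam (t n) ^ d < μH[d] Q + η := by
  have h : ⨅ (t : ℕ → Set T) (_ : Q ⊆ ⋃ n, t n) (_ : ∀ n, ediam (t n) ≤ ENNReal.ofReal δ),
      ∑' n, ⨆ _ : (t n).Nonempty, ediam (t n) ^ d ≤ μH[d] Q := by
    rw [Measure.hausdorffMeasure_apply]
    exact le_iSup₂ (f := fun (r : ℝ≥0∞) (_ : 0 < r) => ⨅ (t : ℕ → Set T) (_ : Q ⊆ ⋃ n, t n)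
      (_ : ∀ n, ediam (t n) ≤ r), ∑' n, ⨆ _ : (t n).Nonempty, ediam (t n) ^ d)
      (ENNReal.ofReal δ) (ENNReal.ofReal_pos.2 hδ)
  simpa only [iInf_lt_iff, exists_prop] using h.trans_lt (ENNReal.lt_add_right hQ hη)

lemma exists_radius_of_ediam_lt (hd : 0 ≤ d) {S : Set T} (hS : ediam S < ENNReal.ofReal δ)
    (hη : η ≠ 0) :
    ∃ r < δ, ediam S < ENNReal.ofReal r ∧ ENNReal.ofReal (r ^ d) ≤ ediam S ^ d + η := by
  have hlt : ediam S ^ d < ediam S ^ d + η :=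
    ENNReal.lt_add_right (ENNReal.rpow_ne_top_of_nonneg hd hS.ne_top) hη
  have hcont : Tendsto (fun r : ℝ≥0∞ => r ^ d) (𝓝[>] ediam S) (𝓝 (ediam S ^ d)) :=
    ((ENNReal.continuous_rpow_const).tendsto _).mono_left nhdsWithin_le_nhds
  have : (𝓝[>] ediam S).NeBot := nhdsGT_neBot_of_exists_gt ⟨_, hS⟩
  obtain ⟨r, ⟨hSr, hrδ⟩, hr⟩ := ((eventually_mem_set.2 (Ioo_mem_nhdsGT hS)).and
    (hcont.eventually (gt_mem_nhds hlt))).exists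
  lift r to ℝ≥0 using hrδ.ne_top
  refine ⟨r, by simpa using (ENNReal.lt_ofReal_iff_toReal_lt ENNReal.coe_ne_top).1 hrδ, by simpa,
    le_of_eq_of_le ?_ hr.le⟩
  rw [← ENNReal.ofReal_rpow_of_nonneg r.coe_nonneg hd, ENNReal.ofReal_coe_nnreal]

lemma exists_finite_cover [MeasurableSpace T] [BorelSpace T] [Nonempty T] (hd : 0 ≤ d) {Q : Set T}
    (hQ : IsCompact Q) (hfin : μH[d] Q ≠ ⊤) (hδ : 0 < δ) (hη : η ≠ 0) :
    ∃ (s : Finset ℕ) (z : ℕ → T) (r : ℕ → ℝ), (∀ i ∈ s, 0 < r i ∧ r i < δ) ∧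
      Q ⊆ ⋃ i ∈ s, ball (z i) (r i) ∧ ∑ i ∈ s, ENNReal.ofReal (r i ^ d) ≤ μH[d] Q + η := by
  obtain ⟨e, he, hesum⟩ := ENNReal.exists_pos_sum_of_countable' (ENNReal.half_pos hη).ne' ℕ
  obtain ⟨t, htQ, htδ, hsum⟩ := exists_cover_tsum_lt hfin (half_pos hδ) (ENNReal.half_pos hη).ne'
  have htδ' (n) : ediam (t n) < ENNReal.ofReal δ :=
    (htδ n).trans_lt ((ENNReal.ofReal_lt_ofReal_iff hδ).2 (half_lt_self hδ))
  choose r hrδ htr hr using fun n => exists_radius_of_ediam_lt hd (htδ' n) (he n).ne'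
  choose! z hz using show ∀ n, (t n).Nonempty → ∃ x, x ∈ t n from fun n h => h
  have hcov : Q ⊆ ⋃ n ∈ {n : ℕ | (t n).Nonempty}, ball (z n) (r n) := by
    intro x hx
    obtain ⟨n, hn⟩ := mem_iUnion.1 (htQ hx)
    refine mem_iUnion₂.2 ⟨n, ⟨x, hn⟩, mem_ball.2 (edist_lt_ofReal.1 ?_)⟩
    exact (edist_le_ediam_of_mem hn (hz n ⟨x, hn⟩)).trans_lt (htr n)
  obtain ⟨b, hb, hbfin, hbQ⟩ := hQ.elim_finite_subcover_image (fun n _ => isOpen_ball) hcov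
  refine ⟨hbfin.toFinset, z, r,
    fun i _ => ⟨ENNReal.ofReal_pos.1 (zero_le.trans_lt (htr i)), hrδ i⟩, by simpa using hbQ, ?_⟩
  calc ∑ i ∈ hbfin.toFinset, ENNReal.ofReal (r i ^ d)
      ≤ ∑ i ∈ hbfin.toFinset, ((⨆ _ : (t i).Nonempty, ediam (t i) ^ d) + e i) := by
        refine Finset.sum_le_sum fun i hi => (hr i).trans_eq ?_
        rw [ciSup_pos (show (t i).Nonempty from hb (hbfin.mem_toFinset.1 hi))]
    _ ≤ ∑' i, ((⨆ _ : (t i).Nonempty, ediam (t i) ^ d) + e i) := ENNReal.sum_le_tsum _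
    _ = (∑' i, ⨆ _ : (t i).Nonempty, ediam (t i) ^ d) + ∑' i, e i := ENNReal.tsum_add
    _ ≤ (μH[d] Q + η / 2) + η / 2 := add_le_add hsum.le hesum.le
    _ = μH[d] Q + η := by rw [add_assoc, ENNReal.add_halves]

end Cover

section UpperGradient

variable {T : Type*} [PseudoMetricSpace T] {u : T → ℝ} {ρ : T → ℝ≥0∞}

/-- The restriction of a path to a subinterval of its parameter interval. -/
def UPath.restrict (γ : UPath T) {s t : ℝ} (hst : s ≤ t) (hs : γ.a ≤ s) (ht : t ≤ γ.b) :
    UPath T where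
  a := s
  b := t
  hab := hst
  toFun := γ.toFun
  lip := γ.lip.mono (Icc_subset_Icc hs ht)

lemma IsUpperGradient.edist_le (hu : IsUpperGradient u ρ) (γ : UPath T) {s t : ℝ}
    (hs : s ∈ Icc γ.a γ.b) (ht : t ∈ Icc γ.a γ.b) :
    edist (u (γ.toFun s)) (u (γ.toFun t)) ≤ γ.integral ρ := by
  wlog hst : s ≤ t generalizing s t
  · rw [edist_comm]
    exact this ht hs (le_of_not_ge hst)
  · exact (hu (γ.restrict hst hs.1 ht.2)).trans (lintegral_mono_set (Icc_subset_Icc hs.1 ht.2))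

lemma IsUpperGradient.lipschitzWith_one_comp {f : ℝ → ℝ} (hf : LipschitzWith 1 f)
    (hu : IsUpperGradient u ρ) : IsUpperGradient (f ∘ u) ρ := fun γ =>
  (by simpa using hf (u γ.start) (u γ.finish) : _ ≤ edist (u γ.start) (u γ.finish)).trans (hu γ)

lemma isUpperGradient_sum {ι : Type*} (s : Finset ι) {u : ι → T → ℝ} {ρ : ι → T → ℝ≥0∞}
    (hu : ∀ i ∈ s, IsUpperGradient (u i) (ρ i)) :
    IsUpperGradient (fun x => ∑ i ∈ s, u i x) fun x => ∑ i ∈ s, ρ i x := by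
  classical
  intro γ
  induction s using Finset.induction_on with
  | empty => simp
  | insert i s hi ih =>
    simp only [Finset.sum_insert hi]
    refine (edist_add_add_le _ _ _ _).trans ((add_le_add (hu i (Finset.mem_insert_self _ _) γ)
      (ih fun j hj => hu j (Finset.mem_insert_of_mem hj))).trans ?_)
    exact le_lintegral_add _ _

lemma isUpperGradient_indicator_of_lipschitzWith {K : ℝ≥0} (hu : LipschitzWith K u) {F : Set T}
    (hF : IsClosed F) (h0 : ∀ x ∉ F, u x = 0) :
    IsUpperGradient u (F.indicator fun _ => (K : ℝ≥0∞)) := by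
  intro γ
  set f : ℝ → ℝ := u ∘ γ.toFun
  set O : Set ℝ := Icc γ.a γ.b ∩ γ.toFun ⁻¹' F
  have hf : LipschitzOnWith K f (Icc γ.a γ.b) := by
    simpa using hu.lipschitzOnWith.comp γ.lip (mapsTo_univ _ _)
  have hO : MeasurableSet O :=
    (γ.lip.continuousOn.preimage_isClosed_of_isClosed isClosed_Icc hF).measurableSet
  have hvol : volume (f '' O) ≤ K * volume O := by
    simpa [hausdorffMeasure_real] using
      (hf.mono inter_subset_left).hausdorffMeasure_image_le (s := O) zero_le_one
  have hsub : uIcc (f γ.a) (f γ.b) ⊆ f '' O ∪ {0} := by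
    intro y hy
    obtain ⟨t, ht, rfl⟩ := intermediate_value_uIcc
      (hf.continuousOn.mono (uIcc_of_le γ.hab).subset) hy
    rw [uIcc_of_le γ.hab] at ht
    by_cases htF : γ.toFun t ∈ F
    · exact Or.inl ⟨t, ⟨ht, htF⟩, rfl⟩
    · exact Or.inr (h0 _ htF)
  calc edist (f γ.a) (f γ.b) = volume (uIcc (f γ.a) (f γ.b)) := by
        rw [Real.volume_interval, edist_dist, Real.dist_eq, abs_sub_comm]
    _ ≤ volume (f '' O) + volume {(0 : ℝ)} := (measure_mono hsub).trans (measure_union_le _ _)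
    _ ≤ K * volume O := by simpa using hvol
    _ = ∫⁻ t in O, F.indicator (fun _ => (K : ℝ≥0∞)) (γ.toFun t) := by
        rw [← setLIntegral_const]
        exact setLIntegral_congr_fun hO fun t ht =>
          (indicator_of_mem (show γ.toFun t ∈ F from ht.2) fun _ => (K : ℝ≥0∞)).symm
    _ ≤ _ := lintegral_mono_set inter_subset_left

lemma UPath.integral_eq_top_of_notMem {F : Set T} (hF : IsClosed F) (hρ : ∀ x ∉ F, ρ x = ⊤)
    (γ : UPath T) (hab : γ.a < γ.b) {t : ℝ} (ht : t ∈ Icc γ.a γ.b) (htF : γ.toFun t ∉ F) :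
    γ.integral ρ = ⊤ := by
  set V : Set ℝ := (Icc γ.a γ.b ∩ γ.toFun ⁻¹' F)ᶜ
  have hVo : IsOpen V :=
    (γ.lip.continuousOn.preimage_isClosed_of_isClosed isClosed_Icc hF).isOpen_compl
  have hne : (V ∩ Ioo γ.a γ.b).Nonempty :=
    mem_closure_iff.1 (by rwa [closure_Ioo hab.ne]) V hVo fun h => htF h.2
  have hpos : 0 < volume (V ∩ Ioo γ.a γ.b) := (hVo.inter isOpen_Ioo).measure_pos _ hne
  have hsub : V ∩ Ioo γ.a γ.b ⊆ Icc γ.a γ.b := inter_subset_right.trans Ioo_subset_Icc_self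
  refine top_unique ?_
  calc ⊤ = ∫⁻ _ in V ∩ Ioo γ.a γ.b, (⊤ : ℝ≥0∞) := by
        rw [setLIntegral_const, ENNReal.top_mul hpos.ne']
    _ = ∫⁻ τ in V ∩ Ioo γ.a γ.b, ρ (γ.toFun τ) :=
        setLIntegral_congr_fun (hVo.inter isOpen_Ioo).measurableSet fun τ hτ =>
          (hρ _ fun h => hτ.1 ⟨hsub hτ, h⟩).symm
    _ ≤ _ := lintegral_mono_set hsub

open scoped Classical in
/- A path in `F` joining `{0 < g}` to its complement meets the zero set of `g`, where `v` takes
the same value `1` as on `{0 < g}`. -/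
lemma isUpperGradient_piecewise {F : Set T} (hF : IsClosed F) {g : T → ℝ} (hg : ContinuousOn g F)
    {v : T → ℝ} (hv : IsUpperGradient v ρ) (hv1 : ∀ x ∈ F, g x = 0 → v x = 1) :
    IsUpperGradient (fun x => if 0 < g x then 1 else v x) fun x => if x ∈ F then ρ x else ⊤ := by
  intro γ
  rcases γ.hab.eq_or_lt with hab | hab
  · rw [UPath.start, UPath.finish, hab, edist_self]
    exact zero_le
  by_cases hin : ∀ t ∈ Icc γ.a γ.b, γ.toFun t ∈ F
  swap
  · push Not at hin
    obtain ⟨t, ht, htF⟩ := hin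
    rw [γ.integral_eq_top_of_notMem hF (fun x hx => by simp [hx]) hab ht htF]
    exact le_top
  have ha : γ.a ∈ Icc γ.a γ.b := left_mem_Icc.2 γ.hab
  have hb : γ.b ∈ Icc γ.a γ.b := right_mem_Icc.2 γ.hab
  have hvle {s t : ℝ} (hs : s ∈ Icc γ.a γ.b) (ht : t ∈ Icc γ.a γ.b) :
      edist (v (γ.toFun s)) (v (γ.toFun t)) ≤ γ.integral fun x => if x ∈ F then ρ x else ⊤ :=
    (hv.edist_le γ hs ht).trans (lintegral_mono fun t => by
      by_cases h : γ.toFun t ∈ F <;> simp [h])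
  have hgc : ContinuousOn (fun t => g (γ.toFun t)) (Icc γ.a γ.b) :=
    hg.comp γ.lip.continuousOn hin
  by_cases h1 : 0 < g γ.start <;> by_cases h2 : 0 < g γ.finish <;>
    simp only [h1, h2, if_true, if_false]
  · simp
  · obtain ⟨t, ht, h0⟩ := intermediate_value_Icc' γ.hab hgc ⟨not_lt.1 h2, h1.le⟩
    rw [← hv1 _ (hin t ht) h0]
    exact hvle ht hb
  · obtain ⟨t, ht, h0⟩ := intermediate_value_Icc γ.hab hgc ⟨not_lt.1 h1, h2.le⟩
    rw [← hv1 _ (hin t ht) h0]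
    exact hvle ha ht
  · exact hvle ha hb

end UpperGradient

section Tent

variable {T : Type*} [PseudoMetricSpace T] {ε : ℝ} {x y : T}

/-- The tent of height `2ε` over the ball of radius `2ε` about `x`. It serves as a kernel for
mollification and as a building block for cutoff functions. -/
def tent (ε : ℝ) (x y : T) : ℝ := max 0 (2 * ε - dist x y)

lemma tent_nonneg : 0 ≤ tent ε x y := le_max_left _ _

lemma tent_le (hε : 0 ≤ ε) : tent ε x y ≤ 2 * ε :=
  max_le (by positivity) (by linarith [dist_nonneg (x := x) (y := y)])

lemma tent_eq_zero (h : 2 * ε ≤ dist x y) : tent ε x y = 0 := max_eq_left (by linarith)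

lemma le_tent (h : dist x y ≤ ε) : ε ≤ tent ε x y := le_max_of_le_right (by linarith)

lemma tent_comm : tent ε x y = tent ε y x := by rw [tent, tent, dist_comm]

lemma lipschitzWith_tent (ε : ℝ) (x : T) : LipschitzWith 1 (tent ε x) := by
  refine LipschitzWith.const_max (LipschitzWith.of_dist_le_mul fun y z => ?_) 0
  rw [NNReal.coe_one, one_mul, dist_sub_left]
  exact (LipschitzWith.dist_right x).dist_le_mul y z |>.trans_eq (by simp)

lemma abs_tent_sub_le (ε : ℝ) (x x' y : T) : |tent ε x y - tent ε x' y| ≤ dist x x' := by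
  rw [tent_comm, tent_comm (x := x'), ← Real.dist_eq]
  simpa using (lipschitzWith_tent ε y).dist_le_mul x x'

end Tent

section TentSum

variable {T ι : Type*} [PseudoMetricSpace T] {s : Finset ι} {z : ι → T} {r : ι → ℝ}

/-- A sum of tents which is at least `1` on the balls `B(zᵢ, rᵢ)` and vanishes off the balls
`B(zᵢ, 2rᵢ)`. -/
def tentSum (s : Finset ι) (z : ι → T) (r : ι → ℝ) (x : T) : ℝ :=
  ∑ i ∈ s, (r i)⁻¹ * tent (r i) (z i) x

/-- The natural upper gradient of `tentSum s z r`. -/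
def tentSumGrad (s : Finset ι) (z : ι → T) (r : ι → ℝ) (x : T) : ℝ≥0∞ :=
  ∑ i ∈ s, (closedBall (z i) (2 * r i)).indicator (fun _ => ENNReal.ofReal (r i)⁻¹) x

lemma continuous_tentSum : Continuous (tentSum s z r) :=
  continuous_finsetSum _ fun i _ => (lipschitzWith_tent (r i) (z i)).continuous.const_mul _

lemma tentSum_nonneg (hr : ∀ i ∈ s, 0 < r i) (x : T) : 0 ≤ tentSum s z r x :=
  Finset.sum_nonneg fun i hi => mul_nonneg (inv_nonneg.2 (hr i hi).le) tent_nonneg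

lemma one_le_tentSum (hr : ∀ i ∈ s, 0 < r i) {x : T} (hx : x ∈ ⋃ i ∈ s, ball (z i) (r i)) :
    1 ≤ tentSum s z r x := by
  obtain ⟨i, hi, hxi⟩ := mem_iUnion₂.1 hx
  calc 1 = (r i)⁻¹ * r i := (inv_mul_cancel₀ (hr i hi).ne').symm
    _ ≤ (r i)⁻¹ * tent (r i) (z i) x :=
        mul_le_mul_of_nonneg_left (le_tent (mem_ball'.1 hxi).le) (inv_nonneg.2 (hr i hi).le)
    _ ≤ tentSum s z r x := Finset.single_le_sum (f := fun i => (r i)⁻¹ * tent (r i) (z i) x)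
        (fun j hj => mul_nonneg (inv_nonneg.2 (hr j hj).le) tent_nonneg) hi

lemma tentSum_eq_zero {x : T} (hx : x ∉ ⋃ i ∈ s, closedBall (z i) (2 * r i)) :
    tentSum s z r x = 0 :=
  Finset.sum_eq_zero fun i hi => by
    rw [tent_eq_zero, mul_zero]
    exact le_of_not_ge fun h => hx (mem_biUnion (Finset.mem_coe.2 hi) (mem_closedBall'.2 h))

lemma isUpperGradient_tentSum (hr : ∀ i ∈ s, 0 < r i) :
    IsUpperGradient (tentSum s z r) (tentSumGrad s z r) :=
  isUpperGradient_sum s fun i hi => by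
    refine isUpperGradient_indicator_of_lipschitzWith (K := (r i)⁻¹.toNNReal)
      (LipschitzWith.of_dist_le_mul fun x y => ?_) isClosed_closedBall fun x hx => ?_
    · have := hr i hi
      rw [Real.dist_eq, ← mul_sub, abs_mul, abs_of_pos (by positivity),
        Real.coe_toNNReal _ (by positivity), ← Real.dist_eq]
      gcongr
      simpa using (lipschitzWith_tent (r i) (z i)).dist_le_mul x y
    · rw [tent_eq_zero, mul_zero]
      exact le_of_not_ge fun h => hx (mem_closedBall'.2 h)

end TentSum

section Cutoff

variable {T : Type*} [MetricSpace T] [MeasurableSpace T] {μ : Measure T} {q aA AA : ℝ}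

lemma IsAhlforsRegular.measure_closedBall_two_mul_le (hA : IsAhlforsRegular μ q aA AA) (x : T)
    {r : ℝ} (hr : 0 < r) (hrd : 4 * r < Metric.diam (univ : Set T)) :
    μ (closedBall x (2 * r)) ≤
      ENNReal.ofReal r * (ENNReal.ofReal (AA * 4 ^ q) * ENNReal.ofReal (r ^ (q - 1))) := by
  have hAA : 0 ≤ AA := hA.1.le.trans hA.2.1
  refine (hA.measure_closedBall_le x (by positivity) (by linarith)).trans_eq ?_
  rw [← ENNReal.ofReal_mul (by positivity), ← ENNReal.ofReal_mul hr.le,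
    show 2 * (2 * r) = 4 * r by ring, Real.mul_rpow (by norm_num) hr.le, Real.rpow_sub_one hr.ne']
  congr 1
  field_simp

variable {ι : Type*} {s : Finset ι} {z : ι → T} {r : ι → ℝ}

lemma IsAhlforsRegular.measure_iUnion_closedBall_le (hA : IsAhlforsRegular μ q aA AA)
    (hr : ∀ i ∈ s, 0 < r i) {δ : ℝ} (hrδ : ∀ i ∈ s, r i ≤ δ)
    (hrd : ∀ i ∈ s, 4 * r i < Metric.diam (univ : Set T)) :
    μ (⋃ i ∈ s, closedBall (z i) (2 * r i)) ≤ ENNReal.ofReal δ *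
      (ENNReal.ofReal (AA * 4 ^ q) * ∑ i ∈ s, ENNReal.ofReal (r i ^ (q - 1))) := by
  refine (measure_biUnion_finset_le _ _).trans ?_
  rw [Finset.mul_sum, Finset.mul_sum]
  refine Finset.sum_le_sum fun i hi => ?_
  refine (hA.measure_closedBall_two_mul_le (z i) (hr i hi) (hrd i hi)).trans ?_
  gcongr
  exact hrδ i hi

variable [BorelSpace T]

lemma IsAhlforsRegular.lintegral_tentSumGrad_le (hA : IsAhlforsRegular μ q aA AA)
    (hr : ∀ i ∈ s, 0 < r i) (hrd : ∀ i ∈ s, 4 * r i < Metric.diam (univ : Set T)) :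
    ∫⁻ x, tentSumGrad s z r x ∂μ ≤
      ENNReal.ofReal (AA * 4 ^ q) * ∑ i ∈ s, ENNReal.ofReal (r i ^ (q - 1)) := by
  simp only [tentSumGrad]
  rw [lintegral_finsetSum s fun i _ => measurable_const.indicator measurableSet_closedBall,
    Finset.mul_sum]
  refine Finset.sum_le_sum fun i hi => ?_
  have hinv : ENNReal.ofReal (r i)⁻¹ * ENNReal.ofReal (r i) = 1 := by
    rw [← ENNReal.ofReal_mul (inv_nonneg.2 (hr i hi).le), inv_mul_cancel₀ (hr i hi).ne',
      ENNReal.ofReal_one]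
  rw [lintegral_indicator measurableSet_closedBall, setLIntegral_const]
  refine (mul_le_mul_right (hA.measure_closedBall_two_mul_le (z i) (hr i hi) (hrd i hi)) _).trans_eq
    ?_
  rw [← mul_assoc, hinv, one_mul]

lemma IsAhlforsRegular.exists_cutoff [CompactSpace T] [Nontrivial T]
    (hA : IsAhlforsRegular μ q aA AA) (hq : 1 ≤ q) {Q : Set T} (hQ : IsCompact Q)
    (hfin : μH[q - 1] Q ≠ ⊤) {η : ℝ≥0} (hη : 0 < η) :
    ∃ (v : T → ℝ) (ρ : T → ℝ≥0∞), Continuous v ∧ (∀ x, v x ∈ Icc 0 1) ∧ (∀ x ∈ Q, v x = 1) ∧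
      Measurable ρ ∧ IsUpperGradient v ρ ∧
      ∫⁻ x, ρ x ∂μ ≤ ENNReal.ofReal (AA * 4 ^ q) * (μH[q - 1] Q + η) ∧
      μ (Function.support v) ≤ η := by
  have hD : 0 < Metric.diam (univ : Set T) := diam_univ_pos
  obtain ⟨δ, hδ, hδη⟩ := ENNReal.exists_nnreal_pos_mul_lt
    (a := ENNReal.ofReal (AA * 4 ^ q) * (μH[q - 1] Q + η)) (b := η)
    (ENNReal.mul_ne_top ENNReal.ofReal_ne_top (by simp [hfin])) (by positivity)
  obtain ⟨s, z, r, hr, hcov, hsum⟩ := exists_finite_cover (sub_nonneg.2 hq) hQ hfin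
    (δ := min δ (Metric.diam (univ : Set T) / 4)) (by positivity) (η := η) (by positivity)
  have hr0 : ∀ i ∈ s, 0 < r i := fun i hi => (hr i hi).1
  have hrδ : ∀ i ∈ s, r i ≤ δ := fun i hi => ((hr i hi).2.trans_le (min_le_left _ _)).le
  have hrd : ∀ i ∈ s, 4 * r i < Metric.diam (univ : Set T) := fun i hi => by
    linarith [(hr i hi).2.trans_le (min_le_right _ _)]
  refine ⟨fun x => min 1 (tentSum s z r x), tentSumGrad s z r,
    continuous_const.min continuous_tentSum,
    fun x => ⟨le_min zero_le_one (tentSum_nonneg hr0 x), min_le_left _ _⟩,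
    fun x hx => min_eq_left (one_le_tentSum hr0 (hcov hx)),
    Finset.measurable_fun_sum s fun i _ => measurable_const.indicator measurableSet_closedBall,
    (isUpperGradient_tentSum hr0).lipschitzWith_one_comp (LipschitzWith.id.const_min 1),
    (hA.lintegral_tentSumGrad_le hr0 hrd).trans (by gcongr), ?_⟩
  have hsupp : Function.support (fun x => min 1 (tentSum s z r x)) ⊆
      ⋃ i ∈ s, closedBall (z i) (2 * r i) := fun x hx => by
    by_contra hx'
    exact hx (by simp [tentSum_eq_zero hx'])
  calc μ (Function.support fun x => min 1 (tentSum s z r x))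
      ≤ ENNReal.ofReal δ *
        (ENNReal.ofReal (AA * 4 ^ q) * ∑ i ∈ s, ENNReal.ofReal (r i ^ (q - 1))) :=
        (measure_mono hsupp).trans (hA.measure_iUnion_closedBall_le hr0 hrδ hrd)
    _ ≤ δ * (ENNReal.ofReal (AA * 4 ^ q) * (μH[q - 1] Q + η)) := by
        rw [ENNReal.ofReal_coe_nnreal]
        gcongr
    _ ≤ η := hδη.le

end Cutoff

section Isoperimetric

variable {T : Type*} [MetricSpace T] [MeasurableSpace T] {μ : Measure T} {q aA AA CP lP : ℝ}

/-- The constant of the Poincaré inequality after clearing the ratio of the measures of the two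
balls by Ahlfors regularity. The absolute value keeps it nonnegative for all values of `lP`. -/
def poincareConst (q aA AA CP lP : ℝ) : ℝ := 2 * max CP 0 * (AA / (aA * |lP| ^ q))

/-- The constant of the relative isoperimetric inequality. -/
def isoConst (q aA AA CP lP : ℝ) : ℝ := poincareConst q aA AA CP lP * (AA * 4 ^ q)

lemma poincareConst_nonneg (ha : 0 < aA) (hA : aA ≤ AA) : 0 ≤ poincareConst q aA AA CP lP := by
  have : 0 ≤ AA := ha.le.trans hA
  unfold poincareConst
  positivity

lemma isoConst_nonneg (ha : 0 < aA) (hA : aA ≤ AA) : 0 ≤ isoConst q aA AA CP lP :=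
  mul_nonneg (poincareConst_nonneg ha hA) (mul_nonneg (ha.le.trans hA) (by positivity))

lemma SupportsPoincare.lintegral_sub_average_le (hP : SupportsPoincare μ CP lP)
    (hA : IsAhlforsRegular μ q aA AA) {u : T → ℝ} {ρ : T → ℝ≥0∞} (hu : LocallyIntegrable u μ)
    (hρ : Measurable ρ) (hug : IsUpperGradient u ρ) (x : T) {r : ℝ} (hr : 0 < r)
    (hrd : max lP 1 * r < Metric.diam (univ : Set T)) :
    ∫⁻ y in ball x r, ENNReal.ofReal |u y - ⨍ z in ball x r, u z ∂μ| ∂μ ≤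
      ENNReal.ofReal (poincareConst q aA AA CP lP * r) * ∫⁻ y in ball x (lP * r), ρ y ∂μ := by
  have ha : 0 < aA := hA.1
  have hAA : 0 < AA := ha.trans_le hA.2.1
  obtain ⟨hB0, hBtop⟩ := hP.1 x r hr
  have h := hP.2 u ρ hu hρ hug x r hr
  rw [ENNReal.div_le_iff hB0.ne' hBtop.ne] at h
  refine h.trans ?_
  rcases le_or_gt lP 0 with hl | hl
  · simp [ball_eq_empty.2 (mul_nonpos_of_nonpos_of_nonneg hl hr.le)]
  have hdiam : ENNReal.ofReal (CP * Metric.diam (ball x r)) ≤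
      ENNReal.ofReal (max CP 0 * (2 * r)) :=
    ENNReal.ofReal_le_ofReal
      (mul_le_mul (le_max_left _ _) (diam_ball hr.le) diam_nonneg (le_max_right _ _))
  have hinv : (μ (ball x (lP * r)))⁻¹ ≤ ENNReal.ofReal (aA * (lP * r) ^ q)⁻¹ := by
    rw [ENNReal.ofReal_inv_of_pos (by positivity)]
    exact ENNReal.inv_le_inv.2 (hA.2.2 x _ (by positivity)
      (lt_of_le_of_lt (by gcongr; exact le_max_left _ _) hrd)).1
  have hball : μ (ball x r) ≤ ENNReal.ofReal (AA * r ^ q) :=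
    (hA.2.2 x r hr (lt_of_le_of_lt (by nlinarith [le_max_right lP 1]) hrd)).2
  calc ENNReal.ofReal (CP * Metric.diam (ball x r)) *
        ((∫⁻ y in ball x (lP * r), ρ y ∂μ) / μ (ball x (lP * r))) * μ (ball x r)
      ≤ ENNReal.ofReal (max CP 0 * (2 * r)) *
        ((∫⁻ y in ball x (lP * r), ρ y ∂μ) * ENNReal.ofReal (aA * (lP * r) ^ q)⁻¹) *
        ENNReal.ofReal (AA * r ^ q) := by
        rw [div_eq_mul_inv]
        gcongr
    _ = ENNReal.ofReal (max CP 0 * (2 * r)) * ENNReal.ofReal (aA * (lP * r) ^ q)⁻¹ *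
        ENNReal.ofReal (AA * r ^ q) * ∫⁻ y in ball x (lP * r), ρ y ∂μ := by ring
    _ = _ := by
        rw [← ENNReal.ofReal_mul (by positivity), ← ENNReal.ofReal_mul (by positivity),
          poincareConst, abs_of_pos hl, Real.mul_rpow hl.le hr.le]
        congr 2
        field_simp

lemma enorm_ite_sub_le (P : Prop) [Decidable P] {t : ℝ} (ht : t ∈ Icc 0 1) (c : ℝ) :
    ‖(if P then 1 else 0) - c‖ₑ ≤
      ENNReal.ofReal |(if P then 1 else t) - c| + if t ≠ 0 then 1 else 0 := by
  rw [← Real.enorm_eq_ofReal_abs]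
  by_cases hP : P
  · simp [hP]
  by_cases h0 : t = 0
  · simp [h0]
  simp only [hP, if_false, ne_eq, h0, not_false_eq_true, if_true]
  have ht1 : ‖-t‖ₑ ≤ 1 := by
    rw [enorm_neg, Real.enorm_eq_ofReal ht.1]
    exact ENNReal.ofReal_le_one.2 ht.2
  calc ‖0 - c‖ₑ = ‖t - c + -t‖ₑ := by ring_nf
    _ ≤ ‖t - c‖ₑ + 1 := (enorm_add_le _ _).trans (by gcongr)

variable [BorelSpace T] [CompactSpace T] {g : T → ℝ} {x : T} {r : ℝ}

/- The Poincaré inequality is applied to the characteristic function of `{0 < g}`, modified where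
the cutoff function `v` does not vanish. -/
lemma SupportsPoincare.iInf_lintegral_enorm_sub_le_of_cutoff (hP : SupportsPoincare μ CP lP)
    (hA : IsAhlforsRegular μ q aA AA) (hgm : Measurable g)
    (hg : ContinuousOn g (closedBall x (max lP 1 * r))) (hr : 0 < r)
    (hrd : max lP 1 * r < Metric.diam (univ : Set T)) {v : T → ℝ} {ρ : T → ℝ≥0∞}
    (hv : Continuous v) (hv01 : ∀ y, v y ∈ Icc 0 1)
    (hv1 : ∀ y ∈ closedBall x (max lP 1 * r), g y = 0 → v y = 1) (hρ : Measurable ρ)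
    (hvρ : IsUpperGradient v ρ) :
    ⨅ c : ℝ, ∫⁻ y in ball x r, ‖(if 0 < g y then 1 else 0) - c‖ₑ ∂μ ≤
      ENNReal.ofReal (poincareConst q aA AA CP lP * r) * ∫⁻ y, ρ y ∂μ +
        μ (Function.support v) := by
  classical
  have : IsFiniteMeasure μ := hP.isFiniteMeasure
  have hsm : MeasurableSet {y | v y ≠ 0} := hv.isOpen_support.measurableSet
  let u : T → ℝ := fun y => if 0 < g y then 1 else v y
  have hu : Integrable u μ := by
    refine Integrable.of_bound (Measurable.ite (measurableSet_lt measurable_const hgm)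
      measurable_const hv.measurable).aestronglyMeasurable 1 (ae_of_all _ fun y => ?_)
    simp only [u]
    split_ifs
    · simp
    · simpa [abs_of_nonneg (hv01 y).1] using (hv01 y).2
  have hρK : Measurable fun y => if y ∈ closedBall x (max lP 1 * r) then ρ y else ⊤ :=
    hρ.ite measurableSet_closedBall measurable_const
  have hsub : ball x (lP * r) ⊆ closedBall x (max lP 1 * r) :=
    ball_subset_closedBall.trans (closedBall_subset_closedBall (by gcongr; exact le_max_left _ _))
  have hpoincare := hP.lintegral_sub_average_le hA hu.locallyIntegrable hρK
    (isUpperGradient_piecewise isClosed_closedBall hg hvρ hv1) x hr hrd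
  rw [setLIntegral_congr_fun measurableSet_ball fun y hy => if_pos (hsub hy)] at hpoincare
  refine iInf_le_of_le (⨍ y in ball x r, u y ∂μ) ?_
  refine (lintegral_mono fun y => enorm_ite_sub_le (0 < g y) (hv01 y) _).trans ?_
  rw [lintegral_add_right _ (measurable_const.ite hsm measurable_const)]
  refine add_le_add (hpoincare.trans ?_) ((setLIntegral_le_lintegral _ _).trans_eq ?_)
  · gcongr
    exact Measure.restrict_le_self
  · simpa [indicator, Function.support] using lintegral_indicator_one hsm

lemma iInf_lintegral_enorm_sub_le [Nontrivial T] (hA : IsAhlforsRegular μ q aA AA)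
    (hP : SupportsPoincare μ CP lP) (hq : 1 ≤ q) (hgm : Measurable g)
    (hg : ContinuousOn g (closedBall x (max lP 1 * r))) (hr : 0 < r)
    (hrd : max lP 1 * r < Metric.diam (univ : Set T))
    (hfin : μH[q - 1] (closedBall x (max lP 1 * r) ∩ g ⁻¹' {0}) ≠ ⊤) :
    ⨅ c : ℝ, ∫⁻ y in ball x r, ‖(if 0 < g y then 1 else 0) - c‖ₑ ∂μ ≤
      ENNReal.ofReal (isoConst q aA AA CP lP * r) *
        μH[q - 1] (closedBall x (max lP 1 * r) ∩ g ⁻¹' {0}) := by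
  have : IsFiniteMeasure μ := hP.isFiniteMeasure
  set Q := closedBall x (max lP 1 * r) ∩ g ⁻¹' {0}
  have hQ : IsCompact Q :=
    (hg.preimage_isClosed_of_isClosed isClosed_closedBall isClosed_singleton).isCompact
  have hconst : ENNReal.ofReal (isoConst q aA AA CP lP * r) =
      ENNReal.ofReal (poincareConst q aA AA CP lP * r) * ENNReal.ofReal (AA * 4 ^ q) := by
    have := poincareConst_nonneg (q := q) (CP := CP) (lP := lP) hA.1 hA.2.1
    rw [← ENNReal.ofReal_mul (by positivity), isoConst, mul_right_comm]
  refine le_of_forall_pos_le_add_mul (c := ENNReal.ofReal (isoConst q aA AA CP lP * r) + 1)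
    (by finiteness) fun η hη => ?_
  obtain ⟨v, ρ, hv, hv01, hvQ, hρ, hvρ, hρint, hvsupp⟩ := hA.exists_cutoff hq hQ hfin hη
  calc ⨅ c : ℝ, ∫⁻ y in ball x r, ‖(if 0 < g y then 1 else 0) - c‖ₑ ∂μ
      ≤ ENNReal.ofReal (poincareConst q aA AA CP lP * r) * ∫⁻ y, ρ y ∂μ +
          μ (Function.support v) :=
        hP.iInf_lintegral_enorm_sub_le_of_cutoff hA hgm hg hr hrd hv hv01
          (fun y hy h0 => hvQ y ⟨hy, h0⟩) hρ hvρ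
    _ ≤ ENNReal.ofReal (poincareConst q aA AA CP lP * r) *
          (ENNReal.ofReal (AA * 4 ^ q) * (μH[q - 1] Q + η)) + η := by gcongr
    _ = _ := by
        rw [hconst]
        ring

end Isoperimetric

/-! ### Mollification -/

section Averages

variable {α : Type*} [MeasurableSpace α] {μ : Measure α} [IsFiniteMeasure μ] {f : α → ℝ} {B : Set α}

lemma abs_integral_mul_sub_le {k : α → ℝ} (hf : Integrable f μ) {b : ℝ}
    (hk : ∀ y, |k y| ≤ b) (hkB : ∀ y ∉ B, k y = 0) (c : ℝ) :
    |∫ y, k y * (f y - c) ∂μ| ≤ b * ∫ y in B, |f y - c| ∂μ := by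
  rw [← setIntegral_eq_integral_of_forall_compl_eq_zero (s := B)
    fun y hy => by rw [hkB y hy, zero_mul], ← integral_const_mul]
  refine norm_integral_le_of_norm_le (f := fun y => k y * (f y - c))
    ((hf.sub (integrable_const c)).abs.integrableOn.const_mul b) (ae_of_all _ fun y => ?_)
  rw [Real.norm_eq_abs, abs_mul]
  exact mul_le_mul_of_nonneg_right (hk y) (abs_nonneg _)

lemma setIntegral_abs_sub_le (hf : Integrable f μ) (m c : ℝ) :
    ∫ y in B, |f y - m| ∂μ ≤ ∫ y in B, |f y - c| ∂μ + μ.real B * |m - c| := by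
  have hfc : IntegrableOn (fun y => |f y - c|) B μ := (hf.sub (integrable_const c)).abs.integrableOn
  calc ∫ y in B, |f y - m| ∂μ ≤ ∫ y in B, (|f y - c| + |m - c|) ∂μ :=
        integral_mono (hf.sub (integrable_const m)).abs.integrableOn
          (hfc.add (integrable_const _)) fun y => by
            rw [abs_sub_comm m]
            exact abs_sub_le _ _ _
    _ = ∫ y in B, |f y - c| ∂μ + μ.real B * |m - c| := by
        rw [integral_add hfc (integrable_const _), setIntegral_const, smul_eq_mul]

end Averages

section Mollify

variable {T : Type*} [MeasurableSpace T] [PseudoMetricSpace T] {μ : Measure T} {ε : ℝ}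
  {f g : T → ℝ} {x : T}

/-- The averages of `f` against the tent kernel at scale `ε`. -/
def mollify (μ : Measure T) (ε : ℝ) (f : T → ℝ) (x : T) : ℝ :=
  (∫ y, tent ε x y * f y ∂μ) / ∫ y, tent ε x y ∂μ

variable [OpensMeasurableSpace T]

lemma integrable_tent_mul (hε : 0 ≤ ε) (x : T) (hf : Integrable f μ) :
    Integrable (fun y => tent ε x y * f y) μ :=
  hf.bdd_mul (c := 2 * ε) (lipschitzWith_tent ε x).continuous.aestronglyMeasurable
    (ae_of_all _ fun y => by
      rw [Real.norm_eq_abs, abs_of_nonneg tent_nonneg]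
      exact tent_le hε)

variable [IsFiniteMeasure μ]

lemma integrable_tent (hε : 0 ≤ ε) (x : T) : Integrable (tent ε x) μ := by
  simpa using integrable_tent_mul hε x (integrable_const (μ := μ) (1 : ℝ))

lemma mollify_sub_const (hε : 0 ≤ ε) (hf : Integrable f μ) (hx : 0 < ∫ y, tent ε x y ∂μ) (c : ℝ) :
    mollify μ ε f x - c = (∫ y, tent ε x y * (f y - c) ∂μ) / ∫ y, tent ε x y ∂μ := by
  simp only [mul_sub]
  rw [integral_sub (integrable_tent_mul hε x hf) ((integrable_tent hε x).mul_const c),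
    integral_mul_const, sub_div, mul_div_cancel_left₀ _ hx.ne', mollify]

lemma integral_tent_mul_sub_mollify (hε : 0 ≤ ε) (hf : Integrable f μ)
    (hx : 0 < ∫ y, tent ε x y ∂μ) : ∫ y, tent ε x y * (f y - mollify μ ε f x) ∂μ = 0 := by
  have h := mollify_sub_const hε hf hx (mollify μ ε f x)
  rw [sub_self, eq_comm, div_eq_zero_iff] at h
  exact h.resolve_right hx.ne'

lemma mollify_congr_add_const (hε : 0 ≤ ε) (hf : Integrable f μ) (hg : Integrable g μ)
    (hx : 0 < ∫ y, tent ε x y ∂μ) {c : ℝ} (h : ∀ y, dist x y < 2 * ε → f y = g y + c) :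
    mollify μ ε f x = mollify μ ε g x + c := by
  have hfg (y : T) : tent ε x y * (f y - (mollify μ ε g x + c)) =
      tent ε x y * (g y - mollify μ ε g x) := by
    rcases lt_or_ge (dist x y) (2 * ε) with hy | hy
    · rw [h y hy, add_sub_add_right_eq_sub]
    · simp [tent_eq_zero hy]
  rw [← sub_eq_zero, mollify_sub_const hε hf hx, funext hfg, integral_tent_mul_sub_mollify hε hg hx,
    zero_div]

variable {B : Set T} {n : ℝ}

lemma abs_mollify_sub_const_le (hε : 0 ≤ ε) (hf : Integrable f μ) (hn : 0 < n)
    (hx : n ≤ ∫ y, tent ε x y ∂μ) (hB : ball x (2 * ε) ⊆ B) (c : ℝ) :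
    |mollify μ ε f x - c| ≤ 2 * ε / n * ∫ y in B, |f y - c| ∂μ := by
  have hx0 := hn.trans_le hx
  rw [mollify_sub_const hε hf hx0, abs_div, abs_of_pos hx0, div_mul_eq_mul_div]
  gcongr
  refine abs_integral_mul_sub_le hf (fun y => ?_) (fun y hy => tent_eq_zero ?_) c
  · rw [abs_of_nonneg tent_nonneg]
    exact tent_le hε
  · exact not_lt.1 fun h => hy (hB (mem_ball'.2 h))

/- Subtracting `mollify μ ε f x'` from `f` annihilates the average at `x'`, so the numerator of the
average at `x` becomes an integral against the difference of the two kernels. -/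
lemma abs_mollify_sub_mollify_le (hε : 0 ≤ ε) (hf : Integrable f μ) (hn : 0 < n) {x' : T}
    (hx : n ≤ ∫ y, tent ε x y ∂μ) (hx' : n ≤ ∫ y, tent ε x' y ∂μ) (hB : ball x (2 * ε) ⊆ B)
    (hB' : ball x' (2 * ε) ⊆ B) :
    |mollify μ ε f x - mollify μ ε f x'| ≤
      dist x x' / n * ∫ y in B, |f y - mollify μ ε f x'| ∂μ := by
  have hx0 := hn.trans_le hx
  set m := mollify μ ε f x'
  have hfm : Integrable (fun y => f y - m) μ := hf.sub (integrable_const m)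
  have hnum : ∫ y, tent ε x y * (f y - m) ∂μ = ∫ y, (tent ε x y - tent ε x' y) * (f y - m) ∂μ := by
    simp only [sub_mul]
    rw [integral_sub (integrable_tent_mul hε x hfm) (integrable_tent_mul hε x' hfm),
      integral_tent_mul_sub_mollify hε hf (hn.trans_le hx'), sub_zero]
  rw [mollify_sub_const hε hf hx0, hnum, abs_div, abs_of_pos hx0, div_mul_eq_mul_div]
  gcongr
  refine abs_integral_mul_sub_le hf (abs_tent_sub_le ε x x') (fun y hy => ?_) m
  rw [tent_eq_zero (not_lt.1 fun h => hy (hB (mem_ball'.2 h))),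
    tent_eq_zero (not_lt.1 fun h => hy (hB' (mem_ball'.2 h))), sub_zero]

end Mollify

section AhlforsRegular

variable {T : Type*} [MetricSpace T] [MeasurableSpace T] [OpensMeasurableSpace T] {μ : Measure T}
  [IsFiniteMeasure μ] {q aA AA ε : ℝ}

lemma IsAhlforsRegular.le_integral_tent (hA : IsAhlforsRegular μ q aA AA) (hε : 0 < ε)
    (hεd : ε < Metric.diam (univ : Set T)) (x : T) : aA * ε ^ (q + 1) ≤ ∫ y, tent ε x y ∂μ := by
  have hball : aA * ε ^ q ≤ μ.real (ball x ε) := by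
    have := ENNReal.toReal_mono (measure_ne_top μ _) (hA.2.2 x ε hε hεd).1
    rwa [ENNReal.toReal_ofReal (by have := hA.1; positivity)] at this
  calc aA * ε ^ (q + 1) = aA * ε ^ q * ε := by rw [Real.rpow_add_one hε.ne', mul_assoc]
    _ ≤ μ.real (ball x ε) * ε := by gcongr
    _ = ∫ _ in ball x ε, ε ∂μ := by rw [setIntegral_const, smul_eq_mul]
    _ ≤ ∫ y in ball x ε, tent ε x y ∂μ :=
        setIntegral_mono_on (integrable_const _).integrableOn (integrable_tent hε.le x).integrableOn
          measurableSet_ball fun y hy => le_tent (mem_ball'.1 hy).le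
    _ ≤ ∫ y, tent ε x y ∂μ :=
        setIntegral_le_integral (integrable_tent hε.le x) (ae_of_all _ fun y => tent_nonneg)

/-- The constant of the Lipschitz estimate for averages at unit scale. -/
def mollConst (q aA AA : ℝ) : ℝ := 1 / aA + 2 * (AA * 3 ^ q) / aA ^ 2

lemma mollConst_nonneg (ha : 0 < aA) (hA : aA ≤ AA) : 0 ≤ mollConst q aA AA := by
  have : 0 ≤ AA := ha.le.trans hA
  unfold mollConst
  positivity

lemma IsAhlforsRegular.abs_mollify_sub_mollify_le (hA : IsAhlforsRegular μ q aA AA) {f : T → ℝ}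
    (hf : Integrable f μ) (hε : 0 < ε) (hεd : 3 * ε < Metric.diam (univ : Set T)) {x x' : T}
    (hx : dist x x' < ε) (c : ℝ) :
    |mollify μ ε f x - mollify μ ε f x'| ≤
      dist x x' * (mollConst q aA AA * (ε ^ (q + 1))⁻¹ * ∫ y in ball x (3 * ε), |f y - c| ∂μ) := by
  have ha := hA.1
  have hn : 0 < aA * ε ^ (q + 1) := by positivity
  have hN := hA.le_integral_tent hε (by linarith)
  have hB : ball x (2 * ε) ⊆ ball x (3 * ε) := ball_subset_ball (by linarith)
  have hB' : ball x' (2 * ε) ⊆ ball x (3 * ε) :=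
    ball_subset_ball' (by rw [dist_comm]; linarith)
  set m := mollify μ ε f x'
  set J := ∫ y in ball x (3 * ε), |f y - c| ∂μ
  have hAA : 0 < AA := ha.trans_le hA.2.1
  have hball : μ.real (ball x (3 * ε)) ≤ AA * (3 * ε) ^ q :=
    ENNReal.toReal_le_of_le_ofReal (by positivity) (hA.2.2 x _ (by positivity) hεd).2
  have hm : |m - c| ≤ 2 * ε / (aA * ε ^ (q + 1)) * J :=
    abs_mollify_sub_const_le hε.le hf hn (hN x') hB' c
  calc |mollify μ ε f x - m|
      ≤ dist x x' / (aA * ε ^ (q + 1)) * ∫ y in ball x (3 * ε), |f y - m| ∂μ :=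
        Duality.abs_mollify_sub_mollify_le hε.le hf hn (hN x) (hN x') hB hB'
    _ ≤ dist x x' / (aA * ε ^ (q + 1)) *
        (J + AA * (3 * ε) ^ q * (2 * ε / (aA * ε ^ (q + 1)) * J)) := by
        gcongr
        exact (setIntegral_abs_sub_le hf m c).trans (by gcongr)
    _ = _ := by
        rw [mollConst, Real.mul_rpow (by norm_num) hε.le, Real.rpow_add_one hε.ne']
        have : 0 < ε ^ q := by positivity
        field_simp

end AhlforsRegular

/-! ### Mollification of circle-valued maps -/

section CircleRep

/-- The representative of a point of the circle in the interval `(a, a + 1]`. -/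
def circleRep (a : ℝ) (θ : UnitAddCircle) : ℝ := AddCircle.equivIoc 1 a θ

variable {a s t : ℝ} {θ θ' : UnitAddCircle}

lemma circleRep_mem (a : ℝ) (θ : UnitAddCircle) : circleRep a θ ∈ Ioc a (a + 1) :=
  (AddCircle.equivIoc 1 a θ).2

lemma coe_circleRep (a : ℝ) (θ : UnitAddCircle) : (circleRep a θ : UnitAddCircle) = θ :=
  AddCircle.coe_equivIoc

lemma circleRep_coe (hs : s ∈ Ioc a (a + 1)) : circleRep a s = s :=
  AddCircle.equivIoc_coe_of_mem hs

lemma measurable_circleRep (a : ℝ) : Measurable (circleRep a) :=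
  measurable_subtype_coe.comp (AddCircle.measurableEquivIoc 1 a).measurable

lemma continuousAt_circleRep (h : θ ≠ a) : ContinuousAt (circleRep a) θ :=
  continuous_subtype_val.continuousAt.comp (AddCircle.continuousAt_equivIoc 1 a h)

lemma abs_circleRep_neg_half (θ : UnitAddCircle) : |circleRep (-(1 / 2)) θ| = ‖θ‖ := by
  have h := circleRep_mem (-(1 / 2)) θ
  conv_rhs => rw [← coe_circleRep (-(1 / 2)) θ]
  refine ((AddCircle.norm_coe_eq_abs_iff 1 one_ne_zero).2 (abs_le.2 ?_)).symm
  rw [abs_one]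
  exact ⟨by linarith [h.1], by linarith [h.2]⟩

lemma circleRep_neg_half_add (h : ‖θ‖ + ‖θ'‖ < 1 / 2) :
    circleRep (-(1 / 2)) (θ + θ') = circleRep (-(1 / 2)) θ + circleRep (-(1 / 2)) θ' := by
  conv_lhs => rw [← coe_circleRep (-(1 / 2)) θ, ← coe_circleRep (-(1 / 2)) θ', ← AddCircle.coe_add]
  rw [← abs_circleRep_neg_half, ← abs_circleRep_neg_half θ'] at h
  have h' := abs_lt.1 ((abs_add_le _ _).trans_lt h)
  exact circleRep_coe ⟨by linarith, by linarith⟩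

lemma continuousAt_circleRep_neg_half (h : ‖θ‖ < 1 / 2) :
    ContinuousAt (circleRep (-(1 / 2))) θ := by
  refine continuousAt_circleRep fun he => h.ne ?_
  rw [he, (AddCircle.norm_coe_eq_abs_iff 1 one_ne_zero).2 (by norm_num)]
  norm_num

lemma circleRep_zero_coe_of_abs_lt (ht : |t| < 1) :
    circleRep 0 t = t + 1 - if 0 < t then 1 else 0 := by
  rw [abs_lt] at ht
  split_ifs with h
  · rw [circleRep_coe ⟨h, by linarith⟩]
    ring
  · rw [sub_zero, ← circleRep_coe (a := 0) (s := t + 1) ⟨by linarith, by linarith⟩,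
      AddCircle.coe_add_period]

end CircleRep

section Jump

variable {T : Type*} {φ : T → UnitAddCircle} {x x' y : T}

/-- The jump function of `φ` near `x`: the continuous lift of `φ - φ x` near `x` minus the lift of
`φ` that jumps across the level set `φ⁻¹{0}`. Near `x` it is locally constant off this set. -/
def jump (φ : T → UnitAddCircle) (x y : T) : ℝ :=
  circleRep (-(1 / 2)) (φ y - φ x) - circleRep 0 (φ y)

lemma abs_jump_le (φ : T → UnitAddCircle) (x y : T) : |jump φ x y| ≤ 2 := by
  have h := circleRep_mem (-(1 / 2)) (φ y - φ x)
  have h' := circleRep_mem 0 (φ y)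
  exact abs_le.2 ⟨by unfold jump; linarith [h.1, h'.2], by unfold jump; linarith [h.2, h'.1]⟩

lemma jump_eq_jump_add (hy : ‖φ y - φ x‖ < 1 / 4) (hx : ‖φ x - φ x'‖ < 1 / 4) :
    jump φ x' y = jump φ x y + circleRep (-(1 / 2)) (φ x - φ x') := by
  rw [jump, jump, ← sub_add_sub_cancel (φ y) (φ x), circleRep_neg_half_add (by linarith)]
  ring

lemma jump_eq_ite (h : ‖φ y - φ x‖ < 1 / 2) :
    jump φ x y =
      (if 0 < circleRep (-(1 / 2)) (φ x) + circleRep (-(1 / 2)) (φ y - φ x) then 1 else 0) -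
        (circleRep (-(1 / 2)) (φ x) + 1) := by
  have hφ : φ y = ((circleRep (-(1 / 2)) (φ x) + circleRep (-(1 / 2)) (φ y - φ x) : ℝ) :) := by
    rw [AddCircle.coe_add, coe_circleRep, coe_circleRep, add_sub_cancel]
  have habs : |circleRep (-(1 / 2)) (φ x) + circleRep (-(1 / 2)) (φ y - φ x)| < 1 := by
    refine (abs_add_le _ _).trans_lt ?_
    have := circleRep_mem (-(1 / 2)) (φ x)
    rw [abs_circleRep_neg_half (φ y - φ x)]
    linarith [abs_le.2 ⟨this.1.le, by linarith [this.2]⟩]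
  rw [jump, show circleRep 0 (φ y) = _ from
    (congrArg (circleRep 0) hφ).trans (circleRep_zero_coe_of_abs_lt habs)]
  ring

variable [TopologicalSpace T] [MeasurableSpace T] [OpensMeasurableSpace T]

lemma measurable_jump (hφ : Continuous φ) (x : T) : Measurable (jump φ x) :=
  ((measurable_circleRep _).comp (hφ.sub continuous_const).measurable).sub
    ((measurable_circleRep _).comp hφ.measurable)

lemma integrable_jump {μ : Measure T} [IsFiniteMeasure μ] (hφ : Continuous φ) (x : T) :
    Integrable (jump φ x) μ :=
  Integrable.of_bound (measurable_jump hφ x).aestronglyMeasurable 2 (ae_of_all _ (abs_jump_le φ x))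

end Jump

section CircleMollify

variable {T : Type*} [MetricSpace T] [MeasurableSpace T]

/-- The mollification at scale `ε` of a circle-valued map `φ`. If `f` is a continuous lift of `φ`
near `x`, then its value at `x` is the class of the average of the function `f - circleRep 0 ∘ φ`,
which is integer-valued and jumps only across the level set `φ⁻¹{0}`. -/
def circleMollify (μ : Measure T) (ε : ℝ) (φ : T → UnitAddCircle) (x : T) : UnitAddCircle :=
  φ x + (mollify μ ε (jump φ x) x : ℝ)

variable [OpensMeasurableSpace T] {μ : Measure T} [IsFiniteMeasure μ] {q aA AA ε : ℝ}
  {φ : T → UnitAddCircle} {x x' : T}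

lemma mollify_jump_eq_add (hφ : Continuous φ) (hε : 0 < ε) (hx' : 0 < ∫ y, tent ε x' y ∂μ)
    (hosc : ∀ x y, dist x y ≤ 3 * ε → ‖φ y - φ x‖ < 1 / 4) (hx : dist x x' < ε) :
    mollify μ ε (jump φ x') x' =
      mollify μ ε (jump φ x) x' + circleRep (-(1 / 2)) (φ x - φ x') := by
  refine mollify_congr_add_const hε.le (integrable_jump hφ x') (integrable_jump hφ x) hx'
    fun y hy => jump_eq_jump_add (hosc x y ?_) (hosc x' x ?_)
  · linarith [dist_triangle x x' y]
  · rw [dist_comm]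
    linarith

lemma circleMollify_eq_add (hφ : Continuous φ) (hε : 0 < ε) (hx' : 0 < ∫ y, tent ε x' y ∂μ)
    (hosc : ∀ x y, dist x y ≤ 3 * ε → ‖φ y - φ x‖ < 1 / 4) (hx : dist x x' < ε) :
    circleMollify μ ε φ x' = φ x + (mollify μ ε (jump φ x) x' : ℝ) := by
  rw [circleMollify, mollify_jump_eq_add hφ hε hx' hosc hx, AddCircle.coe_add, coe_circleRep]
  abel

lemma edist_circleMollify_le (hA : IsAhlforsRegular μ q aA AA) (hφ : Continuous φ) (hε : 0 < ε)
    (hεd : 3 * ε < Metric.diam (univ : Set T))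
    (hosc : ∀ x y, dist x y ≤ 3 * ε → ‖φ y - φ x‖ < 1 / 4) (hx : dist x x' < ε) (c : ℝ) :
    edist (circleMollify μ ε φ x) (circleMollify μ ε φ x') ≤
      ENNReal.ofReal (mollConst q aA AA * (ε ^ (q + 1))⁻¹) *
        (∫⁻ y in ball x (3 * ε), ‖jump φ x y - c‖ₑ ∂μ) * edist x x' := by
  have hM : 0 ≤ mollConst q aA AA := mollConst_nonneg hA.1 hA.2.1
  have hint : Integrable (jump φ x) μ := integrable_jump hφ x
  have hx' : 0 < ∫ y, tent ε x' y ∂μ :=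
    lt_of_lt_of_le (by have := hA.1; positivity) (hA.le_integral_tent hε (by linarith) x')
  have hJ : ∫⁻ y in ball x (3 * ε), ‖jump φ x y - c‖ₑ ∂μ =
      ENNReal.ofReal (∫ y in ball x (3 * ε), |jump φ x y - c| ∂μ) :=
    (ofReal_integral_norm_eq_lintegral_enorm
      (hint.sub (integrable_const c)).integrableOn).symm
  rw [circleMollify_eq_add hφ hε hx' hosc hx, circleMollify, edist_add_left, edist_dist,
    dist_eq_norm, ← AddCircle.coe_sub, hJ, edist_dist, ← ENNReal.ofReal_mul (by positivity),
    ← ENNReal.ofReal_mul (by positivity)]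
  refine ENNReal.ofReal_le_ofReal ((QuotientAddGroup.norm_mk_le_norm).trans ?_)
  rw [Real.norm_eq_abs, mul_comm _ (dist x x')]
  exact hA.abs_mollify_sub_mollify_le hint hε hεd hx c

lemma continuous_mollify_jump (hA : IsAhlforsRegular μ q aA AA) (hφ : Continuous φ) (hε : 0 < ε)
    (hεd : 3 * ε < Metric.diam (univ : Set T))
    (hosc : ∀ x y, dist x y ≤ 3 * ε → ‖φ y - φ x‖ < 1 / 4) :
    Continuous fun x => mollify μ ε (jump φ x) x := by
  have hpos (x : T) : 0 < ∫ y, tent ε x y ∂μ :=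
    lt_of_lt_of_le (by have := hA.1; positivity) (hA.le_integral_tent hε (by linarith) x)
  refine continuous_iff_continuousAt.2 fun x => ?_
  have hmoll : ContinuousAt (mollify μ ε (jump φ x)) x := by
    refine continuousAt_of_locally_lipschitz hε (mollConst q aA AA * (ε ^ (q + 1))⁻¹ *
      ∫ y in ball x (3 * ε), |jump φ x y - 0| ∂μ) fun x' hx' => ?_
    rw [dist_comm] at hx'
    rw [dist_comm, Real.dist_eq, mul_comm, dist_comm]
    exact hA.abs_mollify_sub_mollify_le (integrable_jump hφ x) hε hεd hx' 0
  have hrep : ContinuousAt (fun x' => circleRep (-(1 / 2)) (φ x - φ x')) x := by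
    refine ContinuousAt.comp (f := fun x' => φ x - φ x') ?_
      (continuous_const.sub hφ).continuousAt
    exact continuousAt_circleRep_neg_half (by simp)
  refine (hmoll.add hrep).congr (eventually_of_mem (ball_mem_nhds x hε) fun x' hx' => ?_)
  exact (mollify_jump_eq_add hφ hε (hpos x') hosc (mem_ball'.1 hx')).symm

lemma exists_lipschitzWith_circleMollify [CompactSpace T] (hA : IsAhlforsRegular μ q aA AA)
    (hφ : Continuous φ) (hε : 0 < ε) (hεd : 3 * ε < Metric.diam (univ : Set T))
    (hosc : ∀ x y, dist x y ≤ 3 * ε → ‖φ y - φ x‖ < 1 / 4) :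
    ∃ L, LipschitzWith L (circleMollify μ ε φ) := by
  obtain ⟨K, hK⟩ : ∃ K : ℝ≥0, (K : ℝ≥0∞) =
      ENNReal.ofReal (mollConst q aA AA * (ε ^ (q + 1))⁻¹) * (2 * μ univ) :=
    ⟨_, ENNReal.coe_toNNReal (by finiteness)⟩
  refine exists_lipschitzWith_of_forall_dist_lt (K := K) hε fun x x' hx => ?_
  rw [← edist_le_ofReal (by positivity), ENNReal.ofReal_mul NNReal.zero_le_coe,
    ENNReal.ofReal_coe_nnreal, hK, ← edist_dist]
  refine (edist_circleMollify_le hA hφ hε hεd hosc hx 0).trans ?_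
  gcongr
  calc ∫⁻ y in ball x (3 * ε), ‖jump φ x y - 0‖ₑ ∂μ ≤ ∫⁻ _, 2 ∂μ := by
        refine lintegral_mono' Measure.restrict_le_self fun y => ?_
        rw [sub_zero, Real.enorm_eq_ofReal_abs]
        exact ENNReal.ofReal_le_of_le_toReal (abs_jump_le φ x y)
    _ = 2 * μ univ := lintegral_const 2

lemma degOneLip_circleMollify [CompactSpace T] (hA : IsAhlforsRegular μ q aA AA) {x₀ : T}
    {α₀ : Path x₀ x₀} (hφ : HasDegree x₀ α₀ φ 1) (hε : 0 < ε)
    (hεd : 3 * ε < Metric.diam (univ : Set T))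
    (hosc : ∀ x y, dist x y ≤ 3 * ε → ‖φ y - φ x‖ < 1 / 4) :
    DegOneLip x₀ α₀ (circleMollify μ ε φ) :=
  have hφc := hφ.1
  ⟨exists_lipschitzWith_circleMollify hA hφc hε hεd hosc,
    hφ.add_coe (continuous_mollify_jump hA hφc hε hεd hosc) fun _ => rfl⟩

end CircleMollify

section Competitor

variable {T : Type*} [MetricSpace T] [MeasurableSpace T] [BorelSpace T] [CompactSpace T]
  [Nontrivial T] {μ : Measure T} {q aA AA CP lP : ℝ} {φ : T → UnitAddCircle}

/-- The constant in the bound for the gradient of the mollification of a circle-valued map by the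
measure of the level set. -/
def compConst (q aA AA CP lP : ℝ) : ℝ := mollConst q aA AA * isoConst q aA AA CP lP * 3

lemma compConst_nonneg (ha : 0 < aA) (hA : aA ≤ AA) : 0 ≤ compConst q aA AA CP lP :=
  mul_nonneg (mul_nonneg (mollConst_nonneg ha hA) (isoConst_nonneg ha hA)) (by norm_num)

lemma iInf_lintegral_enorm_jump_sub_le (hA : IsAhlforsRegular μ q aA AA)
    (hP : SupportsPoincare μ CP lP) (hq : 1 ≤ q) (hφ : Continuous φ) {x : T} {r : ℝ} (hr : 0 < r)
    (hrd : max lP 1 * r < Metric.diam (univ : Set T))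
    (hosc : ∀ y, dist x y ≤ max lP 1 * r → ‖φ y - φ x‖ < 1 / 4)
    (hfin : μH[q - 1] (φ ⁻¹' {0}) ≠ ⊤) :
    ⨅ c : ℝ, ∫⁻ y in ball x r, ‖jump φ x y - c‖ₑ ∂μ ≤
      ENNReal.ofReal (isoConst q aA AA CP lP * r) *
        μH[q - 1] (closedBall x (max lP 1 * r) ∩ φ ⁻¹' {0}) := by
  set a := circleRep (-(1 / 2)) (φ x)
  set g : T → ℝ := fun y => a + circleRep (-(1 / 2)) (φ y - φ x)
  have hφx : Continuous fun y => φ y - φ x := hφ.sub continuous_const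
  have hosc' (y : T) (hy : y ∈ closedBall x (max lP 1 * r)) : ‖φ y - φ x‖ < 1 / 2 :=
    (hosc y (mem_closedBall'.1 hy)).trans (by norm_num)
  have hg : ContinuousOn g (closedBall x (max lP 1 * r)) := fun y hy =>
    (continuousAt_const.add ((continuousAt_circleRep_neg_half (hosc' y hy)).comp
      (f := fun y => φ y - φ x) hφx.continuousAt)).continuousWithinAt
  have hzero : g ⁻¹' {0} ⊆ φ ⁻¹' {0} := fun y hy => by
    have : ((a + circleRep (-(1 / 2)) (φ y - φ x) : ℝ) : UnitAddCircle) = (0 : ℝ) := congrArg _ hy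
    rwa [AddCircle.coe_add, coe_circleRep, coe_circleRep, add_sub_cancel] at this
  have hsub := inter_subset_inter_right (closedBall x (max lP 1 * r)) hzero
  calc ⨅ c : ℝ, ∫⁻ y in ball x r, ‖jump φ x y - c‖ₑ ∂μ
      ≤ ⨅ c : ℝ, ∫⁻ y in ball x r, ‖(if 0 < g y then 1 else 0) - c‖ₑ ∂μ := by
        refine le_iInf fun c => iInf_le_of_le (c - (a + 1)) ?_
        refine (setLIntegral_congr_fun measurableSet_ball fun y hy => ?_).le
        have hy' : y ∈ closedBall x (max lP 1 * r) := closedBall_subset_closedBall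
          (le_mul_of_one_le_left hr.le (le_max_right _ _)) (ball_subset_closedBall hy)
        rw [jump_eq_ite (hosc' y hy'), sub_sub_sub_cancel_right]
    _ ≤ ENNReal.ofReal (isoConst q aA AA CP lP * r) *
          μH[q - 1] (closedBall x (max lP 1 * r) ∩ g ⁻¹' {0}) :=
        iInf_lintegral_enorm_sub_le hA hP hq
          (measurable_const.add ((measurable_circleRep _).comp hφx.measurable)) hg hr hrd
          (ne_top_of_le_ne_top hfin (measure_mono (hsub.trans inter_subset_right)))
    _ ≤ _ := by gcongr

lemma pLip_circleMollify_le (hA : IsAhlforsRegular μ q aA AA) (hP : SupportsPoincare μ CP lP)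
    (hq : 1 ≤ q) (hφ : Continuous φ) {ε : ℝ} (hε : 0 < ε)
    (hεd : max lP 1 * (3 * ε) < Metric.diam (univ : Set T))
    (hosc : ∀ x y, dist x y ≤ max lP 1 * (3 * ε) → ‖φ y - φ x‖ < 1 / 4)
    (hfin : μH[q - 1] (φ ⁻¹' {0}) ≠ ⊤) (x : T) :
    pLip (circleMollify μ ε φ) x ≤ ENNReal.ofReal (compConst q aA AA CP lP * (ε ^ q)⁻¹) *
      μH[q - 1] (closedBall x (max lP 1 * (3 * ε)) ∩ φ ⁻¹' {0}) := by
  have : IsFiniteMeasure μ := hP.isFiniteMeasure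
  have hM : 0 ≤ mollConst q aA AA := mollConst_nonneg hA.1 hA.2.1
  have h3 : 3 * ε ≤ max lP 1 * (3 * ε) := le_mul_of_one_le_left (by positivity) (le_max_right _ _)
  have hconst : ENNReal.ofReal (compConst q aA AA CP lP * (ε ^ q)⁻¹) =
      ENNReal.ofReal (mollConst q aA AA * (ε ^ (q + 1))⁻¹) *
        ENNReal.ofReal (isoConst q aA AA CP lP * (3 * ε)) := by
    rw [← ENNReal.ofReal_mul (by positivity), compConst, Real.rpow_add_one hε.ne']
    congr 1
    field_simp
  calc pLip (circleMollify μ ε φ) x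
      ≤ ENNReal.ofReal (mollConst q aA AA * (ε ^ (q + 1))⁻¹) *
          ⨅ c : ℝ, ∫⁻ y in ball x (3 * ε), ‖jump φ x y - c‖ₑ ∂μ := by
        rw [ENNReal.mul_iInf fun h => by simp at h]
        refine le_iInf fun c => pLip_le_of_forall_dist_lt hε fun y hy => ?_
        exact edist_circleMollify_le hA hφ hε (h3.trans_lt hεd)
          (fun x y hxy => hosc x y (hxy.trans h3)) (dist_comm x y ▸ hy) c
    _ ≤ _ := by
        rw [hconst, mul_assoc]
        gcongr
        exact iInf_lintegral_enorm_jump_sub_le hA hP hq hφ (by positivity) hεd (hosc x) hfin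

lemma exists_competitor (hA : IsAhlforsRegular μ q aA AA) (hP : SupportsPoincare μ CP lP)
    (hq : 1 ≤ q) {x₀ : T} {α₀ : Path x₀ x₀} (hφ : HasDegree x₀ α₀ φ 1) :
    ∃ ε₀ > 0, ∀ ε > 0, ε < ε₀ → ∃ ψ, DegOneLip x₀ α₀ ψ ∧ (μH[q - 1] (φ ⁻¹' {0}) ≠ ⊤ → ∀ x,
      pLip ψ x ≤ ENNReal.ofReal (compConst q aA AA CP lP * (ε ^ q)⁻¹) *
        μH[q - 1] (closedBall x (max lP 1 * (3 * ε)) ∩ φ ⁻¹' {0})) := by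
  have : IsFiniteMeasure μ := hP.isFiniteMeasure
  have hφc : Continuous φ := hφ.1
  have hD : 0 < Metric.diam (univ : Set T) := diam_univ_pos
  obtain ⟨δ, hδ, hφδ⟩ := Metric.uniformContinuous_iff.1
    (CompactSpace.uniformContinuous_of_continuous hφc) (1 / 4) (by norm_num)
  refine ⟨min δ (Metric.diam (univ : Set T)) / (3 * max lP 1), by positivity, fun ε hε hε₀ => ?_⟩
  rw [lt_div_iff₀ (by positivity), lt_min_iff] at hε₀
  have h3 : 3 * ε ≤ max lP 1 * (3 * ε) := le_mul_of_one_le_left (by positivity) (le_max_right _ _)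
  have hεd : max lP 1 * (3 * ε) < Metric.diam (univ : Set T) := by linarith [hε₀.2]
  have hosc (x y : T) (hxy : dist x y ≤ max lP 1 * (3 * ε)) : ‖φ y - φ x‖ < 1 / 4 := by
    rw [← dist_eq_norm, dist_comm]
    exact hφδ (by linarith [hε₀.1])
  exact ⟨circleMollify μ ε φ, degOneLip_circleMollify hA hφ hε (h3.trans_lt hεd)
    fun x y hxy => hosc x y (hxy.trans h3), pLip_circleMollify_le hA hP hq hφc hε hεd hosc⟩

lemma exists_degOneLip [PathConnectedSpace T] (hA : IsAhlforsRegular μ q aA AA)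
    (hP : SupportsPoincare μ CP lP) (hq : 1 ≤ q) (Φ : T ≃ₕ UnitAddCircle) {x₀ : T}
    {α₀ : Path x₀ x₀} (hα : IsGenerator x₀ α₀) : ∃ f, DegOneLip x₀ α₀ f := by
  obtain ⟨φ, hφ⟩ := exists_hasDegree_one Φ hα
  obtain ⟨ε₀, hε₀, h⟩ := exists_competitor hA hP hq hφ
  obtain ⟨ψ, hψ, -⟩ := h (ε₀ / 2) (by positivity) (by linarith)
  exact ⟨ψ, hψ⟩

end Competitor

/-! ### Averages over balls -/

lemma rpow_lintegral_le {α : Type*} [MeasurableSpace α] (ν : Measure α) {s s' : ℝ}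
    (hs : s.HolderConjugate s') {f : α → ℝ≥0∞} (hf : Measurable f) :
    (∫⁻ x, f x ∂ν) ^ s ≤ (∫⁻ x, f x ^ s ∂ν) * ν univ ^ (s / s') := by
  have h := ENNReal.lintegral_mul_le_Lp_mul_Lq ν hs hf.aemeasurable
    (aemeasurable_const (b := (1 : ℝ≥0∞)))
  simp only [Pi.mul_apply, mul_one, ENNReal.one_rpow, lintegral_const, one_mul] at h
  refine (ENNReal.rpow_le_rpow h hs.nonneg).trans_eq ?_
  rw [ENNReal.mul_rpow_of_nonneg _ _ hs.nonneg, ← ENNReal.rpow_mul, ← ENNReal.rpow_mul,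
    one_div_mul_cancel hs.ne_zero, ENNReal.rpow_one, one_div_mul_eq_div]

lemma eventually_forall_dist_le_edist_le {X Y : Type*} [PseudoMetricSpace X] [CompactSpace X]
    [PseudoMetricSpace Y] {f : X → Y} (hf : Continuous f) {η : ℝ≥0} (hη : 0 < η) :
    ∀ᶠ R in 𝓝[>] (0 : ℝ), ∀ x y, dist x y ≤ R → edist (f x) (f y) ≤ η := by
  obtain ⟨r, hr, hfr⟩ := Metric.uniformContinuous_iff.1
    (CompactSpace.uniformContinuous_of_continuous hf) η hη
  filter_upwards [Ioo_mem_nhdsGT hr] with R hR x y hxy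
  exact edist_le_coe.2 (NNReal.coe_le_coe.1 (hfr (hxy.trans_lt hR.2)).le)

section BallAverages

variable {T : Type*} [MetricSpace T] [MeasurableSpace T] {μ : Measure T} {R q aA AA : ℝ}

/-- The average of `g` over the closed ball of radius `R` centred at `y`. -/
def ballAvg (μ : Measure T) (R : ℝ) (g : T → ℝ≥0∞) (y : T) : ℝ≥0∞ :=
  (∫⁻ x in closedBall y R, g x ∂μ) / μ (closedBall y R)

variable {g : T → ℝ≥0∞}

lemma IsAhlforsRegular.ballAvg_rpow_le [IsFiniteMeasure μ] (hA : IsAhlforsRegular μ q aA AA)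
    {s s' : ℝ} (hs : s.HolderConjugate s') (hR : 0 < R) (hRd : R < Metric.diam (univ : Set T))
    (hg : Measurable g) (y : T) :
    ballAvg μ R g y ^ s ≤
      (∫⁻ x in closedBall y R, g x ^ s ∂μ) * (ENNReal.ofReal (aA * R ^ q))⁻¹ := by
  have h0 := hA.measure_closedBall_ne_zero y hR hRd
  have hss' : s / s' - s = -1 := by rw [hs.div_conj_eq_sub_one, sub_sub_cancel_left]
  have h := rpow_lintegral_le (μ.restrict (closedBall y R)) hs hg
  rw [Measure.restrict_apply_univ] at h
  calc ballAvg μ R g y ^ s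
      ≤ (∫⁻ x in closedBall y R, g x ^ s ∂μ) * μ (closedBall y R) ^ (s / s') /
          μ (closedBall y R) ^ s := by
        rw [ballAvg, ENNReal.div_rpow_of_nonneg _ _ hs.nonneg]
        gcongr
    _ = (∫⁻ x in closedBall y R, g x ^ s ∂μ) * (μ (closedBall y R))⁻¹ := by
        rw [mul_div_assoc, ← ENNReal.rpow_sub _ _ h0 (measure_ne_top μ _), hss',
          ENNReal.rpow_neg_one]
    _ ≤ _ := by
        gcongr
        exact hA.le_measure_closedBall y hR hRd

variable [OpensMeasurableSpace T]

section Measurability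

variable [SecondCountableTopology T]

lemma measurable_indicator_closedBall (R : ℝ) (hg : Measurable g) :
    Measurable (Function.uncurry fun y x : T => (closedBall y R).indicator g x) := by
  have hs : MeasurableSet {z : T × T | dist z.2 z.1 ≤ R} :=
    (isClosed_le (by fun_prop) continuous_const).measurableSet
  exact (hg.comp measurable_snd).indicator hs

lemma measurable_setLIntegral_closedBall [SFinite μ] (R : ℝ) (hg : Measurable g) :
    Measurable fun y => ∫⁻ x in closedBall y R, g x ∂μ := by
  simp_rw [← lintegral_indicator (measurableSet_closedBall (ε := R))]
  exact (measurable_indicator_closedBall R hg).lintegral_prod_right'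

lemma measurable_ballAvg [SFinite μ] (R : ℝ) (hg : Measurable g) :
    Measurable (ballAvg μ R g) := by
  refine (measurable_setLIntegral_closedBall R hg).div ?_
  simpa only [setLIntegral_one] using
    measurable_setLIntegral_closedBall (μ := μ) R (g := fun _ => 1) measurable_const

lemma lintegral_setLIntegral_closedBall (ν : Measure T) [SFinite μ] [SFinite ν] (R : ℝ)
    (hg : Measurable g) :
    ∫⁻ y, ∫⁻ x in closedBall y R, g x ∂μ ∂ν = ∫⁻ x, g x * ν (closedBall x R) ∂μ := by
  simp_rw [← lintegral_indicator (measurableSet_closedBall (ε := R))]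
  rw [lintegral_lintegral_swap (measurable_indicator_closedBall R hg).aemeasurable]
  refine lintegral_congr fun x => ?_
  rw [← lintegral_indicator_const measurableSet_closedBall]
  refine lintegral_congr fun y => ?_
  simp only [indicator, mem_closedBall, dist_comm]

end Measurability

section Regular

variable [IsFiniteMeasure μ]

lemma IsAhlforsRegular.lintegral_ballAvg_rpow_le [SecondCountableTopology T]
    (hA : IsAhlforsRegular μ q aA AA) {s s' : ℝ} (hs : s.HolderConjugate s') (hR : 0 < R)
    (hRd : 2 * R < Metric.diam (univ : Set T)) (hg : Measurable g) :
    ∫⁻ y, ballAvg μ R g y ^ s ∂μ ≤ ENNReal.ofReal (AA * 2 ^ q / aA) * ∫⁻ x, g x ^ s ∂μ := by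
  have ha : 0 < aA := hA.1
  have hAA : 0 ≤ AA * (2 * R) ^ q := mul_nonneg (ha.le.trans hA.2.1) (by positivity)
  have hconst : AA * (2 * R) ^ q * (aA * R ^ q)⁻¹ = AA * 2 ^ q / aA := by
    rw [Real.mul_rpow (by norm_num) hR.le]
    field_simp
  have hinv : (ENNReal.ofReal (aA * R ^ q))⁻¹ ≠ ⊤ :=
    ENNReal.inv_ne_top.2 (ENNReal.ofReal_pos.2 (by positivity)).ne'
  calc ∫⁻ y, ballAvg μ R g y ^ s ∂μ
      ≤ ∫⁻ y, (∫⁻ x in closedBall y R, g x ^ s ∂μ) * (ENNReal.ofReal (aA * R ^ q))⁻¹ ∂μ :=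
        lintegral_mono fun y => hA.ballAvg_rpow_le hs hR (by linarith) hg y
    _ = (∫⁻ x, g x ^ s * μ (closedBall x R) ∂μ) * (ENNReal.ofReal (aA * R ^ q))⁻¹ := by
        rw [lintegral_mul_const' _ _ hinv, lintegral_setLIntegral_closedBall μ R (hg.pow_const s)]
    _ ≤ (∫⁻ x, g x ^ s * ENNReal.ofReal (AA * (2 * R) ^ q) ∂μ) *
          (ENNReal.ofReal (aA * R ^ q))⁻¹ := by
        gcongr with x
        exact hA.measure_closedBall_le x hR hRd
    _ = _ := by
        rw [lintegral_mul_const _ (hg.pow_const s), mul_assoc,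
          ← ENNReal.ofReal_inv_of_pos (by positivity), ← ENNReal.ofReal_mul hAA, hconst, mul_comm]

lemma IsAhlforsRegular.lintegral_add_ballAvg_rpow_le [SecondCountableTopology T]
    (hA : IsAhlforsRegular μ q aA AA) {s s' : ℝ} (hs : s.HolderConjugate s') (hR : 0 < R)
    (hRd : 2 * R < Metric.diam (univ : Set T)) (hg : Measurable g) (η : ℝ≥0) :
    (∫⁻ y, (g y + η + ballAvg μ R g y) ^ s ∂μ) ^ (1 / s) ≤
      (∫⁻ y, g y ^ s ∂μ) ^ (1 / s) * (1 + ENNReal.ofReal (AA * 2 ^ q / aA) ^ (1 / s)) +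
        η * μ univ ^ (1 / s) := by
  have hs0 := hs.pos
  have h1s : 0 ≤ 1 / s := by positivity
  calc (∫⁻ y, (g y + η + ballAvg μ R g y) ^ s ∂μ) ^ (1 / s)
      ≤ (∫⁻ y, (g y + η) ^ s ∂μ) ^ (1 / s) + (∫⁻ y, ballAvg μ R g y ^ s ∂μ) ^ (1 / s) :=
        ENNReal.lintegral_Lp_add_le (hg.add_const _).aemeasurable
          (measurable_ballAvg R hg).aemeasurable hs.lt.le
    _ ≤ ((∫⁻ y, g y ^ s ∂μ) ^ (1 / s) + (∫⁻ _, (η : ℝ≥0∞) ^ s ∂μ) ^ (1 / s)) +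
        (ENNReal.ofReal (AA * 2 ^ q / aA) * ∫⁻ y, g y ^ s ∂μ) ^ (1 / s) := by
        gcongr
        · exact ENNReal.lintegral_Lp_add_le hg.aemeasurable aemeasurable_const hs.lt.le
        · exact hA.lintegral_ballAvg_rpow_le hs hR hRd hg
    _ = _ := by
        rw [lintegral_const, ENNReal.mul_rpow_of_nonneg _ _ h1s,
          ENNReal.mul_rpow_of_nonneg _ _ h1s, ← ENNReal.rpow_mul, mul_one_div_cancel hs0.ne',
          ENNReal.rpow_one]
        ring

lemma IsAhlforsRegular.ballAvg_enorm_le_add (hA : IsAhlforsRegular μ q aA AA) (hR : 0 < R)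
    (hRd : R < Metric.diam (univ : Set T)) {g h : T → ℝ} (hg : Measurable g) (hh : Measurable h)
    {η : ℝ≥0} (hη : ∀ x y, dist x y ≤ R → edist (h x) (h y) ≤ η) (y : T) :
    ballAvg μ R (fun x => ‖g x‖ₑ) y ≤
      ‖g y‖ₑ + (‖g y - h y‖ₑ + η + ballAvg μ R (fun x => ‖g x - h x‖ₑ) y) := by
  have h0 := hA.measure_closedBall_ne_zero y hR hRd
  have hpt (x : T) (hx : x ∈ closedBall y R) :
      ‖g x‖ₑ ≤ ‖g y‖ₑ + (‖g y - h y‖ₑ + η) + ‖g x - h x‖ₑ := by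
    have key : edist (g x) 0 ≤
        edist (g x) (h x) + edist (h x) (h y) + edist (h y) (g y) + edist (g y) 0 :=
      (edist_triangle _ (g y) _).trans (by gcongr; exact edist_triangle4 _ _ _ _)
    rw [edist_zero_right, edist_zero_right, edist_comm (h y), edist_eq_enorm_sub (g x),
      edist_eq_enorm_sub (g y)] at key
    calc ‖g x‖ₑ ≤ ‖g x - h x‖ₑ + edist (h x) (h y) + ‖g y - h y‖ₑ + ‖g y‖ₑ := key
      _ ≤ ‖g x - h x‖ₑ + η + ‖g y - h y‖ₑ + ‖g y‖ₑ := by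
          gcongr
          exact hη x y hx
      _ = _ := by ring
  have hm : Measurable fun x => ‖g x - h x‖ₑ := (hg.sub hh).enorm
  calc ballAvg μ R (fun x => ‖g x‖ₑ) y
      ≤ (∫⁻ x in closedBall y R, (‖g y‖ₑ + (‖g y - h y‖ₑ + η) + ‖g x - h x‖ₑ) ∂μ) /
          μ (closedBall y R) := by
        unfold ballAvg
        gcongr ?_ / _
        exact setLIntegral_mono' measurableSet_closedBall hpt
    _ = _ := by
        rw [lintegral_add_right _ hm, lintegral_const,
          Measure.restrict_apply_univ, ENNReal.add_div,
          ENNReal.mul_div_cancel_right h0 (measure_ne_top μ _), ballAvg]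
        ring

lemma IsAhlforsRegular.lintegral_mul_measure_closedBall_le [SecondCountableTopology T]
    (hA : IsAhlforsRegular μ q aA AA) (ν : Measure T) [SFinite ν] (hR : 0 < R)
    (hRd : 2 * R < Metric.diam (univ : Set T)) (hg : Measurable g) {G : T → ℝ≥0∞}
    (hG : ∀ y, ballAvg μ R g y ≤ G y) :
    ∫⁻ x, g x * ν (closedBall x R) ∂μ ≤ ENNReal.ofReal (AA * (2 * R) ^ q) * ∫⁻ y, G y ∂ν := by
  rw [← lintegral_setLIntegral_closedBall ν R hg, ← lintegral_const_mul' _ _ ENNReal.ofReal_ne_top]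
  refine lintegral_mono fun y => ?_
  calc ∫⁻ x in closedBall y R, g x ∂μ = μ (closedBall y R) * ballAvg μ R g y :=
        (ENNReal.mul_div_cancel (hA.measure_closedBall_ne_zero y hR (by linarith))
          (measure_ne_top μ _)).symm
    _ ≤ _ := by
        gcongr
        · exact hA.measure_closedBall_le y hR hRd
        · exact hG y

end Regular

end BallAverages

section Majorant

variable {T : Type*} [MetricSpace T] [MeasurableSpace T] [BorelSpace T] [CompactSpace T]
  [Nontrivial T] {μ : Measure T} [IsFiniteMeasure μ] {q aA AA : ℝ}

lemma IsAhlforsRegular.eventually_ballAvg_enorm_le_add (hA : IsAhlforsRegular μ q aA AA)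
    {s s' : ℝ} (hs : s.HolderConjugate s') {g : T → ℝ} (hg : Measurable g)
    (hgs : MemLp g (ENNReal.ofReal s) μ) {δ : ℝ≥0∞} (hδ : δ ≠ 0) :
    ∀ᶠ R in 𝓝[>] (0 : ℝ), ∃ e : T → ℝ≥0∞, Measurable e ∧
      (∀ y, ballAvg μ R (fun x => ‖g x‖ₑ) y ≤ ‖g y‖ₑ + e y) ∧ ∫⁻ y, e y ^ s ∂μ ≤ δ := by
  have : SecondCountableTopology T := UniformSpace.secondCountable_of_separable T
  have hs0 := hs.pos
  have h1s : 0 < 1 / s := by positivity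
  have hδs : δ ^ (1 / s) / 2 ≠ 0 :=
    (ENNReal.half_pos ((ENNReal.rpow_eq_zero_iff_of_pos h1s).not.2 hδ)).ne'
  obtain ⟨ε, hε, hεδ⟩ := ENNReal.exists_nnreal_pos_mul_lt
    (a := 1 + ENNReal.ofReal (AA * 2 ^ q / aA) ^ (1 / s)) (by finiteness) hδs
  obtain ⟨η, hη, hηδ⟩ := ENNReal.exists_nnreal_pos_mul_lt
    (a := μ univ ^ (1 / s)) (by finiteness) hδs
  obtain ⟨h, hgh, -⟩ := hgs.exists_boundedContinuous_eLpNorm_sub_le ENNReal.ofReal_ne_top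
    (ε := ε) (by simpa using hε.ne')
  rw [eLpNorm_eq_lintegral_rpow_enorm_toReal (by simpa using hs0) ENNReal.ofReal_ne_top,
    ENNReal.toReal_ofReal hs0.le] at hgh
  have hm : Measurable fun x => ‖g x - h x‖ₑ := (hg.sub h.continuous.measurable).enorm
  have hD : 0 < Metric.diam (univ : Set T) / 2 := half_pos diam_univ_pos
  filter_upwards [eventually_forall_dist_le_edist_le h.continuous hη, Ioo_mem_nhdsGT hD]
    with R hηR hR
  have hRd : 2 * R < Metric.diam (univ : Set T) := by linarith [hR.2]
  refine ⟨fun y => ‖g y - h y‖ₑ + η + ballAvg μ R (fun x => ‖g x - h x‖ₑ) y,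
    (hm.add_const _).add (measurable_ballAvg R hm),
    hA.ballAvg_enorm_le_add hR.1 (by linarith [hR.1]) hg h.continuous.measurable hηR, ?_⟩
  rw [← ENNReal.rpow_le_rpow_iff h1s]
  refine (hA.lintegral_add_ballAvg_rpow_le hs hR.1 hRd hm η).trans ?_
  rw [← ENNReal.add_halves (δ ^ (1 / s))]
  gcongr
  exact (mul_le_mul_left hgh _).trans hεδ.le

/-- A substitute for the Hardy–Littlewood maximal theorem: only arbitrarily small radii are
needed, so the error terms along a fast sequence of radii are summable, and the constant does not
depend on the exponent. -/
lemma IsAhlforsRegular.exists_frequently_ballAvg_le (hA : IsAhlforsRegular μ q aA AA) {s s' : ℝ}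
    (hs : s.HolderConjugate s') {g : T → ℝ} (hg : Measurable g)
    (hgs : MemLp g (ENNReal.ofReal s) μ) (hg0 : ∫⁻ x, ‖g x‖ₑ ^ s ∂μ ≠ 0) :
    ∃ G : T → ℝ≥0∞, Measurable G ∧
      (∃ᶠ R in 𝓝[>] (0 : ℝ), ∀ y, ballAvg μ R (fun x => ‖g x‖ₑ) y ≤ G y) ∧
      (∫⁻ x, G x ^ s ∂μ) ^ (1 / s) ≤ 2 * (∫⁻ x, ‖g x‖ₑ ^ s ∂μ) ^ (1 / s) := by
  have hs0 := hs.pos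
  obtain ⟨δ, hδ, hδs⟩ := ENNReal.exists_pos_sum_of_countable' hg0 ℕ
  have hsmall (k : ℕ) := ((hA.eventually_ballAvg_enorm_le_add hs hg hgs (hδ k).ne').and
    (Ioo_mem_nhdsGT (Nat.one_div_pos_of_nat (n := k)))).exists
  choose R hR hRk using hsmall
  choose e hem hle hes using hR
  have hE : ∫⁻ y, (⨆ k, e k y) ^ s ∂μ ≤ ∫⁻ x, ‖g x‖ₑ ^ s ∂μ :=
    calc ∫⁻ y, (⨆ k, e k y) ^ s ∂μ ≤ ∫⁻ y, ∑' k, e k y ^ s ∂μ := by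
          refine lintegral_mono fun y => (ENNReal.le_rpow_inv_iff hs0).1 (iSup_le fun k => ?_)
          exact (ENNReal.le_rpow_inv_iff hs0).2 (ENNReal.le_tsum (f := fun k => e k y ^ s) k)
      _ = ∑' k, ∫⁻ y, e k y ^ s ∂μ :=
          lintegral_tsum fun k => ((hem k).pow_const s).aemeasurable
      _ ≤ ∑' k, δ k := ENNReal.tsum_le_tsum hes
      _ ≤ _ := hδs.le
  have hEm : Measurable fun y => ⨆ k, e k y := Measurable.iSup hem
  refine ⟨fun y => ‖g y‖ₑ + ⨆ k, e k y, hg.enorm.add hEm, ?_, ?_⟩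
  · refine (nhdsGT_basis (0 : ℝ)).frequently_iff.2 fun R₀ hR₀ => ?_
    obtain ⟨k, hk⟩ := exists_nat_one_div_lt hR₀
    exact ⟨R k, ⟨(hRk k).1, (hRk k).2.trans hk⟩, fun y => (hle k y).trans
      (add_le_add_right (le_iSup (fun k => e k y) k) _)⟩
  · refine (ENNReal.lintegral_Lp_add_le hg.enorm.aemeasurable hEm.aemeasurable hs.lt.le).trans ?_
    rw [two_mul]
    gcongr

end Majorant

/-! ### Duality -/

lemma le_of_forall_gt_le_mul_rpow_mul_rpow {a b c d : ℝ≥0∞} (ha : a ≠ ⊤) (hb : b ≠ ⊤) (hc : c ≠ ⊤)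
    {r s : ℝ} (hr : 0 ≤ r) (hs : 0 ≤ s)
    (h : ∀ a' > a, ∀ b' > b, d ≤ c * (a' ^ r * b' ^ s)) : d ≤ c * (a ^ r * b ^ s) := by
  have : (𝓝[>] a).NeBot := nhdsGT_neBot_of_exists_gt ⟨⊤, ha.lt_top⟩
  have : (𝓝[>] b).NeBot := nhdsGT_neBot_of_exists_gt ⟨⊤, hb.lt_top⟩
  have hlim {x : ℝ≥0∞} (r : ℝ) : Tendsto (fun y : ℝ≥0∞ => y ^ r) (𝓝[>] x) (𝓝 (x ^ r)) :=
    (ENNReal.continuous_rpow_const.tendsto x).mono_left nhdsWithin_le_nhds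
  have htend : Tendsto (fun z : ℝ≥0∞ × ℝ≥0∞ => c * (z.1 ^ r * z.2 ^ s)) (𝓝[>] a ×ˢ 𝓝[>] b)
      (𝓝 (c * (a ^ r * b ^ s))) :=
    ENNReal.Tendsto.const_mul (ENNReal.Tendsto.mul
      ((hlim r).comp tendsto_fst) (Or.inr (by finiteness))
      ((hlim s).comp tendsto_snd) (Or.inr (by finiteness))) (Or.inr hc)
  refine ge_of_tendsto htend ?_
  filter_upwards [prod_mem_prod self_mem_nhdsWithin self_mem_nhdsWithin] with z hz
  exact h _ hz.1 _ hz.2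

section CapacityModulus

variable {T : Type*} [MetricSpace T] [MeasurableSpace T] {μ : Measure T} {q aA AA CP lP : ℝ}
  {x₀ : T} {α₀ : Path x₀ x₀} {p p' : ℝ}

lemma DegOneLip.lintegral_pLip_rpow_ne_top [IsFiniteMeasure μ] {f : T → UnitAddCircle}
    (hf : DegOneLip x₀ α₀ f) (hp : 0 ≤ p) : ∫⁻ x, pLip f x ^ p ∂μ ≠ ⊤ := by
  obtain ⟨⟨L, hL⟩, -⟩ := hf
  refine ne_top_of_le_ne_top (b := ∫⁻ _, (L : ℝ≥0∞) ^ p ∂μ) ?_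
    (lintegral_mono fun x => ENNReal.rpow_le_rpow (pLip_le_of_lipschitzWith hL x) hp)
  rw [lintegral_const]
  finiteness

variable [BorelSpace T]

lemma surfModH_le_lintegral_rpow (hp' : 0 < p') {c m : ℝ≥0∞} (hm : m ≠ 0) (hm' : m ≠ ⊤)
    {G : T → ℝ≥0∞} (hG : Measurable G)
    (h : ∀ S ∈ SurfacesH (T := T) q x₀ α₀, m ≤ c * ∫⁻ x in S, G x ∂μH[q - 1]) :
    surfModH μ q p' x₀ α₀ ^ (1 / p') ≤ c / m * (∫⁻ x, G x ^ p' ∂μ) ^ (1 / p') := by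
  have h1p : 0 ≤ 1 / p' := by positivity
  have hadm : surfModH μ q p' x₀ α₀ ≤ ∫⁻ x, (c / m * G x) ^ p' ∂μ := by
    refine iInf₂_le (fun x => c / m * G x) ⟨hG.const_mul _, fun S hS => ?_⟩
    rw [lintegral_const_mul _ hG, ← ENNReal.mul_div_right_comm,
      ENNReal.le_div_iff_mul_le (Or.inl hm) (Or.inl hm'), one_mul]
    exact h S hS
  refine (ENNReal.rpow_le_rpow hadm h1p).trans_eq ?_
  simp_rw [ENNReal.mul_rpow_of_nonneg _ _ hp'.le]
  rw [lintegral_const_mul _ (hG.pow_const p'), ENNReal.mul_rpow_of_nonneg _ _ h1p,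
    ← ENNReal.rpow_mul, mul_one_div_cancel hp'.ne', ENNReal.rpow_one]

variable [CompactSpace T]

lemma exists_forall_capLip_le_lintegral_mul_pLip [PathConnectedSpace T] [IsFiniteMeasure μ]
    (Φ : T ≃ₕ UnitAddCircle) (hα : IsGenerator x₀ α₀) (hne : ∃ f, DegOneLip x₀ α₀ f)
    (hp : p.HolderConjugate p') :
    ∃ g : T → ℝ≥0, Measurable g ∧ ∫⁻ x, (g x : ℝ≥0∞) ^ p' ∂μ = capLip μ p x₀ α₀ ∧
      ∀ f, DegOneLip x₀ α₀ f → capLip μ p x₀ α₀ ≤ ∫⁻ x, g x * pLip f x ∂μ := by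
  have hcoe {f : T → UnitAddCircle} (hf : DegOneLip x₀ α₀ f) (x : T) :
      ((pLip f x).toNNReal : ℝ≥0∞) = pLip f x := by
    obtain ⟨⟨L, hL⟩, -⟩ := hf
    exact ENNReal.coe_toNNReal (pLip_ne_top_of_lipschitzWith hL x)
  set F : Set (T → ℝ≥0) := {v | ∃ f, DegOneLip x₀ α₀ f ∧ v = fun x => (pLip f x).toNNReal}
  obtain ⟨u, hum, hu, hmin⟩ := exists_extremal_function (μ := μ) hp (F := F)
    (by obtain ⟨f, hf⟩ := hne; exact ⟨_, f, hf, rfl⟩)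
    (by rintro _ ⟨f, hf, rfl⟩; exact (measurable_pLip hf.2.1).ennreal_toNNReal)
    (by
      rintro _ ⟨f, hf, rfl⟩
      simpa only [hcoe hf] using hf.lintegral_pLip_rpow_ne_top hp.nonneg)
    (by
      rintro _ ⟨f, hf, rfl⟩ _ ⟨g, hg, rfl⟩ a b hab
      obtain ⟨k, hk, hkle⟩ := hf.exists_convexCombination Φ hα hg hab
      refine ⟨_, ⟨k, hk, rfl⟩, fun x => ENNReal.coe_le_coe.1 ?_⟩
      push_cast
      simpa only [hcoe hk, hcoe hf, hcoe hg] using hkle x)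
  have hcap : ∫⁻ x, (u x : ℝ≥0∞) ^ p ∂μ = capLip μ p x₀ α₀ := by
    refine hu.trans (le_antisymm (le_iInf₂ fun f hf => ?_) (le_iInf₂ ?_))
    · exact iInf₂_le_of_le _ ⟨f, hf, rfl⟩ (by simp only [hcoe hf, le_refl])
    · rintro _ ⟨f, hf, rfl⟩
      simp only [hcoe hf]
      exact iInf₂_le f hf
  have hcoe_rpow (x : T) : ((u x ^ (p - 1) : ℝ≥0) : ℝ≥0∞) = (u x : ℝ≥0∞) ^ (p - 1) :=
    (ENNReal.coe_rpow_of_nonneg _ (sub_nonneg.2 hp.lt.le))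
  refine ⟨fun x => u x ^ (p - 1), hum.pow_const _, ?_, fun f hf => ?_⟩
  · simp only [hcoe_rpow, ← ENNReal.rpow_mul, hp.sub_one_mul_conj, hcap]
  · simpa only [hcoe_rpow, hcoe hf, hcap] using hmin _ ⟨f, hf, rfl⟩

/-- The constant in the upper bound for the surface modulus. -/
def dualConst (q aA AA CP lP : ℝ) : ℝ :=
  compConst q aA AA CP lP * AA * (6 * max lP 1) ^ q

lemma compConst_mul_eq_dualConst {ε : ℝ} (hε : 0 < ε) :
    compConst q aA AA CP lP * (ε ^ q)⁻¹ * (AA * (2 * (max lP 1 * (3 * ε))) ^ q) =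
      dualConst q aA AA CP lP := by
  have h6 : 2 * (max lP 1 * (3 * ε)) = 6 * max lP 1 * ε := by ring
  rw [h6, Real.mul_rpow (by positivity) hε.le, dualConst]
  field_simp

variable [Nontrivial T]

lemma le_dualConst_mul_lintegral (hA : IsAhlforsRegular μ q aA AA) (hP : SupportsPoincare μ CP lP)
    (hq : 1 ≤ q) {m : ℝ≥0∞} {g G : T → ℝ≥0∞} (hg : Measurable g)
    (hm : ∀ f, DegOneLip x₀ α₀ f → m ≤ ∫⁻ x, g x * pLip f x ∂μ)
    (hG : ∃ᶠ R in 𝓝[>] (0 : ℝ), ∀ y, ballAvg μ R g y ≤ G y) {S : Set T}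
    (hS : S ∈ SurfacesH (T := T) q x₀ α₀) :
    m ≤ ENNReal.ofReal (dualConst q aA AA CP lP) * ∫⁻ x in S, G x ∂μH[q - 1] := by
  have : IsFiniteMeasure μ := hP.isFiniteMeasure
  have : SecondCountableTopology T := UniformSpace.secondCountable_of_separable T
  obtain ⟨φ, hφ, rfl, hfin⟩ := hS
  set ν := (μH[q - 1] : Measure T).restrict (φ ⁻¹' {0})
  have : IsFiniteMeasure ν := isFiniteMeasure_restrict.2 hfin.ne
  have hD : 0 < Metric.diam (univ : Set T) := diam_univ_pos
  obtain ⟨ε₀, hε₀, hψ⟩ := exists_competitor hA hP hq hφ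
  obtain ⟨R, hRG, hR, hRlt⟩ := (hG.and_eventually (Ioo_mem_nhdsGT (show 0 < min
    (3 * max lP 1 * ε₀) (Metric.diam (univ : Set T) / 2) by positivity))).exists
  obtain ⟨ε, hε, rfl⟩ : ∃ ε > 0, R = max lP 1 * (3 * ε) :=
    ⟨R / (3 * max lP 1), by positivity, by field_simp⟩
  obtain ⟨hRε, hRd⟩ := lt_min_iff.1 hRlt
  obtain ⟨ψ, hψd, hψle⟩ := hψ ε hε (by nlinarith [le_max_right lP 1])
  have hc : 0 ≤ compConst q aA AA CP lP := compConst_nonneg hA.1 hA.2.1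
  calc m ≤ ∫⁻ x, g x * pLip ψ x ∂μ := hm ψ hψd
    _ ≤ ∫⁻ x, ENNReal.ofReal (compConst q aA AA CP lP * (ε ^ q)⁻¹) *
          (g x * ν (closedBall x (max lP 1 * (3 * ε)))) ∂μ := by
        refine lintegral_mono fun x => ?_
        rw [mul_left_comm, Measure.restrict_apply measurableSet_closedBall]
        gcongr
        exact hψle hfin.ne x
    _ ≤ ENNReal.ofReal (compConst q aA AA CP lP * (ε ^ q)⁻¹) *
          (ENNReal.ofReal (AA * (2 * (max lP 1 * (3 * ε))) ^ q) * ∫⁻ y, G y ∂ν) := by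
        rw [lintegral_const_mul' _ _ ENNReal.ofReal_ne_top]
        gcongr
        exact hA.lintegral_mul_measure_closedBall_le ν hR (by linarith) hg hRG
    _ = _ := by
        rw [← mul_assoc, ← ENNReal.ofReal_mul (by positivity), compConst_mul_eq_dualConst hε]

variable [PathConnectedSpace T]

lemma capLip_ne_top (hA : IsAhlforsRegular μ q aA AA) (hP : SupportsPoincare μ CP lP) (hq : 1 ≤ q)
    (Φ : T ≃ₕ UnitAddCircle) (hα : IsGenerator x₀ α₀) (hp : 0 ≤ p) : capLip μ p x₀ α₀ ≠ ⊤ := by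
  have : IsFiniteMeasure μ := hP.isFiniteMeasure
  obtain ⟨f, hf⟩ := exists_degOneLip hA hP hq Φ hα
  exact ne_top_of_le_ne_top (hf.lintegral_pLip_rpow_ne_top hp) (iInf₂_le f hf)

theorem capLip_mul_surfModH_le (hA : IsAhlforsRegular μ q aA AA) (hP : SupportsPoincare μ CP lP)
    (hq : 1 ≤ q) (Φ : T ≃ₕ UnitAddCircle) (hα : IsGenerator x₀ α₀) (hp : p.HolderConjugate p')
    (h0 : capLip μ p x₀ α₀ ≠ 0) :
    capLip μ p x₀ α₀ ^ (1 / p) * surfModH μ q p' x₀ α₀ ^ (1 / p') ≤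
      2 * ENNReal.ofReal (dualConst q aA AA CP lP) := by
  have : IsFiniteMeasure μ := hP.isFiniteMeasure
  have htop : capLip μ p x₀ α₀ ≠ ⊤ := capLip_ne_top hA hP hq Φ hα hp.nonneg
  obtain ⟨g, hgm, hgi, hgf⟩ := exists_forall_capLip_le_lintegral_mul_pLip (μ := μ) Φ hα
    (exists_degOneLip hA hP hq Φ hα) hp
  have henorm (x : T) : ‖(g x : ℝ)‖ₑ = g x :=
    (Real.enorm_of_nonneg (g x).coe_nonneg).trans ENNReal.ofReal_coe_nnreal
  obtain ⟨G, hGm, hG, hGi⟩ := hA.exists_frequently_ballAvg_le hp.symm hgm.coe_nnreal_real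
    (memLp_coe_of_lintegral_rpow_ne_top hp.symm.pos hgm (by rwa [hgi]))
    (by simpa only [henorm, hgi] using h0)
  simp only [henorm, hgi] at hG hGi
  set m := capLip μ p x₀ α₀
  set D := ENNReal.ofReal (dualConst q aA AA CP lP)
  have hsum : 1 / p + 1 / p' = 1 := by simpa only [one_div] using hp.inv_add_inv_eq_one
  calc m ^ (1 / p) * surfModH μ q p' x₀ α₀ ^ (1 / p')
      ≤ m ^ (1 / p) * (D / m * (2 * m ^ (1 / p'))) := by
        gcongr
        refine (surfModH_le_lintegral_rpow hp.symm.pos h0 htop hGm fun S hS =>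
          le_dualConst_mul_lintegral hA hP hq hgm.coe_nnreal_ennreal hgf hG hS).trans ?_
        gcongr
    _ = 2 * (D / m * m ^ (1 / p + 1 / p')) := by rw [ENNReal.rpow_add _ _ h0 htop]; ring
    _ = 2 * D := by rw [hsum, ENNReal.rpow_one, ENNReal.div_mul_cancel h0 htop]

theorem one_le_mul_capLip_mul_surfModH (hA : IsAhlforsRegular μ q aA AA)
    (hP : SupportsPoincare μ CP lP) (hq : 1 ≤ q) (Φ : T ≃ₕ UnitAddCircle) (hα : IsGenerator x₀ α₀)
    (hp : p.HolderConjugate p') (hmod : surfModH μ q p' x₀ α₀ ≠ ⊤) :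
    1 ≤ ENNReal.ofReal (10 ^ q / aA) *
      (capLip μ p x₀ α₀ ^ (1 / p) * surfModH μ q p' x₀ α₀ ^ (1 / p')) := by
  have : IsFiniteMeasure μ := hP.isFiniteMeasure
  have hp0 := hp.pos
  have hp'0 := hp.symm.pos
  have hcap : capLip μ p x₀ α₀ ≠ ⊤ := capLip_ne_top hA hP hq Φ hα hp.nonneg
  refine le_of_forall_gt_le_mul_rpow_mul_rpow hcap hmod ENNReal.ofReal_ne_top (by positivity)
    (by positivity) fun a ha b hb => ?_
  simp only [gt_iff_lt, capLip, surfModH, iInf_lt_iff] at ha hb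
  obtain ⟨⟨f, hf, hfa⟩, ρ, ⟨hρ, hadm⟩, hρb⟩ := And.intro ha hb
  refine (hf.one_le_mul_Lp_mul_Lq hA hq hp hρ hadm).trans ?_
  gcongr

end CapacityModulus

lemma nonempty_homotopyEquiv_of_homeomorph_prod {X Y Z : Type*} [TopologicalSpace X]
    [TopologicalSpace Y] [TopologicalSpace Z] [ContractibleSpace Z] (e : X ≃ₜ Y × Z) :
    Nonempty (X ≃ₕ Y) := by
  obtain ⟨h⟩ := ContractibleSpace.hequiv_unit Z
  exact ⟨(e.toHomotopyEquiv.trans ((ContinuousMap.HomotopyEquiv.refl Y).prodCongr h)).trans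
    (Homeomorph.prodPUnit Y).toHomotopyEquiv⟩

lemma contractibleSpace_closedBall {E : Type*} [NormedAddCommGroup E] [NormedSpace ℝ E] (x : E)
    {r : ℝ} (hr : 0 ≤ r) : ContractibleSpace (closedBall x r) :=
  (convex_closedBall x r).contractibleSpace (nonempty_closedBall.2 hr)

lemma rpow_mul_rpow_bounds {x y C : ℝ≥0∞} {a b : ℝ} (ha : 0 < a) (hb : 0 < b) (hC : C ≠ ⊤)
    (hle : x ≠ 0 → x ^ a * y ^ b ≤ C) (hge : y ≠ ⊤ → 1 ≤ C * (x ^ a * y ^ b)) :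
    (x ≠ 0 → C⁻¹ ≤ x ^ a * y ^ b ∧ x ^ a * y ^ b ≤ C) ∧ (x = 0 ↔ y = ⊤) := by
  have hy (hx : x ≠ 0) : y ≠ ⊤ := by
    rintro rfl
    have hxa : x ^ a ≠ 0 := (ENNReal.rpow_eq_zero_iff_of_pos ha).not.2 hx
    have h := hle hx
    rw [ENNReal.top_rpow_of_pos hb, ENNReal.mul_top hxa, top_le_iff] at h
    exact hC h
  refine ⟨fun hx => ⟨?_, hle hx⟩, fun hx => ?_, not_imp_not.1 hy⟩
  · have hC0 : C ≠ 0 := by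
      rintro rfl
      exact not_le_of_gt zero_lt_one ((hge (hy hx)).trans_eq (zero_mul _))
    simpa only [mul_one] using (ENNReal.inv_mul_le_iff hC0 hC).2 (hge (hy hx))
  · by_contra htop
    have h := hge htop
    rw [hx, ENNReal.zero_rpow_of_pos ha, zero_mul, mul_zero] at h
    exact not_le_of_gt zero_lt_one h

end Duality

open Duality in
theorem statement0_general.{u} (q aA AA CP lP : ℝ) :
    ∃ C : ℝ≥0∞, 0 < C ∧ C < ⊤ ∧
      ∀ (T : Type u) [MetricSpace T] [MeasurableSpace T] [BorelSpace T] [CompactSpace T]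
        (μ : Measure T),
        IsAhlforsRegular μ q aA AA →
        SupportsPoincare μ CP lP →
        Nonempty (T ≃ₕ UnitAddCircle) →
        ∀ (x₀ : T) (α₀ : Path x₀ x₀), IsGenerator x₀ α₀ →
          ∀ p : ℝ, 1 < p →
            (capLip μ p x₀ α₀ ≠ 0 →
              C⁻¹ ≤ capLip μ p x₀ α₀ ^ (1 / p) *
                  surfModH μ q (p / (p - 1)) x₀ α₀ ^ (1 / (p / (p - 1))) ∧
                capLip μ p x₀ α₀ ^ (1 / p) *
                  surfModH μ q (p / (p - 1)) x₀ α₀ ^ (1 / (p / (p - 1))) ≤ C) ∧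
            (capLip μ p x₀ α₀ = 0 ↔ surfModH μ q (p / (p - 1)) x₀ α₀ = ⊤) := by
  refine ⟨2 * ENNReal.ofReal (dualConst q aA AA CP lP) + ENNReal.ofReal (10 ^ q / aA) + 1,
    by positivity, by finiteness, ?_⟩
  intro T _ _ _ _ μ hA hP ⟨Φ⟩ x₀ α₀ hα p hp
  have : PathConnectedSpace T := pathConnectedSpace_of_homotopyEquiv Φ
  obtain ⟨f, hf⟩ := exists_hasDegree_one Φ hα
  have : Nontrivial T := nontrivial_of_hasDegree_one hf
  have : IsFiniteMeasure μ := hP.isFiniteMeasure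
  have hq : 1 ≤ q := hA.one_le
  have hpp : p.HolderConjugate (p / (p - 1)) := .conjExponent hp
  refine rpow_mul_rpow_bounds hpp.one_div_pos hpp.symm.one_div_pos (by finiteness) (fun h => ?_)
    fun h => ?_
  · exact (capLip_mul_surfModH_le hA hP hq Φ hα hpp h).trans (le_add_right le_self_add)
  · refine (one_le_mul_capLip_mul_surfModH hA hP hq Φ hα hpp h).trans ?_
    gcongr
    exact le_add_right le_add_self

open Duality in
/-- **Theorem 1.1.** Duality of the degree 1 capacity and the surface modulus in compact
Ahlfors `q`-regular spaces supporting a weak `1`-Poincaré inequality which are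
homeomorphic to the solid torus `S¹ × 𝔻`. -/
theorem statement0 (q aA AA CP lP : ℝ) :
    ∃ C : ℝ≥0∞, 0 < C ∧ C < ⊤ ∧
      ∀ (T : Type) [MetricSpace T] [MeasurableSpace T] [BorelSpace T] [CompactSpace T]
        (μ : Measure T),
        IsAhlforsRegular μ q aA AA →
        SupportsPoincare μ CP lP →
        Nonempty (T ≃ₜ UnitAddCircle × (Metric.closedBall (0 : ℂ) 1 : Set ℂ)) →
        ∀ (x₀ : T) (α₀ : Path x₀ x₀), IsGenerator x₀ α₀ →
          ∀ p : ℝ, 1 < p →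
            (capLip μ p x₀ α₀ ≠ 0 →
              C⁻¹ ≤ capLip μ p x₀ α₀ ^ (1 / p) *
                  surfModH μ q (p / (p - 1)) x₀ α₀ ^ (1 / (p / (p - 1))) ∧
                capLip μ p x₀ α₀ ^ (1 / p) *
                  surfModH μ q (p / (p - 1)) x₀ α₀ ^ (1 / (p / (p - 1))) ≤ C) ∧
            (capLip μ p x₀ α₀ = 0 ↔ surfModH μ q (p / (p - 1)) x₀ α₀ = ⊤) := by
  have : ContractibleSpace (closedBall (0 : ℂ) 1) := contractibleSpace_closedBall 0 zero_le_one
  obtain ⟨C, hC0, hC, h⟩ := statement0_general q aA AA CP lP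
  exact ⟨C, hC0, hC, fun T _ _ _ _ μ hA hP ⟨e⟩ =>
    h T μ hA hP (nonempty_homotopyEquiv_of_homeomorph_prod e)⟩
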